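/- If f is essentially bounded on [−π,π]², then the limiting spectral distribution μ_f is compactly supported, and for every m ≥ 1 its even moments are given by ∫_ℝ x^{2m} μ_f(dx) = (2π)^{m−1} ∑_{σ ∈ NC₂(2m)} ∫_{[−π,π]^{m+1}} L_{σ,f}(x) dx. -/

import Mathlib

open MeasureTheory ProbabilityTheory Filter Real

noncomputable section

/-- The square `(-π, π]²` on which the spectral measure lives. -/
def specBox : Set (ℝ × ℝ) := Set.Ioc (-π) π ×ˢ Set.Ioc (-π) π

/-- `(1/N) ∑_j g(λ_j(A))`, the integral of `g` against the empirical spectral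
distribution of a symmetric `N × N` real matrix `A` (junk value `0` if `A` is
not symmetric). -/
def esdEval {N : ℕ} (A : Matrix (Fin N) (Fin N) ℝ) (g : ℝ → ℝ) : ℝ :=
  if hA : A.IsHermitian then (N : ℝ)⁻¹ * ∑ j, g (hA.eigenvalues j) else 0

/-- The (random) empirical spectral distributions of `A N` converge weakly in
probability to the probability measure `μ`: for every bounded continuous `g`,
`∫ g d(ESD(A N)) → ∫ g dμ` in probability. -/
def ESDTendstoInProb {Ω : Type*} [MeasurableSpace Ω] (P : Measure Ω)
    (A : (N : ℕ) → Ω → Matrix (Fin N) (Fin N) ℝ) (μ : Measure ℝ) : Prop :=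
  ∀ g : ℝ → ℝ, Continuous g → (∃ C, ∀ x, |g x| ≤ C) →
    ∀ ε > 0, Tendsto (fun N => P {ω | ε ≤ |esdEval (A N ω) g - ∫ x, g x ∂μ|})
      atTop (nhds 0)

/-- The symmetric matrix `W_N/√N`, where `W_N(i,j) = X_{i,j} + X_{j,i}`,
`1 ≤ i,j ≤ N`. -/
def scaledW {Ω : Type*} (X : ℤ → ℤ → Ω → ℝ) (N : ℕ) (ω : Ω) :
    Matrix (Fin N) (Fin N) ℝ :=
  fun i j => (Real.sqrt N)⁻¹ *
    (X ((i : ℕ) + 1) ((j : ℕ) + 1) ω + X ((j : ℕ) + 1) ((i : ℕ) + 1) ω)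

/-- A centered stationary Gaussian process indexed by `ℤ²` with positive
variance: every finite real linear combination is a centered Gaussian random
variable, and second moments are shift invariant. -/
structure StatGauss {Ω : Type*} [MeasurableSpace Ω] (P : Measure Ω)
    (X : ℤ → ℤ → Ω → ℝ) : Prop where
  meas : ∀ j k, Measurable (X j k)
  gauss : ∀ c : (ℤ × ℤ) →₀ ℝ, ∃ v : NNReal,
    P.map (fun ω => ∑ p ∈ c.support, c p * X p.1 p.2 ω) = gaussianReal 0 v
  var_pos : 0 < ∫ ω, (X 0 0 ω) ^ 2 ∂P
  stat : ∀ j k u v : ℤ,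
    ∫ ω, X j k ω * X (j + u) (k + v) ω ∂P = ∫ ω, X 0 0 ω * X u v ω ∂P

/-- The spectral measure `ν` of the process `X` (from the Herglotz
representation), together with the standing assumption of the paper:
`ν = ν_ac + ν_d`, where `ν_ac` is absolutely continuous with respect to
Lebesgue measure with density `f ≥ 0` and `ν_d = νd` is discrete (supported on
a countable set). -/
structure SpectralDecomp {Ω : Type*} [MeasurableSpace Ω] (P : Measure Ω)
    (X : ℤ → ℤ → Ω → ℝ) (ν νd : Measure (ℝ × ℝ)) (f : ℝ × ℝ → ℝ) : Prop where
  finite : IsFiniteMeasure ν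
  support : ν specBoxᶜ = 0
  herglotz : ∀ u v : ℤ,
    (∫ q, Complex.exp (Complex.I * ((u * q.1 + v * q.2 : ℝ) : ℂ)) ∂ν)
      = ((∫ ω, X 0 0 ω * X u v ω ∂P : ℝ) : ℂ)
  f_nonneg : ∀ q, 0 ≤ f q
  f_meas : Measurable f
  discrete : ∃ s : Set (ℝ × ℝ), s.Countable ∧ νd sᶜ = 0
  decomp : ν = (volume.restrict specBox).withDensity
      (fun q => ENNReal.ofReal (f q)) + νd

/-- Non-crossing pair partitions of `{1, …, 2m}`, encoded as fixed-point free
involutions of `Fin (2m)` with no crossing `a < b < p a < p b`. -/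
def NCPairings (m : ℕ) : Finset (Equiv.Perm (Fin (2 * m))) :=
  Finset.univ.filter fun p =>
    (∀ i, p (p i) = i) ∧ (∀ i, p i ≠ i) ∧
      ∀ a b : Fin (2 * m), ¬(a < b ∧ b < p a ∧ p a < p b)

/-- The permutation `i ↦ p (i + 1)` whose cycles are exactly the blocks of the
Kreweras complement of the pair partition `p`. -/
def krewPerm (m : ℕ) (p : Equiv.Perm (Fin (2 * m))) : Equiv.Perm (Fin (2 * m)) :=
  (finRotate (2 * m)).trans p

/-- `T : {1,…,2m} → {1,…,m+1}` indexes the blocks `V_1, …, V_{m+1}` of the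
Kreweras complement of `p` (`T i` is the index of the block containing `i`),
with the blocks ordered so that their maximal elements increase. -/
def IsKrewerasIndex (m : ℕ) (p : Equiv.Perm (Fin (2 * m)))
    (T : Fin (2 * m) → Fin (m + 1)) : Prop :=
  Function.Surjective T ∧
  (∀ i j, T i = T j ↔ (krewPerm m p).SameCycle i j) ∧
  ∀ a b : Fin (m + 1), a < b →
    (Finset.univ.filter fun i => T i = a).max <
      (Finset.univ.filter fun i => T i = b).max

open Classical in
/-- `k ∈ S(σ)`: the sum of the `k_j` over every block of the Kreweras
complement of `p` vanishes. -/
def memS (m : ℕ) (p : Equiv.Perm (Fin (2 * m))) (k : Fin (2 * m) → ℤ) : Prop :=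
  ∀ i, ∑ j ∈ Finset.univ.filter (fun j => (krewPerm m p).SameCycle i j), k j = 0

/-- The function `L_{σ,f}` on `[-π,π]^{m+1}`: the product over the pairs
`(u, v)` of `σ` (with `u < v = p u`) of
`f(x_{T u}, -x_{T v}) + f(-x_{T v}, x_{T u})`. -/
def Lsig (m : ℕ) (p : Equiv.Perm (Fin (2 * m))) (T : Fin (2 * m) → Fin (m + 1))
    (f : ℝ → ℝ → ℝ) (x : Fin (m + 1) → ℝ) : ℝ :=
  ∏ i ∈ Finset.univ.filter (fun i => i < p i),
    (f (x (T i)) (-x (T (p i))) + f (-x (T (p i))) (x (T i)))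

/-!
The proof compares the normalized trace of the resolvent `s (s + A²)⁻¹`, `A = W_N/√N`, with that of
a model whose moments are computable. This trace is bracketed by the partial sums of its expansion
in the even moments of the model, and a perturbation of `A` by a matrix of small normalized
Hilbert–Schmidt norm plus a matrix of bounded rank hardly moves it.

Write `f = g²` with `g` bounded, and approximate `g` boundedly and almost everywhere by
trigonometric polynomials `p`. The law of `X` is that of a field of linear functionals of a standard
Gaussian vector in `L²(specBox) ⊕ L²(ν_d)`, obtained by modulating `(g, 1)`; replacing `g` by `p`
costs `‖g - p‖²`, while all but finitely many atoms of `ν_d` have small mass and the others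
contribute bounded rank. The model with density `|p|²` has a finitely supported covariance, so
Wick's formula writes its moments as sums over pairings of counts of closed walks with prescribed
lags. Only the noncrossing pairings survive as `N → ∞`, each giving the integral of `L_{σ,|p|²}`.

Hence `∫ s / (s + x²) dμ_f` differs from `∑_{j<k} (-s⁻¹)^j M_j` by at most `s⁻ᵏ M_k`, where `M_j` is
the claimed moment of order `2j`. Letting `s → ∞` identifies the moments of `μ_f` successively, and
their geometric growth forces the support to be compact.
-/

/-! ### The Wick formula -/

lemma integral_pow_add_two_gaussianReal (n : ℕ) :
    ∫ x, x ^ (n + 2) ∂(gaussianReal 0 1) = (n + 1) * ∫ x, x ^ n ∂(gaussianReal 0 1) := by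
  have moment_eq (k : ℕ) : ∫ x, x ^ k ∂(gaussianReal 0 1) =
      iteratedDeriv k (fun t : ℝ => rexp (t ^ 2 / 2)) 0 := by
    have h := iteratedDeriv_mgf_zero (X := id) (μ := gaussianReal 0 1)
      (by rw [integrableExpSet_id_gaussianReal]; simp) k
    rw [mgf_id_gaussianReal] at h
    simpa using h.symm
  have deriv_exp : deriv (fun t : ℝ => rexp (t ^ 2 / 2)) =
      (fun t : ℝ => t) * (fun t : ℝ => rexp (t ^ 2 / 2)) := by
    ext t
    rw [((hasDerivAt_pow 2 t).div_const 2).exp.deriv, Pi.mul_apply]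
    ring
  rw [moment_eq, moment_eq, iteratedDeriv_succ', deriv_exp,
    iteratedDeriv_mul (by fun_prop) (by fun_prop), Finset.sum_eq_single 1]
  · simp [iteratedDeriv_one]
  · rintro (_ | _ | b) - hb
    · simp
    · exact absurd rfl hb
    · simp [iteratedDeriv_succ', iteratedDeriv_const]
  · simp

lemma two_pow_mul_factorial_mul_integral_pow_gaussianReal_one (m : ℕ) :
    (2 ^ m * m.factorial : ℝ) * ∫ x, x ^ (2 * m) ∂(gaussianReal 0 1) = (2 * m).factorial := by
  induction m with
  | zero => simp
  | succ m ih =>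
    rw [show 2 * (m + 1) = 2 * m + 2 by ring, integral_pow_add_two_gaussianReal,
      Nat.factorial_succ, Nat.factorial_succ, Nat.factorial_succ]
    push_cast at ih ⊢
    rw [← ih]
    ring

lemma two_pow_mul_factorial_mul_integral_pow_gaussianReal (m : ℕ) (v : NNReal) :
    (2 ^ m * m.factorial : ℝ) * ∫ x, x ^ (2 * m) ∂(gaussianReal 0 v) =
      (2 * m).factorial * (v : ℝ) ^ m := by
  have scaled : gaussianReal 0 v = (gaussianReal 0 1).map (fun x => √v * x) := by
    rw [gaussianReal_map_const_mul]
    congr 1 <;> simp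
  rw [scaled, integral_map (by fun_prop) (by fun_prop)]
  simp_rw [mul_pow]
  rw [integral_const_mul, pow_mul, sq_sqrt v.coe_nonneg,
    ← two_pow_mul_factorial_mul_integral_pow_gaussianReal_one]
  ring

section Polarization

variable {α β : Type*} [Fintype α] [Fintype β] [DecidableEq β]

lemma sum_neg_one_pow_card_compl_of_image_subset (q : α → β) :
    ∑ S : Finset β with ∀ a, q a ∈ S, (-1 : ℝ) ^ Sᶜ.card =
      if Function.Surjective q then 1 else 0 := by
  have subset_iff (S : Finset β) :
      (∀ a, q a ∈ S) ↔ Sᶜ ∈ ((Finset.univ.image q)ᶜ).powerset := by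
    rw [Finset.mem_powerset, Finset.compl_subset_compl, Finset.image_subset_iff]
    simp
  have surjective_iff : (Finset.univ.image q)ᶜ = ∅ ↔ Function.Surjective q := by
    rw [Finset.compl_eq_empty_iff, Finset.eq_univ_iff_forall]
    simp [Function.Surjective]
  calc ∑ S : Finset β with ∀ a, q a ∈ S, (-1 : ℝ) ^ Sᶜ.card
      = ∑ S ∈ ((Finset.univ.image q)ᶜ).powerset, (-1 : ℝ) ^ S.card :=
        Finset.sum_bij' (fun S _ => Sᶜ) (fun S _ => Sᶜ)
          (fun S hS => (subset_iff S).1 (Finset.mem_filter.1 hS).2)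
          (fun S hS => by simpa only [Finset.mem_filter_univ, subset_iff, compl_compl] using hS)
          (by simp) (by simp) (by simp)
    _ = if Function.Surjective q then 1 else 0 := by
        simp_rw [← surjective_iff]
        exact_mod_cast Finset.sum_powerset_neg_one_pow_card (x := (Finset.univ.image q)ᶜ)

variable [DecidableEq α]

lemma sum_surjective_eq_sum_perm (e : α ≃ β) (w : (α → β) → ℝ) :
    ∑ q : α → β with Function.Surjective q, w q = ∑ g : Equiv.Perm β, w (fun a => g (e a)) := by
  refine (Finset.sum_bij (fun (g : Equiv.Perm β) _ a => g (e a)) (fun g _ => ?_)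
    (fun g _ g' _ h => ?_) (fun q hq => ?_) fun _ _ => rfl).symm
  · exact Finset.mem_filter_univ _ |>.2 (g.surjective.comp e.surjective)
  · exact DFunLike.coe_injective (e.surjective.injective_comp_right h)
  · have bij : Function.Bijective q := (Fintype.bijective_iff_surjective_and_card q).2
      ⟨(Finset.mem_filter.1 hq).2, Fintype.card_congr e⟩
    exact ⟨e.symm.trans (Equiv.ofBijective q bij), Finset.mem_univ _, by ext; simp⟩

lemma sum_neg_one_pow_mul_sum_eq_sum_perm (e : α ≃ β) (w : (α → β) → ℝ) :
    ∑ S : Finset β, (-1 : ℝ) ^ Sᶜ.card * ∑ q : α → β with ∀ a, q a ∈ S, w q =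
      ∑ g : Equiv.Perm β, w (fun a => g (e a)) := by
  rw [← sum_surjective_eq_sum_perm]
  simp_rw [Finset.mul_sum, Finset.sum_filter]
  rw [Finset.sum_comm]
  refine Finset.sum_congr rfl fun q _ => ?_
  rw [← one_mul (w q), ← ite_zero_mul, ← sum_neg_one_pow_card_compl_of_image_subset,
    Finset.sum_filter, Finset.sum_mul]
  simp only [one_mul, ite_mul, zero_mul]

lemma sum_pow_card_eq_sum_maps (S : Finset β) (a : β → ℝ) :
    (∑ j ∈ S, a j) ^ Fintype.card α = ∑ q : α → β with ∀ l, q l ∈ S, ∏ l, a (q l) := by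
  rw [← Finset.card_univ, ← Finset.prod_const, Finset.prod_univ_sum]
  refine Finset.sum_congr ?_ fun _ _ => rfl
  ext q
  simp [Fintype.mem_piFinset]

lemma sum_sum_pow_card_eq_sum_maps (S : Finset β) (C : β → β → ℝ) :
    (∑ j ∈ S, ∑ k ∈ S, C j k) ^ Fintype.card α =
      ∑ q : α × Bool → β with ∀ l, q l ∈ S, ∏ l, C (q (l, false)) (q (l, true)) := by
  rw [← Finset.sum_product', ← Finset.card_univ, ← Finset.prod_const, Finset.prod_univ_sum]
  refine Finset.sum_bij' (fun r _ x => if x.2 then (r x.1).2 else (r x.1).1)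
    (fun q _ l => (q (l, false), q (l, true))) ?_ ?_ ?_ ?_ ?_
  · intro r hr
    simp only [Fintype.mem_piFinset, Finset.mem_product] at hr
    simp only [Finset.mem_filter, Finset.mem_univ, true_and]
    rintro ⟨l, b⟩
    cases b <;> simp [hr l]
  · intro q hq
    simp only [Finset.mem_filter, Finset.mem_univ, true_and] at hq
    simp [Fintype.mem_piFinset, hq]
  · intro r _
    ext l <;> simp
  · intro q _
    ext ⟨l, b⟩
    cases b <;> simp
  · intro r _
    simp

end Polarization

/-- The pair partitions of `ι`, encoded as fixed-point free involutions. -/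
def pairings (ι : Type*) [Fintype ι] [DecidableEq ι] : Finset (Equiv.Perm ι) :=
  Finset.univ.filter fun p => (∀ i, p (p i) = i) ∧ ∀ i, p i ≠ i

/-- The pair partition `{e (l, false), e (l, true)}` of `ι` given by a labelling `e` of its
elements. -/
def pairingOfEquiv {κ ι : Type*} (e : κ × Bool ≃ ι) : Equiv.Perm ι :=
  e.permCongr (Equiv.prodCongr (Equiv.refl κ) Equiv.boolNot)

section Pairings

variable {κ ι : Type*} [Fintype ι]

lemma mem_pairings [DecidableEq ι] {p : Equiv.Perm ι} :
    p ∈ pairings ι ↔ (∀ i, p (p i) = i) ∧ ∀ i, p i ≠ i := by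
  simp [pairings]

omit [Fintype ι] in
lemma pairingOfEquiv_apply (e : κ × Bool ≃ ι) (l : κ) (b : Bool) :
    pairingOfEquiv e (e (l, b)) = e (l, !b) := by
  simp [pairingOfEquiv, Equiv.permCongr_apply]

lemma pairingOfEquiv_mem_pairings [DecidableEq ι] (e : κ × Bool ≃ ι) :
    pairingOfEquiv e ∈ pairings ι := by
  refine mem_pairings.2 ⟨e.surjective.forall.2 ?_, e.surjective.forall.2 ?_⟩
  all_goals
    rintro ⟨l, b⟩
    simp [pairingOfEquiv_apply]

omit [Fintype ι] in
lemma pairingOfEquiv_trans_perm (e : κ × Bool ≃ ι) (g : Equiv.Perm ι) :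
    pairingOfEquiv (e.trans g) = g * pairingOfEquiv e * g⁻¹ := by
  ext i
  simp [pairingOfEquiv, Equiv.permCongr_apply]

lemma cycleType_of_mem_pairings [DecidableEq ι] {p : Equiv.Perm ι} (hp : p ∈ pairings ι) :
    p.cycleType = Multiset.replicate (Fintype.card ι / 2) 2 := by
  obtain ⟨involutive, fixed_point_free⟩ := mem_pairings.1 hp
  have : Fact (Nat.Prime 2) := ⟨Nat.prime_two⟩
  have cycleType_eq := Equiv.Perm.cycleType_of_pow_prime_eq_one (p := 2) (σ := p)
    (by ext i; simp [pow_two, involutive])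
  have support_eq : p.support = Finset.univ := by
    ext i
    simp [fixed_point_free i]
  have card_eq := p.sum_cycleType
  rw [support_eq, cycleType_eq, Multiset.sum_replicate, Finset.card_univ, smul_eq_mul] at card_eq
  rw [cycleType_eq, ← card_eq, Nat.mul_div_cancel _ two_pos]

lemma card_filter_pairingOfEquiv_trans_perm [Fintype κ] [DecidableEq ι] {p : Equiv.Perm ι}
    (hp : p ∈ pairings ι) (e : κ × Bool ≃ ι) :
    (Finset.univ.filter fun g : Equiv.Perm ι => pairingOfEquiv (e.trans g) = p).card =
      2 ^ Fintype.card κ * (Fintype.card κ).factorial := by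
  classical
  have card_eq : Fintype.card ι = Fintype.card κ * 2 := by simp [← Fintype.card_congr e]
  set p₀ := pairingOfEquiv e with hp₀
  have cycleType_eq := cycleType_of_mem_pairings (pairingOfEquiv_mem_pairings e)
  obtain ⟨g₀, rfl⟩ : ∃ g₀, g₀ * p₀ * g₀⁻¹ = p := isConj_iff.1 <|
    Equiv.Perm.isConj_of_cycleType_eq (cycleType_eq.trans (cycleType_of_mem_pairings hp).symm)
  have card_centralizer : Nat.card (Subgroup.centralizer {p₀}) =
      2 ^ Fintype.card κ * (Fintype.card κ).factorial := by
    rw [Equiv.Perm.nat_card_centralizer, cycleType_eq, card_eq,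
      Nat.mul_div_cancel _ two_pos]
    rcases (Fintype.card κ).eq_zero_or_pos with h | h
    · simp [h]
    · simp [Multiset.toFinset_replicate, h.ne', mul_comm]
  rw [← card_centralizer, Nat.card_eq_fintype_card, Fintype.card_subtype]
  simp_rw [pairingOfEquiv_trans_perm, Subgroup.mem_centralizer_singleton_iff]
  refine Finset.card_equiv (Equiv.mulLeft g₀⁻¹) fun g => ?_
  simp only [Finset.mem_filter_univ, Equiv.coe_mulLeft]
  rw [mul_inv_eq_iff_eq_mul, ← mul_right_inj g₀⁻¹]
  simp only [← hp₀, mul_assoc, inv_mul_cancel_left]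

lemma prod_filter_lt_pairingOfEquiv [Fintype κ] [LinearOrder ι] (e : κ × Bool ≃ ι)
    {C : ι → ι → ℝ} (hC : ∀ i j, C i j = C j i) :
    ∏ u with u < pairingOfEquiv e u, C u (pairingOfEquiv e u) =
      ∏ l, C (e (l, false)) (e (l, true)) := by
  rw [Finset.prod_filter, ← Equiv.prod_comp e, Fintype.prod_prod_type]
  refine Finset.prod_congr rfl fun l _ => ?_
  have ne : e (l, false) ≠ e (l, true) := by simp
  simp only [Fintype.prod_bool, pairingOfEquiv_apply, Bool.not_true, Bool.not_false]
  rcases ne.lt_or_gt with h | h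
  · simp [h, h.not_gt]
  · simp [h, h.not_gt, hC (e (l, true))]

lemma two_pow_mul_factorial_mul_sum_pairings [Fintype κ] [LinearOrder ι] (e : κ × Bool ≃ ι)
    {C : ι → ι → ℝ} (hC : ∀ i j, C i j = C j i) :
    (2 ^ Fintype.card κ * (Fintype.card κ).factorial : ℝ) *
        ∑ p ∈ pairings ι, ∏ u with u < p u, C u (p u) =
      ∑ g : Equiv.Perm ι, ∏ l, C (g (e (l, false))) (g (e (l, true))) := by
  have prod_eq (g : Equiv.Perm ι) := prod_filter_lt_pairingOfEquiv (e.trans g) hC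
  simp only [Equiv.trans_apply] at prod_eq
  simp_rw [← prod_eq]
  rw [← Finset.sum_fiberwise_of_maps_to (s := Finset.univ) (t := pairings ι)
    (g := fun g => pairingOfEquiv (e.trans g)) fun g _ => pairingOfEquiv_mem_pairings _,
    Finset.mul_sum]
  refine Finset.sum_congr rfl fun p hp => ?_
  have fiber_sum : ∑ g : Equiv.Perm ι with pairingOfEquiv (e.trans g) = p,
      ∏ u with u < pairingOfEquiv (e.trans g) u, C u (pairingOfEquiv (e.trans g) u) =
        ∑ g : Equiv.Perm ι with pairingOfEquiv (e.trans g) = p, ∏ u with u < p u, C u (p u) :=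
    Finset.sum_congr rfl fun g hg => by rw [(Finset.mem_filter.1 hg).2]
  rw [fiber_sum, Finset.sum_const, card_filter_pairingOfEquiv_trans_perm hp e]
  simp

end Pairings

section Wick

variable {E : Type*} [NormedAddCommGroup E] [InnerProductSpace ℝ E] [FiniteDimensional ℝ E]
  [MeasurableSpace E] [BorelSpace E]

lemma map_inner_stdGaussian (v : E) :
    (stdGaussian E).map (fun θ => inner ℝ v θ) = gaussianReal 0 (‖v‖₊ ^ 2) := by
  have h := IsGaussian.map_eq_gaussianReal (μ := stdGaussian E) (innerSL ℝ v)
  rw [integral_strongDual_stdGaussian, variance_dual_stdGaussian, innerSL_apply_norm] at h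
  refine h.trans (congrArg _ ?_)
  ext
  simp

lemma integrable_prod_inner_stdGaussian {ι : Type*} [Fintype ι] (v : ι → E) :
    Integrable (fun θ => ∏ j, inner ℝ (v j) θ) (stdGaussian E) := by
  have integrable_norm_pow : Integrable (fun θ : E => ‖θ‖ ^ Fintype.card ι) (stdGaussian E) :=
    (IsGaussian.memLp_id (stdGaussian E) (Fintype.card ι) (by simp)).integrable_norm_pow'
  refine (integrable_norm_pow.const_mul (∏ j, ‖v j‖)).mono' (by fun_prop)
    (ae_of_all _ fun θ => ?_)
  calc ‖∏ j, inner ℝ (v j) θ‖ = ∏ j, ‖inner ℝ (v j) θ‖ := norm_prod _ _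
    _ ≤ ∏ j, (‖v j‖ * ‖θ‖) :=
        Finset.prod_le_prod (fun _ _ => norm_nonneg _) fun j _ => norm_inner_le_norm _ _
    _ = (∏ j, ‖v j‖) * ‖θ‖ ^ Fintype.card ι := by simp [Finset.prod_mul_distrib]

lemma two_pow_mul_factorial_mul_integral_inner_pow_stdGaussian (m : ℕ) (v : E) :
    (2 ^ m * m.factorial : ℝ) * ∫ θ, inner ℝ v θ ^ (2 * m) ∂(stdGaussian E) =
      (2 * m).factorial * inner ℝ v v ^ m := by
  have h := two_pow_mul_factorial_mul_integral_pow_gaussianReal m (‖v‖₊ ^ 2)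
  rw [← map_inner_stdGaussian, integral_map (by fun_prop) (by fun_prop)] at h
  rw [h, real_inner_self_eq_norm_sq]
  simp

variable {κ ι : Type*} [Fintype κ] [Fintype ι]

/- Both sides are the polarization of `two_pow_mul_factorial_mul_integral_inner_pow_stdGaussian`
at the vectors `v j`. -/
lemma two_pow_mul_factorial_mul_integral_prod_inner_stdGaussian [DecidableEq ι]
    (e : κ × Bool ≃ ι) (v : ι → E) :
    (2 ^ Fintype.card κ * (Fintype.card κ).factorial : ℝ) *
        ∫ θ, ∏ j, inner ℝ (v j) θ ∂(stdGaussian E) =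
      ∑ g : Equiv.Perm ι, ∏ l, inner ℝ (v (g (e (l, false)))) (v (g (e (l, true)))) := by
  classical
  have card_eq : Fintype.card (κ × Bool) = 2 * Fintype.card κ := by simp [mul_comm]
  have factorial_ne_zero : ((2 * Fintype.card κ).factorial : ℝ) ≠ 0 := by positivity
  have integral_pow_sum (S : Finset ι) :
      ∫ θ, inner ℝ (∑ j ∈ S, v j) θ ^ (2 * Fintype.card κ) ∂(stdGaussian E) =
        ∑ q : κ × Bool → ι with ∀ l, q l ∈ S, ∫ θ, ∏ l, inner ℝ (v (q l)) θ ∂(stdGaussian E) := by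
    simp_rw [← card_eq, sum_inner, sum_pow_card_eq_sum_maps (α := κ × Bool) S]
    exact integral_finsetSum _ fun q _ => integrable_prod_inner_stdGaussian _
  have expand (S : Finset ι) :=
    two_pow_mul_factorial_mul_integral_inner_pow_stdGaussian (Fintype.card κ) (∑ j ∈ S, v j)
  simp_rw [integral_pow_sum, sum_inner, inner_sum, sum_sum_pow_card_eq_sum_maps] at expand
  have sum_perm : ∑ g : Equiv.Perm ι, ∫ θ, ∏ l, inner ℝ (v (g (e l))) θ ∂(stdGaussian E) =
      (2 * Fintype.card κ).factorial * ∫ θ, ∏ j, inner ℝ (v j) θ ∂(stdGaussian E) := by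
    have (g : Equiv.Perm ι) (θ : E) :
        ∏ l, inner ℝ (v (g (e l))) θ = ∏ j, inner ℝ (v j) θ :=
      (e.trans g).prod_comp fun j => inner ℝ (v j) θ
    simp [this, Fintype.card_perm, ← Fintype.card_congr e, mul_comm]
  apply mul_left_cancel₀ factorial_ne_zero
  rw [mul_left_comm, ← sum_perm,
    ← sum_neg_one_pow_mul_sum_eq_sum_perm e fun q => ∫ θ, ∏ l, inner ℝ (v (q l)) θ ∂(stdGaussian E),
    ← sum_neg_one_pow_mul_sum_eq_sum_perm e fun q =>
      ∏ l, inner ℝ (v (q (l, false))) (v (q (l, true))), Finset.mul_sum, Finset.mul_sum]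
  exact Finset.sum_congr rfl fun S _ => by rw [mul_left_comm, expand, mul_left_comm]

lemma integral_prod_inner_stdGaussian [LinearOrder ι] (hι : Even (Fintype.card ι)) (v : ι → E) :
    ∫ θ, ∏ j, inner ℝ (v j) θ ∂(stdGaussian E) =
      ∑ p ∈ pairings ι, ∏ u with u < p u, inner ℝ (v u) (v (p u)) := by
  obtain ⟨m, hm⟩ := hι
  have e : Fin m × Bool ≃ ι := Fintype.equivOfCardEq (by simp [hm, mul_two])
  have factor_ne_zero : (2 ^ Fintype.card (Fin m) * (Fintype.card (Fin m)).factorial : ℝ) ≠ 0 := by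
    positivity
  apply mul_left_cancel₀ factor_ne_zero
  rw [two_pow_mul_factorial_mul_integral_prod_inner_stdGaussian e,
    two_pow_mul_factorial_mul_sum_pairings e fun i j => real_inner_comm (v j) (v i)]

end Wick

/-! ### Closed walks and noncrossing pairings -/

section CyclicPred

/-- The cyclic predecessor on `Fin n`, sending `0` to `n - 1`. -/
def cyclicPred (n : ℕ) : Equiv.Perm (Fin n) := (finRotate n).symm

variable {n : ℕ} {α : Type*}

lemma coe_finRotate_eq_ite (l : Fin n) :
    (finRotate n l : ℕ) = if (l : ℕ) + 1 = n then 0 else (l : ℕ) + 1 := by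
  obtain _ | n := n
  · exact l.elim0
  · rw [coe_finRotate]
    simp [Fin.ext_iff]

lemma finRotate_cyclicPred (l : Fin n) : finRotate n (cyclicPred n l) = l :=
  Equiv.apply_symm_apply _ _

lemma cyclicPred_finRotate (l : Fin n) : cyclicPred n (finRotate n l) = l :=
  Equiv.symm_apply_apply _ _

lemma coe_cyclicPred (l : Fin n) :
    (cyclicPred n l : ℕ) = if (l : ℕ) = 0 then n - 1 else (l : ℕ) - 1 := by
  have h := coe_finRotate_eq_ite (cyclicPred n l)
  rw [finRotate_cyclicPred] at h
  split_ifs at h ⊢ <;> omega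

lemma apply_eq_of_forall_eq_cyclicPred {e : Fin n → α} {a b : Fin n} (hab : a ≤ b)
    (h : ∀ j, a < j → j ≤ b → e j = e (cyclicPred n j)) : e b = e a := by
  obtain ⟨k, hk⟩ : ∃ k, (b : ℕ) = a + k := Nat.exists_eq_add_of_le hab
  induction k generalizing b with
  | zero => rw [Fin.ext hk]
  | succ k ih =>
    have pred_eq := coe_cyclicPred b
    rw [if_neg (by omega)] at pred_eq
    rw [h b (by omega) le_rfl]
    exact ih (by omega) (fun j hj hjb => h j hj (by omega)) (by omega)

lemma eq_on_arcs_of_forall_eq_cyclicPred {e : Fin n → α} {a v : Fin n} (hav : a < v)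
    (h : ∀ j, j ≠ a → j ≠ v → e j = e (cyclicPred n j)) :
    (∀ j, a ≤ j → j < v → e j = e a) ∧ ∀ j, j < a ∨ v ≤ j → e j = e v := by
  have above {j} (hj : v ≤ j) : e j = e v :=
    apply_eq_of_forall_eq_cyclicPred hj fun i hi _ => h i (hav.trans hi).ne' hi.ne'
  refine ⟨fun j haj hjv => apply_eq_of_forall_eq_cyclicPred haj fun i hi hij =>
    h i hi.ne' (hij.trans_lt hjv).ne, ?_⟩
  rintro j (hj | hj)
  · have : NeZero n := ⟨j.pos.ne'⟩
    have pred_zero := coe_cyclicPred (0 : Fin n)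
    rw [if_pos (by simp)] at pred_zero
    rw [apply_eq_of_forall_eq_cyclicPred (Fin.zero_le j) fun i _ hij =>
        h i (hij.trans_lt hj).ne ((hij.trans_lt hj).trans hav).ne,
      h 0 ((Fin.zero_le j).trans_lt hj).ne (((Fin.zero_le j).trans_lt hj).trans hav).ne]
    exact above (by omega)
  · exact above hj

end CyclicPred

section Counting

variable {m N : ℕ} {p : Equiv.Perm (Fin (2 * m))} {α : Type*}

lemma mem_NCPairings : p ∈ NCPairings m ↔
    p ∈ pairings (Fin (2 * m)) ∧ ∀ a b, a < b → b < p a → ¬ p a < p b := by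
  simp [NCPairings, mem_pairings, and_assoc]

lemma mem_pairings_of_mem_NCPairings (hp : p ∈ NCPairings m) : p ∈ pairings (Fin (2 * m)) :=
  (mem_NCPairings.1 hp).1

lemma card_filter_lt_of_mem_pairings (hp : p ∈ pairings (Fin (2 * m))) :
    (Finset.univ.filter fun u => u < p u).card = m := by
  obtain ⟨involutive, fixed_point_free⟩ := mem_pairings.1 hp
  have card_openers_eq : (Finset.univ.filter fun u => u < p u).card =
      (Finset.univ.filter fun u => ¬ u < p u).card :=
    Finset.card_equiv p fun u => by
      simp [involutive, le_iff_lt_or_eq, (fixed_point_free u).symm]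
  have card_add := Finset.card_filter_add_card_filter_not (s := Finset.univ) fun u => u < p u
  simp only [Finset.card_univ, Fintype.card_fin] at card_add
  omega

/-- The pair `u, p u` links the values of `e` at the endpoints of the two steps
`cyclicPred u → u` and `cyclicPred (p u) → p u`, matching the steps either with the same or with the
opposite orientation. -/
def StepsMatch (p : Equiv.Perm (Fin (2 * m))) (e : Fin (2 * m) → α) (u : Fin (2 * m)) : Prop :=
  (e (cyclicPred _ (p u)) = e (cyclicPred _ u) ∧ e (p u) = e u) ∨
    (e (p u) = e (cyclicPred _ u) ∧ e (cyclicPred _ (p u)) = e u)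

/- All steps other than those of the pair `a, p a` are constant, so `e` takes one value on the arc
`[a, p a)` and one on its complement; a crossing pair or an equally oriented match at `a` connects
the two arcs. -/
lemma eq_apply_of_linked (hp : p ∈ pairings (Fin (2 * m))) {a : Fin (2 * m)} (ha : a < p a)
    {e : Fin (2 * m) → α} (steps_match : ∀ u, u < p u → StepsMatch p e u)
    (constant_step : ∀ u, u < p u → u ≠ a → e u = e (cyclicPred _ u))
    (linked : e (cyclicPred _ (p a)) = e (cyclicPred _ a) ∨
      ∃ b, a < b ∧ b < p a ∧ p a < p b) (j : Fin (2 * m)) : e j = e (p a) := by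
  obtain ⟨involutive, fixed_point_free⟩ := mem_pairings.1 hp
  have eq_pred (j) (hja : j ≠ a) (hjpa : j ≠ p a) : e j = e (cyclicPred _ j) := by
    rcases lt_or_ge j (p j) with hj | hj
    · exact constant_step j hj hja
    · have opener : p j < p (p j) := by
        rw [involutive]
        exact hj.lt_of_ne (fixed_point_free j)
      have step := constant_step _ opener fun h => hjpa (by rw [← h, involutive])
      rcases steps_match _ opener with h | h <;> rw [involutive] at h
      · rw [h.1, h.2, step]
      · rw [h.1, h.2, step]
  obtain ⟨inside, outside⟩ := eq_on_arcs_of_forall_eq_cyclicPred ha eq_pred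
  have arcs_agree : e a = e (p a) := by
    rcases linked with h | ⟨b, hab, hbpa, hpab⟩
    · have pred_pa := coe_cyclicPred (p a)
      have pred_a := coe_cyclicPred a
      rw [if_neg (by omega)] at pred_pa
      rw [← inside (cyclicPred _ (p a)) (by omega) (by omega), h, outside (cyclicPred _ a)]
      split_ifs at pred_a <;> omega
    · have pred_pb := coe_cyclicPred (p b)
      rw [if_neg (by omega)] at pred_pb
      rw [← inside b hab.le hbpa]
      rcases steps_match b (hbpa.trans hpab) with h | h
      · rw [← h.2, outside _ (Or.inr hpab.le)]
      · rw [← h.2, outside _ (Or.inr (by omega))]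
  by_cases h : a ≤ j ∧ j < p a
  · rw [inside j h.1 h.2, arcs_agree]
  · exact outside j (by omega)

/-- The lag between the matrix positions `(i (cyclicPred u), i u)` and
`(i (cyclicPred (p u)), i (p u))`; if `same` is false, the second position is transposed first. -/
def positionLag (p : Equiv.Perm (Fin (2 * m))) (i : Fin (2 * m) → Fin N) (u : Fin (2 * m))
    (same : Bool) : ℤ × ℤ :=
  if same then ((i (cyclicPred _ (p u)) : ℤ) - i (cyclicPred _ u), (i (p u) : ℤ) - i u)
  else ((i (p u) : ℤ) - i (cyclicPred _ u), (i (cyclicPred _ (p u)) : ℤ) - i u)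

/-- The closed walks `i` on `Fin N` whose positions have prescribed lags along the pairs of `p`. -/
def walksWithLags (N : ℕ) (p : Equiv.Perm (Fin (2 * m)))
    (x : {u // u < p u} → Bool × (ℤ × ℤ)) : Finset (Fin (2 * m) → Fin N) :=
  Finset.univ.filter fun i => ∀ u : {u // u < p u}, positionLag p i u (x u).1 = (x u).2

variable {x : {u // u < p u} → Bool × (ℤ × ℤ)}

lemma exists_crossing_or_same (hp : p ∈ pairings (Fin (2 * m)))
    (hbad : p ∉ NCPairings m ∨ ∃ u, (x u).1 = true) :
    ∃ a, ∃ ha : a < p a, (x ⟨a, ha⟩).1 = true ∨ ∃ b, a < b ∧ b < p a ∧ p a < p b := by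
  rcases hbad with h | ⟨u, hu⟩
  · simp only [mem_NCPairings, hp, true_and] at h
    push Not at h
    obtain ⟨a, b, hab, hbpa, hpab⟩ := h
    exact ⟨a, hab.trans hbpa, Or.inr ⟨b, hab, hbpa, hpab⟩⟩
  · exact ⟨u.1, u.2, Or.inl hu⟩

lemma eq_of_mem_walksWithLags (hp : p ∈ pairings (Fin (2 * m))) {a : Fin (2 * m)} (ha : a < p a)
    (hlink : (x ⟨a, ha⟩).1 = true ∨ ∃ b, a < b ∧ b < p a ∧ p a < p b)
    {i i' : Fin (2 * m) → Fin N} (hi : i ∈ walksWithLags N p x) (hi' : i' ∈ walksWithLags N p x)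
    (base_eq : i (p a) = i' (p a))
    (step_eq : ∀ u, u < p u → u ≠ a →
      (i u : ℤ) - i (cyclicPred _ u) = i' u - i' (cyclicPred _ u)) : i = i' := by
  set e : Fin (2 * m) → ℤ := fun j => (i j : ℤ) - i' j with he
  have lag_eq (u) (hu : u < p u) :
      positionLag p i u (x ⟨u, hu⟩).1 = positionLag p i' u (x ⟨u, hu⟩).1 :=
    ((Finset.mem_filter.1 hi).2 ⟨u, hu⟩).trans ((Finset.mem_filter.1 hi').2 ⟨u, hu⟩).symm
  have steps_match (u) (hu : u < p u) : StepsMatch p e u := by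
    have h := lag_eq u hu
    simp only [positionLag] at h
    simp only [StepsMatch, he]
    split_ifs at h <;> simp only [Prod.mk.injEq] at h
    · left; constructor <;> omega
    · right; constructor <;> omega
  have e_eq := eq_apply_of_linked hp ha steps_match
    (fun u hu hua => by have := step_eq u hu hua; simp only [he]; omega)
    (hlink.imp_left fun same => by
      have h := lag_eq a ha
      simp only [positionLag, same, if_true, Prod.mk.injEq] at h
      simp only [he]
      omega)
  funext j
  have h := e_eq j
  simp only [he, base_eq, sub_self] at h
  omega

/- A walk is determined by its value at one point and its steps at the openers other than `a`, so
one degree of freedom is lost. -/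
lemma card_walksWithLags_le (hp : p ∈ pairings (Fin (2 * m)))
    (hbad : p ∉ NCPairings m ∨ ∃ u, (x u).1 = true) :
    (walksWithLags N p x).card ≤ N * (2 * N + 1) ^ (m - 1) := by
  classical
  obtain ⟨a, ha, hlink⟩ := exists_crossing_or_same hp hbad
  let J := {u : Fin (2 * m) // u < p u ∧ u ≠ a}
  have card_J : Fintype.card J = m - 1 := by
    have filter_eq : (Finset.univ.filter fun u => u < p u ∧ u ≠ a) =
        (Finset.univ.filter fun u => u < p u).erase a := by
      ext u
      simp [and_comm]
    rw [Fintype.card_subtype, filter_eq, Finset.card_erase_of_mem (by simp [ha]),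
      card_filter_lt_of_mem_pairings hp]
  have card_target : ((Finset.univ : Finset (Fin N)) ×ˢ
      Fintype.piFinset fun _ : J => Finset.Icc (-(N : ℤ)) N).card =
        N * (2 * N + 1) ^ (m - 1) := by
    simp only [Finset.card_product, Fintype.card_piFinset, Finset.card_univ, Fintype.card_fin,
      Int.card_Icc, Finset.prod_const, card_J]
    congr 2
    omega
  rw [← card_target]
  refine Finset.card_le_card_of_injOn
    (fun i => (i (p a), fun u : J => (i u.1 : ℤ) - i (cyclicPred _ u.1))) (fun i _ => ?_)
    fun i hi i' hi' heq => ?_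
  · simp only [Finset.mem_coe, Finset.mem_product, Finset.mem_univ, true_and,
      Fintype.mem_piFinset, Finset.mem_Icc]
    omega
  · obtain ⟨base_eq, step_eq⟩ := Prod.mk.inj heq
    exact eq_of_mem_walksWithLags hp ha hlink hi hi' base_eq
      fun u hu hua => congrFun step_eq ⟨u, hu, hua⟩

end Counting

section OrbitIndex

variable {α β : Type*}

/-- `T` labels the orbits of the permutation `κ` bijectively by the elements of `β`. -/
structure IsOrbitIndex (κ : Equiv.Perm α) (T : α → β) : Prop where
  surjective : Function.Surjective T
  eq_iff_sameCycle : ∀ i j, T i = T j ↔ κ.SameCycle i j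

lemma IsKrewerasIndex.isOrbitIndex {m : ℕ} {p : Equiv.Perm (Fin (2 * m))}
    {T : Fin (2 * m) → Fin (m + 1)} (hT : IsKrewerasIndex m p T) :
    IsOrbitIndex (krewPerm m p) T :=
  ⟨hT.1, hT.2.1⟩

variable {κ : Equiv.Perm α} {T : α → β}

lemma IsOrbitIndex.apply_perm (hT : IsOrbitIndex κ T) (l : α) : T (κ l) = T l :=
  (hT.eq_iff_sameCycle _ _).2 (Equiv.Perm.sameCycle_apply_left.2 (Equiv.Perm.SameCycle.refl _ _))

/-- The coboundary of an integer valued function along a permutation. -/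
def coboundary (κ : Equiv.Perm α) : (α → ℤ) →+ (α → ℤ) where
  toFun φ l := φ (κ l) - φ l
  map_zero' := by ext; simp
  map_add' φ ψ := by ext; simp [add_sub_add_comm]

lemma coboundary_apply (φ : α → ℤ) (l : α) : coboundary κ φ l = φ (κ l) - φ l := rfl

lemma single_sub_single_mem_range_coboundary [Finite α] [DecidableEq α] {i j : α}
    (h : κ.SameCycle i j) :
    (Pi.single i 1 - Pi.single j 1 : α → ℤ) ∈ (coboundary κ).range := by
  obtain ⟨n, rfl⟩ := h.exists_nat_pow_eq
  induction n with
  | zero => simp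
  | succ n ih =>
    rw [← sub_add_sub_cancel _ (Pi.single ((κ ^ n) i) 1)]
    refine add_mem (ih (h := ⟨n, rfl⟩)) ⟨Pi.single ((κ ^ (n + 1)) i) 1, ?_⟩
    ext l
    simp [coboundary_apply, Pi.single_apply, pow_succ', κ.injective.eq_iff]

section Solutions

variable [Fintype α] [DecidableEq β] {k : α → ℤ}

/- Subtracting from `k` its cycle sums placed at orbit representatives writes it as a combination
of differences of indicators along cycles. -/
lemma IsOrbitIndex.mem_range_coboundary (hT : IsOrbitIndex κ T)
    (hk : ∀ t, ∑ l with T l = t, k l = 0) : k ∈ (coboundary κ).range := by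
  classical
  obtain ⟨r, hr⟩ := hT.surjective.hasRightInverse
  have sum_at_representatives : ∑ j, k j • (Pi.single (r (T j)) 1 : α → ℤ) = 0 := by
    ext l
    have eq_iff (j) : l = r (T j) ↔ l = r (T l) ∧ T j = T l :=
      ⟨fun h => by rw [h, hr]; exact ⟨rfl, rfl⟩, fun h => by rw [h.2]; exact h.1⟩
    simp only [Finset.sum_apply, Pi.smul_apply, Pi.single_apply, smul_eq_mul, mul_ite, mul_one,
      mul_zero, Pi.zero_apply]
    rw [Finset.sum_congr rfl fun j _ => if_congr (eq_iff j) rfl rfl, ← Finset.sum_filter]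
    by_cases hl : l = r (T l)
    · simp only [eq_true hl, true_and, hk]
    · simp only [hl, false_and, Finset.filter_false, Finset.sum_empty]
  have k_eq : k = ∑ j, k j • (Pi.single j 1 - Pi.single (r (T j)) 1 : α → ℤ) := by
    simp_rw [smul_sub]
    rw [Finset.sum_sub_distrib, sum_at_representatives, sub_zero]
    ext l
    simp [Pi.single_apply]
  rw [k_eq]
  exact sum_mem fun j _ => zsmul_mem (single_sub_single_mem_range_coboundary
    ((hT.eq_iff_sameCycle _ _).1 (hr (T j)).symm)) _

lemma IsOrbitIndex.sum_coboundary (hT : IsOrbitIndex κ T) (φ : α → ℤ) (t : β) :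
    ∑ l with T l = t, coboundary κ φ l = 0 := by
  simp_rw [coboundary_apply]
  rw [Finset.sum_sub_distrib, sub_eq_zero]
  exact Finset.sum_equiv κ (by simp [hT.apply_perm]) fun _ _ => rfl

/-- The labellings of `α` by `Fin N` whose coboundary along `κ` is `k`. -/
def coboundarySolutions [DecidableEq α] (N : ℕ) (κ : Equiv.Perm α) (k : α → ℤ) :
    Finset (α → Fin N) :=
  Finset.univ.filter fun i => coboundary κ (fun l => (i l : ℤ)) = k

variable [DecidableEq α] {N : ℕ}

lemma mem_coboundarySolutions {i : α → Fin N} :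
    i ∈ coboundarySolutions N κ k ↔ ∀ l, (i (κ l) : ℤ) - i l = k l := by
  simp [coboundarySolutions, funext_iff, coboundary_apply]

lemma IsOrbitIndex.coboundarySolutions_eq_empty (hT : IsOrbitIndex κ T)
    (hk : ¬ ∀ t, ∑ l with T l = t, k l = 0) : coboundarySolutions N κ k = ∅ :=
  Finset.filter_eq_empty_iff.2 fun _ _ h => hk fun t => by rw [← h, hT.sum_coboundary]

variable [Fintype β]

omit [DecidableEq β] in
lemma IsOrbitIndex.card_coboundarySolutions_le (hT : IsOrbitIndex κ T) :
    (coboundarySolutions N κ k).card ≤ N ^ Fintype.card β := by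
  classical
  obtain ⟨r, hr⟩ := hT.surjective.hasRightInverse
  have card_univ_eq : (Finset.univ : Finset (β → Fin N)).card = N ^ Fintype.card β := by simp
  rw [← card_univ_eq]
  refine Finset.card_le_card_of_injOn (fun i => i ∘ r) (by simp) fun i hi i' hi' heq => ?_
  rw [Finset.mem_coe, mem_coboundarySolutions] at hi hi'
  have apply_pow_eq (t : β) (n : ℕ) : i ((κ ^ n) (r t)) = i' ((κ ^ n) (r t)) := by
    induction n with
    | zero => exact congrFun heq t
    | succ n ih =>
      have h := hi ((κ ^ n) (r t))
      have h' := hi' ((κ ^ n) (r t))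
      rw [pow_succ', Equiv.Perm.mul_apply]
      omega
  funext l
  obtain ⟨n, hn⟩ := ((hT.eq_iff_sameCycle _ _).1 (hr (T l))).exists_nat_pow_eq
  rw [← hn, apply_pow_eq]

lemma IsOrbitIndex.exists_pow_le_card_coboundarySolutions (hT : IsOrbitIndex κ T)
    (hk : ∀ t, ∑ l with T l = t, k l = 0) :
    ∃ B : ℕ, ∀ N, (N - 2 * B) ^ Fintype.card β ≤ (coboundarySolutions N κ k).card := by
  obtain ⟨φ, hφ⟩ := hT.mem_range_coboundary hk
  refine ⟨∑ l, (φ l).natAbs, fun N => ?_⟩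
  set B := ∑ l, (φ l).natAbs
  have natAbs_le (l) : (φ l).natAbs ≤ B :=
    Finset.single_le_sum (f := fun l => (φ l).natAbs) (fun _ _ => Nat.zero_le _) (Finset.mem_univ l)
  have shift_lt (τ : β → Fin (N - 2 * B)) (l : α) : (φ l + B + (τ (T l) : ℕ)).toNat < N := by
    have := natAbs_le l
    omega
  have card_univ_eq :
      (Finset.univ : Finset (β → Fin (N - 2 * B))).card = (N - 2 * B) ^ Fintype.card β := by simp
  rw [← card_univ_eq]
  refine Finset.card_le_card_of_injOn
    (fun τ l => (⟨(φ l + B + (τ (T l) : ℕ)).toNat, shift_lt τ l⟩ : Fin N)) (fun τ _ => ?_)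
    fun τ _ τ' _ h => ?_
  · refine mem_coboundarySolutions.2 fun l => ?_
    have := congrFun hφ l
    rw [coboundary_apply] at this
    have := natAbs_le l
    have := natAbs_le (κ l)
    simp only [hT.apply_perm]
    omega
  · funext t
    obtain ⟨l, rfl⟩ := hT.surjective t
    have := congrArg Fin.val (congrFun h l)
    have := natAbs_le l
    simp only at *
    omega

lemma IsOrbitIndex.tendsto_card_coboundarySolutions_div (hT : IsOrbitIndex κ T) (k : α → ℤ) :
    Tendsto (fun N : ℕ => ((coboundarySolutions N κ k).card : ℝ) / (N : ℝ) ^ Fintype.card β) atTop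
      (nhds (if ∀ t, ∑ l with T l = t, k l = 0 then 1 else 0)) := by
  split_ifs with hk
  · obtain ⟨B, hB⟩ := hT.exists_pow_le_card_coboundarySolutions hk
    have lower_tendsto :
        Tendsto (fun N : ℕ => (1 - (2 * B : ℕ) / (N : ℝ)) ^ Fintype.card β) atTop (nhds 1) := by
      simpa using ((tendsto_const_div_atTop_nhds_zero_nat ((2 * B : ℕ) : ℝ)).const_sub 1).pow
        (Fintype.card β)
    refine tendsto_of_tendsto_of_tendsto_of_le_of_le' lower_tendsto tendsto_const_nhds ?_ ?_
    all_goals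
      filter_upwards [eventually_gt_atTop (2 * B)] with N hN
      have N_pos : (0 : ℝ) < N := by exact_mod_cast (Nat.zero_le _).trans_lt hN
    · rw [le_div_iff₀ (by positivity), ← mul_pow, sub_mul, one_mul, div_mul_cancel₀ _ N_pos.ne',
        ← Nat.cast_sub hN.le]
      exact_mod_cast hB N
    · rw [div_le_one (by positivity)]
      exact_mod_cast hT.card_coboundarySolutions_le
  · simp [hT.coboundarySolutions_eq_empty hk]

end Solutions

end OrbitIndex

section CardNCPairings

variable {m : ℕ} {p p' : Equiv.Perm (Fin (2 * m))}

lemma lt_apply_of_not_lt_apply (hp : p ∈ pairings (Fin (2 * m))) {u : Fin (2 * m)}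
    (h : ¬ u < p u) : p u < p (p u) := by
  rw [(mem_pairings.1 hp).1]
  exact (not_lt.1 h).lt_of_ne ((mem_pairings.1 hp).2 u)

/- Reading from the left, a closer `v` must be matched with the last unmatched opener: if `p v`
lies before `p' v`, then `p' v` is closed by `p` before `v`, where `p` and `p'` already agree. -/
lemma not_apply_lt_apply_of_agree_below (hp : p ∈ NCPairings m) (hp' : p' ∈ NCPairings m)
    (openers_eq : ∀ u, u < p u ↔ u < p' u) {v : Fin (2 * m)} (hv : p v < v)
    (agree : ∀ w, w < v → p w < w → p w = p' w) : ¬ p v < p' v := by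
  intro hlt
  obtain ⟨hpair, noncrossing⟩ := mem_NCPairings.1 hp
  obtain ⟨involutive, -⟩ := mem_pairings.1 hpair
  have hpair' := mem_pairings_of_mem_NCPairings hp'
  have involutive' := (mem_pairings.1 hpair').1
  have hv' : p' v < v := by
    simpa [involutive'] using lt_apply_of_not_lt_apply hpair'
      (fun h => hv.not_gt ((openers_eq v).2 h))
  have opener : p' v < p (p' v) := (openers_eq _).2 (by rwa [involutive'])
  have closed_before : p (p' v) < v := by
    refine lt_of_le_of_ne (not_lt.1 fun h => ?_) fun h => ?_
    · exact noncrossing (p v) (p' v) hlt (by rwa [involutive]) (by rwa [involutive])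
    · exact hlt.ne ((congrArg p h).symm.trans (involutive _))
  have h := agree _ closed_before (by rwa [involutive])
  rw [involutive] at h
  exact closed_before.ne (p'.injective h.symm)

lemma eq_of_openers_eq (hp : p ∈ NCPairings m) (hp' : p' ∈ NCPairings m)
    (openers_eq : ∀ u, u < p u ↔ u < p' u) : p = p' := by
  have hpair := mem_pairings_of_mem_NCPairings hp
  have hpair' := mem_pairings_of_mem_NCPairings hp'
  have closers_eq (w) (h : p' w < w) : p w < w := by
    simpa [(mem_pairings.1 hpair).1] using lt_apply_of_not_lt_apply hpair
      (fun hw => h.not_gt ((openers_eq w).1 hw))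
  have closers_eq' (w) (h : p w < w) : p' w < w := by
    simpa [(mem_pairings.1 hpair').1] using lt_apply_of_not_lt_apply hpair'
      (fun hw => h.not_gt ((openers_eq w).2 hw))
  have agree_at_closers (v : Fin (2 * m)) : p v < v → p v = p' v := by
    induction v using WellFoundedLT.induction with
    | ind v ih =>
      intro hv
      refine le_antisymm (not_lt.1 ?_) (not_lt.1 (not_apply_lt_apply_of_agree_below hp hp'
        openers_eq hv ih))
      exact not_apply_lt_apply_of_agree_below hp' hp (fun u => (openers_eq u).symm)
        (closers_eq' v hv) fun w hw hw' => (ih w hw (closers_eq w hw')).symm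
  refine Equiv.ext fun v => ?_
  by_cases hv : v < p v
  · have h := agree_at_closers (p v) (by rwa [(mem_pairings.1 hpair).1])
    rw [(mem_pairings.1 hpair).1] at h
    rw [h, (mem_pairings.1 hpair').1, ← h]
  · exact agree_at_closers v ((not_lt.1 hv).lt_of_ne ((mem_pairings.1 hpair).2 v))

lemma card_NCPairings_le (m : ℕ) : (NCPairings m).card ≤ 4 ^ m := by
  have card_subsets : (Finset.univ : Finset (Finset (Fin (2 * m)))).card = 4 ^ m := by
    simp [pow_mul]
  rw [← card_subsets]
  exact Finset.card_le_card_of_injOn (fun p => Finset.univ.filter fun u => u < p u) (by simp)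
    fun p hp p' hp' heq => eq_of_openers_eq hp hp' fun u => by simpa using Finset.ext_iff.1 heq u

end CardNCPairings

section KrewerasIndex

lemma apply_eq_of_sameCycle {α β : Type*} [Finite α] {κ : Equiv.Perm α} {ρ : α → β}
    (invariant : ∀ l, ρ (κ l) = ρ l) {i j : α} (h : κ.SameCycle i j) : ρ i = ρ j := by
  obtain ⟨n, rfl⟩ := h.exists_nat_pow_eq
  clear h
  induction n with
  | zero => rfl
  | succ n ih => rw [pow_succ', Equiv.Perm.mul_apply, invariant, ← ih]

lemma exists_isOrbitIndex_of_retraction {α : Type*} [Fintype α] [DecidableEq α]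
    {κ : Equiv.Perm α} {ρ : α → α} (invariant : ∀ l, ρ (κ l) = ρ l)
    (sameCycle : ∀ l, κ.SameCycle l (ρ l)) :
    ∃ T : α → Fin (Finset.univ.image ρ).card, IsOrbitIndex κ T := by
  let index := (Finset.univ.image ρ).equivFin
  refine ⟨fun l => index ⟨ρ l, Finset.mem_image_of_mem ρ (Finset.mem_univ l)⟩,
    fun t => ?_, fun i j => ?_⟩
  · obtain ⟨⟨r, hr⟩, rfl⟩ := index.surjective t
    obtain ⟨l, -, rfl⟩ := Finset.mem_image.1 hr
    exact ⟨l, rfl⟩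
  · rw [index.injective.eq_iff, Subtype.mk.injEq]
    exact ⟨fun h => (sameCycle i).trans (h ▸ (sameCycle j).symm), apply_eq_of_sameCycle invariant⟩

variable {m : ℕ} {p : Equiv.Perm (Fin (2 * m))} {l : Fin (2 * m)}

/-- The representative of the block of `l` in the Kreweras complement of a noncrossing pairing `p`:
the opener of the innermost arc `u ≤ l < p u` above the gap after `l`, and the last point if there
is no such arc. -/
def krewRep (p : Equiv.Perm (Fin (2 * m))) (l : Fin (2 * m)) : Fin (2 * m) :=
  if h : (Finset.univ.filter fun u => u ≤ l ∧ l < p u).Nonempty then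
    (Finset.univ.filter fun u => u ≤ l ∧ l < p u).max' h
  else ⟨2 * m - 1, Nat.sub_one_lt_of_lt l.pos⟩

lemma krewRep_eq_of_isGreatest {u₀ : Fin (2 * m)} (h : IsGreatest {u | u ≤ l ∧ l < p u} u₀) :
    krewRep p l = u₀ := by
  have nonempty : (Finset.univ.filter fun u => u ≤ l ∧ l < p u).Nonempty :=
    ⟨u₀, by simpa using h.1⟩
  rw [krewRep, dif_pos nonempty]
  refine (Finset.isGreatest_max' _ nonempty).unique ?_
  simpa using h

lemma krewRep_congr {l' : Fin (2 * m)} (h : ∀ u, u ≤ l ∧ l < p u ↔ u ≤ l' ∧ l' < p u) :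
    krewRep p l = krewRep p l' := by
  simp only [krewRep, h]

lemma krewRep_of_lt (h : l < p l) : krewRep p l = l :=
  krewRep_eq_of_isGreatest ⟨⟨le_rfl, h⟩, fun _ hu => hu.1⟩

lemma krewRep_of_eq_last (h : (l : ℕ) = 2 * m - 1) : krewRep p l = l := by
  have no_arc : ¬ (Finset.univ.filter fun u => u ≤ l ∧ l < p u).Nonempty := by
    rw [Finset.not_nonempty_iff_eq_empty, Finset.filter_eq_empty_iff]
    rintro u - ⟨-, hu⟩
    omega
  rw [krewRep, dif_neg no_arc]
  exact Fin.ext h.symm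

lemma krewRep_arc_or_eq_last (p : Equiv.Perm (Fin (2 * m))) (l : Fin (2 * m)) :
    (krewRep p l ≤ l ∧ l < p (krewRep p l)) ∨ (krewRep p l : ℕ) = 2 * m - 1 := by
  rw [krewRep]
  split_ifs with h
  · exact Or.inl (by simpa only [Finset.mem_filter_univ] using Finset.max'_mem _ h)
  · exact Or.inr rfl

lemma le_and_lt_iff_finRotate (u v : Fin (2 * m)) :
    u ≤ l ∧ l < v ↔ u < finRotate _ l ∧ finRotate _ l ≤ v := by
  have rot := coe_finRotate_eq_ite l
  split_ifs at rot <;> omega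

lemma krewRep_krewPerm (hp : p ∈ NCPairings m) (l : Fin (2 * m)) :
    krewRep p (krewPerm m p l) = krewRep p l := by
  obtain ⟨hpair, noncrossing⟩ := mem_NCPairings.1 hp
  obtain ⟨involutive, fixed_point_free⟩ := mem_pairings.1 hpair
  change krewRep p (p (finRotate _ l)) = _
  have arcs_above := fun u => le_and_lt_iff_finRotate (l := l) u (p u)
  generalize finRotate _ l = j at arcs_above ⊢
  rcases lt_or_gt_of_ne (fixed_point_free j) with closer | opener
  · rw [krewRep_of_lt (by rwa [involutive])]
    refine (krewRep_eq_of_isGreatest ⟨?_, fun u hu => ?_⟩).symm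
    · exact (arcs_above _).2 ⟨closer, (involutive j).ge⟩
    · obtain ⟨huj, hjpu⟩ := (arcs_above u).1 hu
      by_contra hlt
      rw [not_le] at hlt
      have ne : j ≠ p u := fun h => hlt.ne (by rw [h, involutive])
      exact noncrossing (p j) u hlt (by rwa [involutive])
        (by rw [involutive]; exact hjpu.lt_of_ne ne)
  · refine krewRep_congr fun u => ?_
    rw [arcs_above]
    constructor
    · rintro ⟨hu, hpu⟩
      have ne : u ≠ p j := fun h => by rw [h, involutive] at hpu; exact hpu.not_gt opener
      have ne' : u ≠ j := fun h => by rw [h] at hpu; exact hpu.false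
      have huj : u < j :=
        (not_lt.1 fun h => noncrossing j u h (hu.lt_of_ne ne) hpu).lt_of_ne ne'
      exact ⟨huj, (opener.trans hpu).le⟩
    · rintro ⟨huj, hjpu⟩
      have ne : j ≠ p u := fun h => by rw [h, involutive, ← h] at opener; exact opener.not_gt huj
      have ne' : p j ≠ p u := fun h => huj.ne' (p.injective h)
      exact ⟨(huj.trans opener).le,
        (not_lt.1 (noncrossing u j huj (hjpu.lt_of_ne ne))).lt_of_ne ne'⟩

lemma sameCycle_krewRep (hp : p ∈ NCPairings m) (l : Fin (2 * m)) :
    (krewPerm m p).SameCycle l (krewRep p l) := by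
  obtain ⟨involutive, fixed_point_free⟩ := mem_pairings.1 (mem_pairings_of_mem_NCPairings hp)
  induction l using WellFoundedLT.induction with
  | ind l ih =>
    rcases lt_or_gt_of_ne (fixed_point_free l) with closer | opener
    · have krewPerm_eq : krewPerm m p (cyclicPred _ (p l)) = l := by
        change p (finRotate (2 * m) (cyclicPred _ (p l))) = l
        rw [finRotate_cyclicPred, involutive]
      rw [← krewPerm_eq, krewRep_krewPerm hp, Equiv.Perm.sameCycle_apply_left]
      have pred_eq := coe_cyclicPred (p l)
      split_ifs at pred_eq with h
      · rw [krewRep_of_eq_last pred_eq]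
      · exact ih _ (by omega)
    · rw [krewRep_of_lt opener]

lemma card_image_krewRep (hm : 1 ≤ m) (hp : p ∈ pairings (Fin (2 * m))) :
    (Finset.univ.image (krewRep p)).card = m + 1 := by
  let last : Fin (2 * m) := ⟨2 * m - 1, by omega⟩
  have last_not_mem : last ∉ Finset.univ.filter fun u => u < p u := by
    rw [Finset.mem_filter_univ, not_lt]
    exact Nat.le_sub_one_of_lt (p last).isLt
  have image_eq :
      Finset.univ.image (krewRep p) = insert last (Finset.univ.filter fun u => u < p u) := by
    ext u
    simp only [Finset.mem_image, Finset.mem_univ, true_and, Finset.mem_insert,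
      Finset.mem_filter, Fin.ext_iff (b := last)]
    constructor
    · rintro ⟨l, rfl⟩
      exact (krewRep_arc_or_eq_last p l).symm.imp_right fun arc => arc.1.trans_lt arc.2
    · rintro (h | h)
      · exact ⟨u, krewRep_of_eq_last h⟩
      · exact ⟨u, krewRep_of_lt h⟩
  rw [image_eq, Finset.card_insert_of_notMem last_not_mem, card_filter_lt_of_mem_pairings hp]

lemma exists_isOrbitIndex_krewPerm (hm : 1 ≤ m) (hp : p ∈ NCPairings m) :
    ∃ T : Fin (2 * m) → Fin (m + 1), IsOrbitIndex (krewPerm m p) T := by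
  rw [← card_image_krewRep hm (mem_pairings_of_mem_NCPairings hp)]
  exact exists_isOrbitIndex_of_retraction (krewRep_krewPerm hp) (sameCycle_krewRep hp)

lemma IsOrbitIndex.apply_ne_of_lt {β : Type*} {T : Fin (2 * m) → β}
    (hT : IsOrbitIndex (krewPerm m p) T) (hp : p ∈ NCPairings m) {u : Fin (2 * m)} (hu : u < p u) :
    T u ≠ T (p u) := by
  intro h
  have rep_eq := apply_eq_of_sameCycle (krewRep_krewPerm hp) ((hT.eq_iff_sameCycle _ _).1 h)
  have arc_or_last := krewRep_arc_or_eq_last p (p u)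
  rw [← rep_eq, krewRep_of_lt hu] at arc_or_last
  omega

end KrewerasIndex

/-! ### Moments of models with finitely supported covariance -/

section TraceWalks

variable {ι S : Type*} [Fintype ι] [DecidableEq ι] [CommSemiring S]

lemma matrix_pow_succ_apply_eq_sum_walks (A : Matrix ι ι S) (n : ℕ) (a b : ι) :
    (A ^ (n + 1)) a b = ∑ i : Fin n → ι, ∏ l : Fin (n + 1),
      A (Fin.cons (α := fun _ => ι) a i l) (Fin.snoc (α := fun _ => ι) i b l) := by
  induction n generalizing a with
  | zero => simp [Fin.snoc]
  | succ n ih =>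
    rw [pow_succ', Matrix.mul_apply]
    simp_rw [ih, Finset.mul_sum]
    rw [← Finset.sum_product', Finset.univ_product_univ]
    refine Fintype.sum_equiv (Fin.consEquiv fun _ : Fin (n + 1) => ι) _ _ ?_
    rintro ⟨c, i⟩
    rw [Fin.prod_univ_succ (n := n + 1)]
    simp only [Fin.consEquiv, Equiv.coe_fn_mk, ← Fin.cons_snoc_eq_snoc_cons, Fin.cons_zero,
      Fin.cons_succ]

lemma trace_pow_eq_sum_closed_walks (A : Matrix ι ι S) {n : ℕ} (hn : n ≠ 0) :
    (A ^ n).trace = ∑ i : Fin n → ι, ∏ u, A (i (cyclicPred n u)) (i u) := by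
  obtain ⟨n, rfl⟩ := Nat.exists_eq_succ_of_ne_zero hn
  simp_rw [Matrix.trace, Matrix.diag_apply, Nat.succ_eq_add_one,
    matrix_pow_succ_apply_eq_sum_walks]
  rw [← Finset.sum_product', Finset.univ_product_univ]
  refine Fintype.sum_equiv (Fin.consEquiv fun _ : Fin (n + 1) => ι) _ _ ?_
  rintro ⟨a, i⟩
  refine Fintype.prod_equiv (finRotate (n + 1)) _ _ fun l => ?_
  simp only [Fin.consEquiv, Equiv.coe_fn_mk, cyclicPred_finRotate]
  congr 1
  refine Fin.lastCases ?_ (fun l => ?_) l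
  · rw [finRotate_last, Fin.snoc_last, Fin.cons_zero]
  · have rotate_eq : finRotate (n + 1) l.castSucc = l.succ := by
      simp
    rw [Fin.snoc_castSucc, rotate_eq, Fin.cons_succ]

end TraceWalks

section ModelMoment

/-- The covariance of `X_{a,b} + X_{b,a}` with either of the two terms of the shifted entry, when
`X` has covariance `R`. -/
def symmCov (R : ℤ × ℤ → ℝ) (w : ℤ × ℤ) : ℝ := R w + R w.swap

/-- The expected normalized trace `N⁻¹ tr W^{2m}` of the random matrix
`W_{a,b} = (X_{a,b} + X_{b,a})/√N` for a stationary Gaussian field `X` with covariance `R`, expanded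
by the Wick formula. -/
def modelMoment (m N : ℕ) (R : ℤ × ℤ → ℝ) : ℝ :=
  ((N : ℝ) ^ (m + 1))⁻¹ * ∑ p ∈ pairings (Fin (2 * m)), ∑ i : Fin (2 * m) → Fin N,
    ∏ u with u < p u, (symmCov R (positionLag p i u true) + symmCov R (positionLag p i u false))

variable {E : Type*} [NormedAddCommGroup E] [InnerProductSpace ℝ E] {m N : ℕ}

/-- The symmetrized scaled matrix of the field of linear functionals `⟪y a b, ·⟫`. -/
def symmMatrix (y : Fin N → Fin N → E) (θ : E) : Matrix (Fin N) (Fin N) ℝ :=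
  Matrix.of fun a b => (√N)⁻¹ * (inner ℝ (y a b) θ + inner ℝ (y b a) θ)

lemma trace_symmMatrix_pow (hm : 1 ≤ m) (y : Fin N → Fin N → E) (θ : E) :
    (symmMatrix y θ ^ (2 * m)).trace = ((N : ℝ) ^ m)⁻¹ * ∑ i : Fin (2 * m) → Fin N,
      ∏ u, inner ℝ (y (i (cyclicPred _ u)) (i u) + y (i u) (i (cyclicPred _ u))) θ := by
  have scale_eq : (√(N : ℝ))⁻¹ ^ (2 * m) = ((N : ℝ) ^ m)⁻¹ := by
    rw [inv_pow, pow_mul, Real.sq_sqrt (by positivity)]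
  rw [trace_pow_eq_sum_closed_walks _ (by omega), Finset.mul_sum]
  refine Finset.sum_congr rfl fun i _ => ?_
  simp only [symmMatrix, Matrix.of_apply, Finset.prod_mul_distrib, Finset.prod_const,
    Finset.card_univ, Fintype.card_fin, scale_eq, inner_add_left]

variable [FiniteDimensional ℝ E] [MeasurableSpace E] [BorelSpace E]

lemma integrable_trace_symmMatrix_pow (hm : 1 ≤ m) (y : Fin N → Fin N → E) :
    Integrable (fun θ => (symmMatrix y θ ^ (2 * m)).trace) (stdGaussian E) := by
  simp_rw [trace_symmMatrix_pow hm]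
  exact (integrable_finsetSum _ fun i _ => integrable_prod_inner_stdGaussian _).const_mul _

lemma integral_trace_symmMatrix_pow (hm : 1 ≤ m) (y : Fin N → Fin N → E) (R : ℤ × ℤ → ℝ)
    (hy : ∀ a b c d, inner ℝ (y a b) (y c d) = R ((c : ℤ) - a, (d : ℤ) - b)) :
    ∫ θ, (N : ℝ)⁻¹ * (symmMatrix y θ ^ (2 * m)).trace ∂stdGaussian E = modelMoment m N R := by
  simp_rw [trace_symmMatrix_pow hm, ← mul_assoc]
  rw [integral_const_mul,
    integral_finsetSum _ fun i _ => integrable_prod_inner_stdGaussian _, modelMoment,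
    Finset.sum_comm, ← mul_inv, ← pow_succ']
  congr 1
  refine Finset.sum_congr rfl fun i _ => ?_
  rw [integral_prod_inner_stdGaussian (by simp)]
  refine Finset.sum_congr rfl fun p _ => Finset.prod_congr rfl fun u _ => ?_
  simp only [inner_add_left, inner_add_right, hy, symmCov, positionLag, if_true,
    Bool.false_eq_true, if_false, Prod.swap]
  ring

end ModelMoment

section FreqBox

/-- The frequencies `(j, k)` with `|j|, |k| ≤ n`. -/
def freqBox (n : ℕ) : Finset (ℤ × ℤ) := Finset.Icc (-(n : ℤ)) n ×ˢ Finset.Icc (-(n : ℤ)) n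

variable {n : ℕ} {w : ℤ × ℤ} {R : ℤ × ℤ → ℝ}

lemma swap_mem_freqBox : w.swap ∈ freqBox n ↔ w ∈ freqBox n := by
  simp [freqBox, and_comm]

lemma neg_mem_freqBox : -w ∈ freqBox n ↔ w ∈ freqBox n := by
  simp only [freqBox, Finset.mem_product, Finset.mem_Icc, Prod.fst_neg, Prod.snd_neg]
  omega

lemma symmCov_eq_zero (hR : ∀ w, w ∉ freqBox n → R w = 0) (hw : w ∉ freqBox n) :
    symmCov R w = 0 := by
  rw [symmCov, hR w hw, hR _ (swap_mem_freqBox.not.2 hw), add_zero]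

variable {m N : ℕ} {p : Equiv.Perm (Fin (2 * m))}

/-- The choices, for each pair of `p`, of an orientation and of a lag in `freqBox n`. -/
def lagChoices (n : ℕ) (p : Equiv.Perm (Fin (2 * m))) :
    Finset ({u // u < p u} → Bool × (ℤ × ℤ)) :=
  Fintype.piFinset fun _ => Finset.univ ×ˢ freqBox n

lemma prod_symmCov_positionLag (hR : ∀ w, w ∉ freqBox n → R w = 0)
    (i : Fin (2 * m) → Fin N) :
    ∏ u with u < p u, (symmCov R (positionLag p i u true) + symmCov R (positionLag p i u false)) =
      ∑ x ∈ lagChoices n p, if i ∈ walksWithLags N p x then ∏ u, symmCov R (x u).2 else 0 := by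
  have factor_eq (u : {u // u < p u}) :
      symmCov R (positionLag p i u true) + symmCov R (positionLag p i u false) =
        ∑ x ∈ (Finset.univ : Finset Bool) ×ˢ freqBox n,
          if positionLag p i u x.1 = x.2 then symmCov R x.2 else 0 := by
    have single_lag (same) : (∑ w ∈ freqBox n,
        if positionLag p i u same = w then symmCov R w else 0) =
          symmCov R (positionLag p i u same) := by
      rw [Finset.sum_ite_eq, ite_eq_left_iff]
      exact fun h => (symmCov_eq_zero hR h).symm
    simp only [Finset.sum_product, Fintype.sum_bool, single_lag]
  rw [Finset.prod_subtype (p := fun u => u < p u) _ (by simp),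
    Finset.prod_congr rfl fun u _ => factor_eq u, Finset.prod_univ_sum, lagChoices]
  refine Finset.sum_congr rfl fun x _ => ?_
  simp only [Finset.prod_ite_zero, walksWithLags, Finset.mem_filter_univ, Finset.mem_univ,
    true_imp_iff]

lemma modelMoment_eq_sum_lagChoices (hR : ∀ w, w ∉ freqBox n → R w = 0) :
    modelMoment m N R = ∑ p ∈ pairings (Fin (2 * m)), ∑ x ∈ lagChoices n p,
      (∏ u, symmCov R (x u).2) * (((walksWithLags N p x).card : ℝ) / (N : ℝ) ^ (m + 1)) := by
  simp_rw [modelMoment, prod_symmCov_positionLag hR, Finset.mul_sum]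
  refine Finset.sum_congr rfl fun p _ => ?_
  rw [Finset.sum_comm]
  refine Finset.sum_congr rfl fun x _ => ?_
  rw [← Finset.mul_sum, Finset.sum_ite_mem, Finset.univ_inter, Finset.sum_const, nsmul_eq_mul]
  ring

end FreqBox

section CycleFreq

variable {m N : ℕ} {p : Equiv.Perm (Fin (2 * m))}

/-- The prescribed increment of a walk along the step `l → p (l + 1)` of the Kreweras permutation,
when the lags of the oppositely oriented pairs of `p` are given by `w`. -/
def cycleFreq (p : Equiv.Perm (Fin (2 * m))) (w : {u // u < p u} → ℤ × ℤ) (l : Fin (2 * m)) : ℤ :=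
  if h : finRotate _ l < p (finRotate _ l) then (w ⟨_, h⟩).1
  else if h : p (finRotate _ l) < p (p (finRotate _ l)) then -(w ⟨_, h⟩).2 else 0

variable {w : {u // u < p u} → ℤ × ℤ}

lemma cycleFreq_cyclicPred (u : {u // u < p u}) : cycleFreq p w (cyclicPred _ u) = (w u).1 := by
  simp only [cycleFreq, finRotate_cyclicPred, u.2, dite_true]

lemma cycleFreq_cyclicPred_apply (hp : p ∈ pairings (Fin (2 * m))) (u : {u // u < p u}) :
    cycleFreq p w (cyclicPred _ (p u)) = -(w u).2 := by
  simp only [cycleFreq, finRotate_cyclicPred, (mem_pairings.1 hp).1, u.2, u.2.not_gt, dite_true,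
    dite_false]

lemma krewPerm_cyclicPred (u : Fin (2 * m)) : krewPerm m p (cyclicPred _ u) = p u := by
  rw [krewPerm, Equiv.trans_apply, finRotate_cyclicPred]

lemma walksWithLags_eq_coboundarySolutions (hp : p ∈ pairings (Fin (2 * m)))
    {x : {u // u < p u} → Bool × (ℤ × ℤ)} (hx : ∀ u, (x u).1 = false) :
    walksWithLags N p x =
      coboundarySolutions N (krewPerm m p) (cycleFreq p fun u => (x u).2) := by
  have involutive := (mem_pairings.1 hp).1
  ext i
  rw [mem_coboundarySolutions, (cyclicPred (2 * m)).surjective.forall]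
  simp only [krewPerm_cyclicPred, walksWithLags, Finset.mem_filter_univ, positionLag, hx,
    Bool.false_eq_true, if_false, Prod.ext_iff]
  constructor
  · intro lags u
    by_cases opener : u < p u
    · rw [cycleFreq_cyclicPred ⟨u, opener⟩, ← (lags ⟨u, opener⟩).1]
    · let v : {u // u < p u} := ⟨p u, lt_apply_of_not_lt_apply hp opener⟩
      have u_eq : u = p v := (involutive u).symm
      rw [u_eq, cycleFreq_cyclicPred_apply hp, ← (lags v).2, involutive]
      ring
  · intro steps u
    have step := steps (p u)
    rw [cycleFreq_cyclicPred_apply hp, involutive] at step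
    exact ⟨(steps u).trans (cycleFreq_cyclicPred u), by omega⟩

end CycleFreq

section MomentLimit

variable {m n : ℕ} {R : ℤ × ℤ → ℝ} {p : Equiv.Perm (Fin (2 * m))} {T : Fin (2 * m) → Fin (m + 1)}

lemma tendsto_card_walksWithLags_div_zero (hp : p ∈ pairings (Fin (2 * m)))
    {x : {u // u < p u} → Bool × (ℤ × ℤ)} (hbad : p ∉ NCPairings m ∨ ∃ u, (x u).1 = true) :
    Tendsto (fun N : ℕ => ((walksWithLags N p x).card : ℝ) / (N : ℝ) ^ (m + 1)) atTop (nhds 0) := by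
  refine squeeze_zero' (Eventually.of_forall fun N => by positivity) ?_
    (tendsto_const_div_atTop_nhds_zero_nat ((3 : ℝ) ^ (m - 1)))
  filter_upwards [eventually_ge_atTop 1] with N hN
  have one_le : (1 : ℝ) ≤ N := by exact_mod_cast hN
  have card_le : ((walksWithLags N p x).card : ℝ) ≤ N * (2 * N + 1) ^ (m - 1) := by
    exact_mod_cast card_walksWithLags_le hp hbad
  have m_pos : 1 ≤ m := by
    have a := (exists_crossing_or_same hp hbad).choose
    exact Nat.pos_of_mul_pos_left a.pos
  rw [div_le_div_iff₀ (by positivity) (by positivity)]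
  calc ((walksWithLags N p x).card : ℝ) * N ≤ (N * (2 * N + 1) ^ (m - 1)) * N := by gcongr
    _ ≤ (N * (3 * N) ^ (m - 1)) * N := by gcongr; linarith
    _ = 3 ^ (m - 1) * (N : ℝ) ^ (m - 1 + 2) := by rw [mul_pow]; ring
    _ = 3 ^ (m - 1) * (N : ℝ) ^ (m + 1) := by rw [show m - 1 + 2 = m + 1 by omega]

/-- The contribution of a noncrossing pairing `p`, whose Kreweras blocks are indexed by `T`, to the
limit of `modelMoment m N R`. -/
def pairingLimit (n : ℕ) (R : ℤ × ℤ → ℝ) (p : Equiv.Perm (Fin (2 * m)))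
    (T : Fin (2 * m) → Fin (m + 1)) : ℝ :=
  ∑ w ∈ Fintype.piFinset fun _ : {u // u < p u} => freqBox n,
    (∏ u, symmCov R (w u)) * if ∀ t, ∑ l with T l = t, cycleFreq p w l = 0 then 1 else 0

lemma pairingLimit_eq_sum_lagChoices : pairingLimit n R p T =
    ∑ x ∈ lagChoices n p, (∏ u, symmCov R (x u).2) * if ∀ u, (x u).1 = false then
      (if ∀ t, ∑ l with T l = t, cycleFreq p (fun u => (x u).2) l = 0 then 1 else 0) else 0 := by
  simp_rw [mul_ite, mul_zero]
  rw [← Finset.sum_filter, pairingLimit]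
  refine Finset.sum_bij' (fun w _ u => (false, w u)) (fun x _ u => (x u).2) ?_ ?_
    (fun _ _ => rfl) ?_ fun _ _ => by simp
  · simp +contextual [lagChoices]
  · simp +contextual [lagChoices]
  · intro x hx
    funext u
    exact Prod.ext ((Finset.mem_filter.1 hx).2 u).symm rfl

lemma tendsto_card_walksWithLags_div (hp : p ∈ NCPairings m)
    (hT : IsOrbitIndex (krewPerm m p) T) (x : {u // u < p u} → Bool × (ℤ × ℤ)) :
    Tendsto (fun N : ℕ => ((walksWithLags N p x).card : ℝ) / (N : ℝ) ^ (m + 1)) atTop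
      (nhds (if ∀ u, (x u).1 = false then
        (if ∀ t, ∑ l with T l = t, cycleFreq p (fun u => (x u).2) l = 0 then 1 else 0)
        else 0)) := by
  have hp' := mem_pairings_of_mem_NCPairings hp
  split_ifs with opposite hsum
  all_goals try simp_rw [walksWithLags_eq_coboundarySolutions hp' opposite]
  · simpa [hsum] using hT.tendsto_card_coboundarySolutions_div (cycleFreq p fun u => (x u).2)
  · simpa [hsum] using hT.tendsto_card_coboundarySolutions_div (cycleFreq p fun u => (x u).2)
  · exact tendsto_card_walksWithLags_div_zero hp' (Or.inr (by simpa using opposite))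

lemma tendsto_modelMoment (hR : ∀ w, w ∉ freqBox n → R w = 0)
    {T : Equiv.Perm (Fin (2 * m)) → Fin (2 * m) → Fin (m + 1)}
    (hT : ∀ p ∈ NCPairings m, IsOrbitIndex (krewPerm m p) (T p)) :
    Tendsto (fun N => modelMoment m N R) atTop
      (nhds (∑ p ∈ NCPairings m, pairingLimit n R p (T p))) := by
  have sum_eq : ∑ p ∈ NCPairings m, pairingLimit n R p (T p) =
      ∑ p ∈ pairings (Fin (2 * m)), if p ∈ NCPairings m then pairingLimit n R p (T p) else 0 := by
    rw [Finset.sum_ite_mem, Finset.inter_eq_right.2 fun p => mem_pairings_of_mem_NCPairings]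
  simp_rw [modelMoment_eq_sum_lagChoices hR]
  rw [sum_eq]
  refine tendsto_finsetSum _ fun p hp => ?_
  split_ifs with noncrossing
  · rw [pairingLimit_eq_sum_lagChoices]
    exact tendsto_finsetSum _ fun x _ =>
      (tendsto_card_walksWithLags_div noncrossing (hT p noncrossing) x).const_mul _
  · rw [← Finset.sum_const_zero (s := lagChoices n p)]
    refine tendsto_finsetSum _ fun x _ => ?_
    simpa using (tendsto_card_walksWithLags_div_zero hp (Or.inl noncrossing)).const_mul
      (∏ u, symmCov R (x u).2)

end MomentLimit

section PlaneExp

/-- The character `q ↦ exp(i(jx + ky))`, `q = (x, y)`, of the plane with frequency `w = (j, k)`. -/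
def planeExp (w : ℤ × ℤ) (q : ℝ × ℝ) : ℂ :=
  Complex.exp (Complex.I * ((w.1 * q.1 + w.2 * q.2 : ℝ) : ℂ))

variable {w : ℤ × ℤ} {q : ℝ × ℝ}

lemma continuous_planeExp : Continuous (planeExp w) := by
  unfold planeExp
  fun_prop

lemma planeExp_add (w w' : ℤ × ℤ) (q : ℝ × ℝ) :
    planeExp (w + w') q = planeExp w q * planeExp w' q := by
  rw [planeExp, planeExp, planeExp, ← Complex.exp_add]
  congr 1
  push_cast [Prod.fst_add, Prod.snd_add]
  ring

lemma planeExp_neg_right (w : ℤ × ℤ) (q : ℝ × ℝ) : planeExp w (-q) = planeExp (-w) q := by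
  simp [planeExp]

lemma conj_planeExp (w : ℤ × ℤ) (q : ℝ × ℝ) :
    (starRingEnd ℂ) (planeExp w q) = planeExp (-w) q := by
  rw [planeExp, planeExp, ← Complex.exp_conj, map_mul, Complex.conj_I, Complex.conj_ofReal]
  congr 1
  push_cast [Prod.fst_neg, Prod.snd_neg]
  ring

end PlaneExp

section TrigDensity

variable {n : ℕ} {R : ℤ × ℤ → ℝ}

/-- The spectral density on `specBox` of a covariance `R` supported on `freqBox n`. -/
def trigDensity (n : ℕ) (R : ℤ × ℤ → ℝ) (q : ℝ × ℝ) : ℝ :=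
  ((2 * π) ^ 2)⁻¹ * ∑ w ∈ freqBox n, R w * Real.cos (w.1 * q.1 + w.2 * q.2)

lemma sum_freqBox_neg {M : Type*} [AddCommMonoid M] (F : ℤ × ℤ → M) :
    ∑ w ∈ freqBox n, F (-w) = ∑ w ∈ freqBox n, F w :=
  Finset.sum_equiv (Equiv.neg _) (fun _ => by simp [neg_mem_freqBox]) fun _ _ => rfl

lemma sum_freqBox_swap {M : Type*} [AddCommMonoid M] (F : ℤ × ℤ → M) :
    ∑ w ∈ freqBox n, F w.swap = ∑ w ∈ freqBox n, F w :=
  Finset.sum_equiv (Equiv.prodComm _ _) (fun _ => by simp [swap_mem_freqBox]) fun _ _ => rfl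

lemma ofReal_trigDensity (hR : ∀ w, R (-w) = R w) (q : ℝ × ℝ) :
    (trigDensity n R q : ℂ) = ((2 * π : ℂ) ^ 2)⁻¹ * ∑ w ∈ freqBox n, R w * planeExp w q := by
  have cos_eq (w : ℤ × ℤ) : (R w * Real.cos (w.1 * q.1 + w.2 * q.2) : ℂ) =
      (R w * planeExp w q + R (-w) * planeExp (-w) q) / 2 := by
    rw [hR, ← conj_planeExp, ← mul_add, Complex.add_conj, planeExp, mul_comm Complex.I,
      Complex.exp_ofReal_mul_I_re]
    push_cast
    ring
  have sum_eq : ∑ w ∈ freqBox n, (R w * Real.cos (w.1 * q.1 + w.2 * q.2) : ℂ) =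
      ∑ w ∈ freqBox n, R w * planeExp w q := by
    simp_rw [cos_eq]
    rw [← Finset.sum_div, Finset.sum_add_distrib,
      sum_freqBox_neg fun w => (R w : ℂ) * planeExp w q, add_self_div_two]
  rw [← sum_eq, trigDensity]
  push_cast
  rfl

lemma ofReal_trigDensity_add_swap (hR : ∀ w, R (-w) = R w) (a b : ℝ) :
    ((trigDensity n R (a, -b) + trigDensity n R (-b, a) : ℝ) : ℂ) =
      ((2 * π : ℂ) ^ 2)⁻¹ * ∑ w ∈ freqBox n, symmCov R w * planeExp w (b, -a) := by
  have first_eq : ∑ w ∈ freqBox n, (R w : ℂ) * planeExp w (a, -b) =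
      ∑ w ∈ freqBox n, R w.swap * planeExp w (b, -a) := by
    rw [← sum_freqBox_neg, ← sum_freqBox_swap]
    refine Finset.sum_congr rfl fun w _ => ?_
    rw [hR]
    simp [planeExp, add_comm]
  have second_eq : ∑ w ∈ freqBox n, (R w : ℂ) * planeExp w (-b, a) =
      ∑ w ∈ freqBox n, R w * planeExp w (b, -a) := by
    rw [← sum_freqBox_neg]
    refine Finset.sum_congr rfl fun w _ => ?_
    rw [hR, ← planeExp_neg_right, Prod.neg_mk, neg_neg]
  rw [Complex.ofReal_add, ofReal_trigDensity hR, ofReal_trigDensity hR, ← mul_add, first_eq,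
    second_eq, add_comm, ← Finset.sum_add_distrib]
  simp_rw [symmCov, Complex.ofReal_add, add_mul]

end TrigDensity

section PairingLimit

lemma integral_Icc_exp_int_mul (k : ℤ) :
    ∫ x in Set.Icc (-π) π, Complex.exp (Complex.I * ((k * x : ℝ) : ℂ)) =
      if k = 0 then (2 * π : ℂ) else 0 := by
  rw [integral_Icc_eq_integral_Ioc, ← intervalIntegral.integral_of_le (by linarith [pi_pos])]
  split_ifs with hk
  · subst hk
    simp
    ring
  · have periodic : Complex.exp (Complex.I * k * (π : ℝ)) =
        Complex.exp (Complex.I * k * ((-π : ℝ) : ℂ)) := by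
      rw [Complex.exp_eq_exp_iff_exists_int]
      exact ⟨k, by push_cast; ring⟩
    simp_rw [Complex.ofReal_mul, Complex.ofReal_intCast, ← mul_assoc]
    rw [integral_exp_mul_complex (by simp [hk]), periodic, sub_self, zero_div]

lemma integral_pi_Icc_exp_sum_int_mul {ι : Type*} [Fintype ι] (k : ι → ℤ) :
    ∫ x in Set.univ.pi fun _ : ι => Set.Icc (-π) π,
      Complex.exp (Complex.I * ((∑ t, k t * x t : ℝ) : ℂ)) =
        (2 * π) ^ Fintype.card ι * if ∀ t, k t = 0 then 1 else 0 := by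
  have exp_eq (x : ι → ℝ) : Complex.exp (Complex.I * ((∑ t, k t * x t : ℝ) : ℂ)) =
      ∏ t, Complex.exp (Complex.I * ((k t * x t : ℝ) : ℂ)) := by
    rw [← Complex.exp_sum, Complex.ofReal_sum, Finset.mul_sum]
  simp_rw [exp_eq]
  rw [volume_pi, Measure.restrict_pi_pi, integral_fintype_prod_eq_prod (𝕜 := ℂ)
    fun t x => Complex.exp (Complex.I * ((k t * x : ℝ) : ℂ))]
  simp_rw [integral_Icc_exp_int_mul]
  rw [Finset.prod_ite_zero]
  simp

variable {m n : ℕ} {R : ℤ × ℤ → ℝ} {p : Equiv.Perm (Fin (2 * m))} {T : Fin (2 * m) → Fin (m + 1)}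

lemma sum_eq_sum_openers (hp : p ∈ pairings (Fin (2 * m))) {M : Type*} [AddCommMonoid M]
    (F : Fin (2 * m) → M) :
    ∑ l, F l = ∑ u : {u // u < p u}, (F u + F (p u)) := by
  obtain ⟨involutive, fixed_point_free⟩ := mem_pairings.1 hp
  have closers_eq : ∑ u with ¬ u < p u, F u = ∑ u with u < p u, F (p u) :=
    Finset.sum_equiv p
      (fun u => by simp [involutive, le_iff_lt_or_eq, fixed_point_free u]) fun u _ => by
        rw [involutive]
  rw [← Finset.sum_filter_add_sum_filter_not Finset.univ (fun u => u < p u), closers_eq,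
    ← Finset.sum_add_distrib, Finset.sum_subtype (p := fun u => u < p u) _ (by simp)]

lemma sum_cycleFreq_mul (hp : p ∈ pairings (Fin (2 * m))) (hT : IsOrbitIndex (krewPerm m p) T)
    (w : {u // u < p u} → ℤ × ℤ) (x : Fin (m + 1) → ℝ) :
    ∑ t, ((∑ l with T l = t, cycleFreq p w l : ℤ) : ℝ) * x t =
      ∑ u, ((w u).1 * x (T (p u)) + (w u).2 * -x (T u)) := by
  have T_pred (u) : T (cyclicPred _ u) = T (p u) := by
    rw [← hT.apply_perm, krewPerm_cyclicPred]
  have fiberwise : ∑ t, ((∑ l with T l = t, cycleFreq p w l : ℤ) : ℝ) * x t =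
      ∑ l, (cycleFreq p w l : ℝ) * x (T l) := by
    rw [← Finset.sum_fiberwise (g := T)]
    refine Finset.sum_congr rfl fun t _ => ?_
    push_cast
    rw [Finset.sum_mul]
    exact Finset.sum_congr rfl fun l hl => by rw [(Finset.mem_filter.1 hl).2]
  rw [fiberwise, ← Equiv.sum_comp (cyclicPred _), sum_eq_sum_openers hp]
  refine Finset.sum_congr rfl fun u _ => ?_
  rw [cycleFreq_cyclicPred, cycleFreq_cyclicPred_apply hp, T_pred, T_pred,
    (mem_pairings.1 hp).1]
  push_cast
  ring

lemma ofReal_Lsig_trigDensity (hR : ∀ w, R (-w) = R w) (hp : p ∈ pairings (Fin (2 * m)))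
    (hT : IsOrbitIndex (krewPerm m p) T) (x : Fin (m + 1) → ℝ) :
    (Lsig m p T (fun a b => trigDensity n R (a, b)) x : ℂ) =
      (((2 * π) ^ 2)⁻¹ : ℂ) ^ m * ∑ w ∈ Fintype.piFinset fun _ : {u // u < p u} => freqBox n,
        (∏ u, (symmCov R (w u) : ℂ)) * Complex.exp (Complex.I *
          ((∑ t, ((∑ l with T l = t, cycleFreq p w l : ℤ) : ℝ) * x t : ℝ) : ℂ)) := by
  have card_openers : Fintype.card {u // u < p u} = m := by
    rw [Fintype.card_subtype, card_filter_lt_of_mem_pairings hp]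
  rw [Lsig, Complex.ofReal_prod,
    Finset.prod_subtype (p := fun u => u < p u) (F := inferInstance) _ (by simp)]
  simp_rw [ofReal_trigDensity_add_swap hR]
  rw [Finset.prod_mul_distrib, Finset.prod_const, Finset.card_univ, card_openers,
    Finset.prod_univ_sum]
  congr 1
  refine Finset.sum_congr rfl fun w _ => ?_
  rw [sum_cycleFreq_mul hp hT, Finset.prod_mul_distrib, Complex.ofReal_sum, Finset.mul_sum,
    Complex.exp_sum]
  rfl

lemma pairingLimit_eq_integral_Lsig (hm : 1 ≤ m) (hR : ∀ w, R (-w) = R w)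
    (hp : p ∈ pairings (Fin (2 * m))) (hT : IsOrbitIndex (krewPerm m p) T) :
    pairingLimit n R p T = (2 * π) ^ (m - 1) *
      ∫ x in Set.univ.pi fun _ : Fin (m + 1) => Set.Icc (-π) π,
        Lsig m p T (fun a b => trigDensity n R (a, b)) x := by
  have two_pi_ne_zero : (2 * π : ℂ) ≠ 0 := by exact_mod_cast two_pi_pos.ne'
  have constants : (2 * π : ℂ) ^ (m - 1) * (((2 * π : ℂ) ^ 2)⁻¹ ^ m * (2 * π) ^ (m + 1)) = 1 := by
    rw [inv_pow, ← pow_mul, mul_left_comm, ← pow_add, show m - 1 + (m + 1) = 2 * m by omega]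
    exact inv_mul_cancel₀ (pow_ne_zero _ two_pi_ne_zero)
  have integrable_exp (k : Fin (m + 1) → ℤ) : IntegrableOn (fun x : Fin (m + 1) → ℝ =>
      Complex.exp (Complex.I * ((∑ t, k t * x t : ℝ) : ℂ)))
      (Set.univ.pi fun _ => Set.Icc (-π) π) :=
    ContinuousOn.integrableOn_compact (isCompact_univ_pi fun _ => isCompact_Icc)
      (Continuous.continuousOn (by fun_prop))
  rw [← Complex.ofReal_inj, Complex.ofReal_mul, ← integral_complex_ofReal]
  simp_rw [ofReal_Lsig_trigDensity hR hp hT]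
  rw [integral_const_mul, integral_finsetSum _ fun w _ => (integrable_exp _).const_mul _]
  simp_rw [integral_const_mul, integral_pi_Icc_exp_sum_int_mul, Fintype.card_fin,
    mul_left_comm _ ((2 * π : ℂ) ^ (m + 1)), ← Finset.mul_sum]
  push_cast
  rw [← mul_assoc (_ ^ m), ← mul_assoc, constants, one_mul, pairingLimit]
  simp [apply_ite]

end PairingLimit

/-! ### The normalized resolvent trace -/

section HermitianCalculus

open scoped Matrix.Norms.L2Operator

variable {ι : Type*} [Fintype ι] [DecidableEq ι] {A : Matrix ι ι ℝ}

lemma trace_cfc (hA : A.IsHermitian) (g : ℝ → ℝ) :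
    (cfc g A).trace = ∑ i, g (hA.eigenvalues i) := by
  rw [hA.cfc_eq, Matrix.IsHermitian.cfc, Unitary.conjStarAlgAut_apply, Matrix.trace_mul_cycle,
    Unitary.coe_star_mul_self, Matrix.one_mul, Matrix.trace_diagonal]
  rfl

lemma trace_pow_eq_sum_eigenvalues_pow (hA : A.IsHermitian) (n : ℕ) :
    (A ^ n).trace = ∑ i, hA.eigenvalues i ^ n := by
  rw [← cfc_pow_id (R := ℝ) A n hA.isSelfAdjoint, trace_cfc hA]

lemma norm_cfc_le_of_forall_abs_le (hA : A.IsHermitian) {g : ℝ → ℝ} {c : ℝ}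
    (hg : ∀ x, |g x| ≤ c) : ‖cfc g A‖ ≤ c := by
  rw [hA.cfc_eq, Matrix.IsHermitian.cfc, Unitary.conjStarAlgAut_apply,
    ← Unitary.coe_star, CStarRing.norm_mul_coe_unitary, CStarRing.norm_coe_unitary_mul,
    Matrix.l2_opNorm_diagonal, pi_norm_le_iff_of_nonneg ((abs_nonneg _).trans (hg 0))]
  exact fun i => hg _

end HermitianCalculus

section SqResolvent

open scoped Matrix.Norms.L2Operator

variable {ι : Type*} [Fintype ι] [DecidableEq ι] {A B : Matrix ι ι ℝ} {s : ℝ}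

/-- The resolvent of `A²` at `-s`. -/
def sqResolvent (s : ℝ) (A : Matrix ι ι ℝ) : Matrix ι ι ℝ := (s • (1 : Matrix ι ι ℝ) + A * A)⁻¹

lemma cfc_add_sq_mul_cfc_inv (hs : 0 < s) (hA : A.IsHermitian) :
    (s • (1 : Matrix ι ι ℝ) + A * A) * cfc (fun x : ℝ => (s + x ^ 2)⁻¹) A = 1 := by
  have add_sq_ne_zero (x : ℝ) : s + x ^ 2 ≠ 0 := by positivity
  rw [← Algebra.algebraMap_eq_smul_one, ← pow_two, ← cfc_pow_id (R := ℝ) A 2 hA.isSelfAdjoint,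
    ← cfc_const_add s (fun x => x ^ 2) A (ha := hA.isSelfAdjoint),
    ← cfc_mul (fun x => s + x ^ 2) (fun x => (s + x ^ 2)⁻¹) A (by fun_prop)
      (ContinuousOn.inv₀ (by fun_prop) fun x _ => add_sq_ne_zero x)]
  simp only [mul_inv_cancel₀ (add_sq_ne_zero _)]
  exact cfc_const_one ℝ A hA.isSelfAdjoint

lemma sqResolvent_eq_cfc (hs : 0 < s) (hA : A.IsHermitian) :
    sqResolvent s A = cfc (fun x : ℝ => (s + x ^ 2)⁻¹) A :=
  Matrix.inv_eq_right_inv (cfc_add_sq_mul_cfc_inv hs hA)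

lemma mul_sqResolvent_self (hs : 0 < s) (hA : A.IsHermitian) :
    (s • (1 : Matrix ι ι ℝ) + A * A) * sqResolvent s A = 1 := by
  rw [sqResolvent_eq_cfc hs hA, cfc_add_sq_mul_cfc_inv hs hA]

lemma sqResolvent_mul_self (hs : 0 < s) (hA : A.IsHermitian) :
    sqResolvent s A * (s • (1 : Matrix ι ι ℝ) + A * A) = 1 :=
  mul_eq_one_comm.1 (mul_sqResolvent_self hs hA)

lemma commute_sqResolvent (hs : 0 < s) (hA : A.IsHermitian) : Commute A (sqResolvent s A) := by
  rw [sqResolvent_eq_cfc hs hA]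
  exact ((Commute.refl A).cfc_real _).symm

lemma norm_sqResolvent_le (hs : 0 < s) (hA : A.IsHermitian) : ‖sqResolvent s A‖ ≤ s⁻¹ := by
  rw [sqResolvent_eq_cfc hs hA]
  refine norm_cfc_le_of_forall_abs_le hA fun x => ?_
  rw [abs_of_nonneg (by positivity)]
  gcongr
  exact le_add_of_nonneg_right (sq_nonneg x)

lemma norm_mul_sqResolvent_le (hs : 0 < s) (hA : A.IsHermitian) :
    ‖A * sqResolvent s A‖ ≤ (√s)⁻¹ := by
  rw [sqResolvent_eq_cfc hs hA]
  nth_rewrite 1 [← cfc_id' ℝ A hA.isSelfAdjoint]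
  rw [← cfc_mul (fun x => x) (fun x => (s + x ^ 2)⁻¹) A (by fun_prop)
    (ContinuousOn.inv₀ (by fun_prop) fun x _ => (by positivity : s + x ^ 2 ≠ 0))]
  refine norm_cfc_le_of_forall_abs_le hA fun x => ?_
  have amgm : √s * |x| ≤ s + x ^ 2 := by
    nlinarith [sq_nonneg (√s - |x|), sq_sqrt hs.le, sq_abs x, sq_nonneg (√s), sq_nonneg x]
  rw [abs_mul, abs_inv, abs_of_pos (by positivity : 0 < s + x ^ 2), ← div_eq_mul_inv,
    div_le_iff₀ (by positivity), ← div_eq_inv_mul, le_div_iff₀' (sqrt_pos.2 hs)]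
  exact amgm

lemma sqResolvent_sub (hs : 0 < s) (hA : A.IsHermitian) (hB : B.IsHermitian) :
    sqResolvent s A - sqResolvent s B =
      sqResolvent s B * (B * (B - A) + (B - A) * A) * sqResolvent s A := by
  have telescope : B * (B - A) + (B - A) * A =
      (s • (1 : Matrix ι ι ℝ) + B * B) - (s • (1 : Matrix ι ι ℝ) + A * A) := by
    noncomm_ring
  rw [telescope, Matrix.mul_sub, Matrix.sub_mul, sqResolvent_mul_self hs hB, Matrix.one_mul,
    Matrix.mul_assoc, mul_sqResolvent_self hs hA, Matrix.mul_one]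

lemma exists_trace_sqResolvent_sub_eq (hs : 0 < s) (hA : A.IsHermitian) (hB : B.IsHermitian) :
    ∃ M : Matrix ι ι ℝ, ‖M‖ ≤ 2 * (√s)⁻¹ ∧
      s * (sqResolvent s A).trace - s * (sqResolvent s B).trace = (M * (B - A)).trace := by
  refine ⟨s • (sqResolvent s A * (B * sqResolvent s B) + A * sqResolvent s A * sqResolvent s B),
    ?_, ?_⟩
  · have norm_left : ‖sqResolvent s A * (B * sqResolvent s B)‖ ≤ s⁻¹ * (√s)⁻¹ :=
      norm_mul_le_of_le (norm_sqResolvent_le hs hA) (norm_mul_sqResolvent_le hs hB)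
    have norm_right : ‖A * sqResolvent s A * sqResolvent s B‖ ≤ (√s)⁻¹ * s⁻¹ :=
      norm_mul_le_of_le (norm_mul_sqResolvent_le hs hA) (norm_sqResolvent_le hs hB)
    rw [norm_smul, Real.norm_of_nonneg hs.le]
    calc s * ‖sqResolvent s A * (B * sqResolvent s B) + A * sqResolvent s A * sqResolvent s B‖
        ≤ s * (s⁻¹ * (√s)⁻¹ + (√s)⁻¹ * s⁻¹) := by
          gcongr
          exact norm_add_le_of_le norm_left norm_right
      _ = 2 * (√s)⁻¹ := by field_simp; norm_num
  · rw [← mul_sub, ← Matrix.trace_sub, sqResolvent_sub hs hA hB, Matrix.smul_mul,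
      Matrix.trace_smul, smul_eq_mul, Matrix.mul_add, Matrix.add_mul, Matrix.add_mul,
      Matrix.trace_add, Matrix.trace_add, (commute_sqResolvent hs hB).eq]
    congr 2
    · rw [Matrix.trace_mul_comm]
      simp only [Matrix.mul_assoc]
    · simp only [Matrix.mul_assoc]
      rw [Matrix.trace_mul_comm (sqResolvent s B), Matrix.mul_assoc, Matrix.trace_mul_comm (B - A)]
      simp only [Matrix.mul_assoc]

end SqResolvent

section TraceInequalities

open scoped Matrix.Norms.L2Operator

variable {ι : Type*} [Fintype ι] [DecidableEq ι]

lemma sum_sq_entries_le (M : Matrix ι ι ℝ) : ∑ j, ∑ i, M i j ^ 2 ≤ Fintype.card ι * ‖M‖ ^ 2 := by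
  have column (j : ι) : ∑ i, M i j ^ 2 ≤ ‖M‖ ^ 2 := by
    have := Matrix.l2_opNorm_mulVec M (EuclideanSpace.single j 1)
    rw [PiLp.norm_single, norm_one, mul_one, EuclideanSpace.norm_eq] at this
    simpa using (Real.sqrt_le_left (norm_nonneg _)).1 this
  calc ∑ j, ∑ i, M i j ^ 2 ≤ ∑ _j : ι, ‖M‖ ^ 2 := Finset.sum_le_sum fun j _ => column j
    _ = Fintype.card ι * ‖M‖ ^ 2 := by simp

lemma abs_trace_mul_le (M D : Matrix ι ι ℝ) :
    |(M * D).trace| ≤ √(Fintype.card ι) * ‖M‖ * √(∑ i, ∑ j, D i j ^ 2) := by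
  have trace_eq : (M * D).trace = ∑ q : ι × ι, M q.2 q.1 * D q.1 q.2 := by
    rw [Fintype.sum_prod_type, Finset.sum_comm]
    rfl
  rw [trace_eq]
  refine abs_le_of_sq_le_sq ?_ (by positivity)
  refine (Finset.sum_mul_sq_le_sq_mul_sq _ _ _).trans ?_
  rw [Fintype.sum_prod_type, Fintype.sum_prod_type, mul_pow, mul_pow, sq_sqrt (by positivity),
    sq_sqrt (by positivity)]
  gcongr
  exact sum_sq_entries_le M

lemma abs_trace_mul_vecMulVec_le (M : Matrix ι ι ℝ) {a b : ι → ℝ} (ha : ∀ i, |a i| ≤ 1)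
    (hb : ∀ i, |b i| ≤ 1) : |(M * Matrix.vecMulVec a b).trace| ≤ Fintype.card ι * ‖M‖ := by
  have norm_le {c : ι → ℝ} (hc : ∀ i, |c i| ≤ 1) : ‖WithLp.toLp 2 c‖ ≤ √(Fintype.card ι) := by
    rw [EuclideanSpace.norm_eq]
    refine sqrt_le_sqrt ((Finset.sum_le_card_nsmul _ _ 1 fun i _ => ?_).trans (by simp))
    exact pow_le_one₀ (norm_nonneg _) (hc i)
  rw [Matrix.mul_vecMulVec, Matrix.trace_vecMulVec]
  calc |M.mulVec a ⬝ᵥ b| = |inner ℝ (WithLp.toLp 2 b) (WithLp.toLp 2 (M.mulVec a))| := by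
        rw [EuclideanSpace.inner_toLp_toLp]; simp
    _ ≤ ‖WithLp.toLp 2 b‖ * ‖WithLp.toLp 2 (M.mulVec a)‖ := abs_real_inner_le_norm _ _
    _ ≤ √(Fintype.card ι) * (‖M‖ * √(Fintype.card ι)) := by
        gcongr
        · exact norm_le hb
        · exact (Matrix.l2_opNorm_mulVec M (WithLp.toLp 2 a)).trans (by gcongr; exact norm_le ha)
    _ = Fintype.card ι * ‖M‖ := by
        rw [mul_left_comm, mul_self_sqrt (by positivity), mul_comm]

end TraceInequalities

section ResolventTrace

open scoped Matrix.Norms.L2Operator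

variable {N : ℕ} {A B : Matrix (Fin N) (Fin N) ℝ} {s : ℝ}

/-- The normalized trace of `s (s + A²)⁻¹`, that is, the integral of the test function
`x ↦ s / (s + x²)` against the empirical spectral distribution of `A`. -/
def resolventTrace (s : ℝ) (A : Matrix (Fin N) (Fin N) ℝ) : ℝ :=
  (N : ℝ)⁻¹ * (s * (sqResolvent s A).trace)

lemma resolventTrace_eq_esdEval (hs : 0 < s) (hA : A.IsHermitian) :
    resolventTrace s A = esdEval A fun x => s / (s + x ^ 2) := by
  rw [resolventTrace, esdEval, dif_pos hA, sqResolvent_eq_cfc hs hA, trace_cfc hA, Finset.mul_sum]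
  simp only [div_eq_mul_inv]

lemma measurable_resolventTrace {α : Type*} [MeasurableSpace α] (s : ℝ)
    {A : α → Matrix (Fin N) (Fin N) ℝ} (hA : ∀ i j, Measurable fun a => A a i j) :
    Measurable fun a => resolventTrace s (A a) := by
  have measurable_matrix : Measurable fun z : Fin N → Fin N → ℝ =>
      resolventTrace s (Matrix.of z) := by
    simp only [resolventTrace, sqResolvent, Matrix.inv_def, Ring.inverse_eq_inv', Matrix.trace_smul,
      smul_eq_mul]
    have continuous_id' : Continuous fun z : Fin N → Fin N → ℝ => Matrix.of z := continuous_id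
    have continuous_add_sq : Continuous fun z : Fin N → Fin N → ℝ =>
        s • (1 : Matrix (Fin N) (Fin N) ℝ) + Matrix.of z * Matrix.of z :=
      continuous_const.add (continuous_id'.matrix_mul continuous_id')
    exact ((continuous_add_sq.matrix_det.measurable.inv.mul
      continuous_add_sq.matrix_adjugate.matrix_trace.measurable).const_mul _).const_mul _
  exact measurable_matrix.comp (measurable_pi_lambda _ fun i => measurable_pi_lambda _ (hA i))

lemma div_add_sq_mem_Icc (hs : 0 < s) (x : ℝ) : s / (s + x ^ 2) ∈ Set.Icc 0 1 :=
  ⟨by positivity, div_le_one_of_le₀ (le_add_of_nonneg_right (sq_nonneg x)) (by positivity)⟩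

lemma abs_div_add_sq_le_one (hs : 0 < s) (x : ℝ) : |s / (s + x ^ 2)| ≤ 1 := by
  rw [abs_of_nonneg (div_add_sq_mem_Icc hs x).1]
  exact (div_add_sq_mem_Icc hs x).2

lemma abs_resolventTrace_le_one (hs : 0 < s) (hA : A.IsHermitian) : |resolventTrace s A| ≤ 1 := by
  rw [resolventTrace_eq_esdEval hs hA, esdEval, dif_pos hA, abs_mul, abs_inv, Nat.abs_cast,
    ← div_eq_inv_mul]
  refine div_le_one_of_le₀ ((Finset.abs_sum_le_sum_abs _ _).trans ?_) N.cast_nonneg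
  refine (Finset.sum_le_card_nsmul _ _ 1 fun j _ => abs_div_add_sq_le_one hs _).trans ?_
  simp

lemma div_add_sq_eq_sum_add (hs : 0 < s) (x : ℝ) (k : ℕ) :
    s / (s + x ^ 2) = ∑ j ∈ Finset.range k, (-s⁻¹) ^ j * x ^ (2 * j) +
      (-s⁻¹) ^ k * (x ^ (2 * k) * (s / (s + x ^ 2))) := by
  have geom := geom_sum_mul (-s⁻¹ * x ^ 2) k
  simp only [mul_pow, ← pow_mul] at geom
  have : s + x ^ 2 ≠ 0 := by positivity
  field_simp at geom ⊢
  linear_combination geom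

lemma abs_div_add_sq_sub_sum_le (hs : 0 < s) (x : ℝ) (k : ℕ) :
    |s / (s + x ^ 2) - ∑ j ∈ Finset.range k, (-s⁻¹) ^ j * x ^ (2 * j)| ≤
      s⁻¹ ^ k * x ^ (2 * k) := by
  rw [sub_eq_of_eq_add' (div_add_sq_eq_sum_add hs x k), abs_mul, abs_mul, abs_pow, abs_neg,
    abs_of_pos (inv_pos.2 hs), pow_mul, abs_of_nonneg (by positivity : 0 ≤ (x ^ 2) ^ k)]
  gcongr
  exact mul_le_of_le_one_right (by positivity) (abs_div_add_sq_le_one hs x)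

lemma abs_resolventTrace_sub_sum_trace_pow_le (hs : 0 < s) (hA : A.IsHermitian) (k : ℕ) :
    |resolventTrace s A - ∑ j ∈ Finset.range k, (-s⁻¹) ^ j * ((N : ℝ)⁻¹ * (A ^ (2 * j)).trace)| ≤
      s⁻¹ ^ k * ((N : ℝ)⁻¹ * (A ^ (2 * k)).trace) := by
  have sum_eq : resolventTrace s A -
      ∑ j ∈ Finset.range k, (-s⁻¹) ^ j * ((N : ℝ)⁻¹ * (A ^ (2 * j)).trace) =
      (N : ℝ)⁻¹ * ∑ i, (s / (s + hA.eigenvalues i ^ 2) -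
        ∑ j ∈ Finset.range k, (-s⁻¹) ^ j * hA.eigenvalues i ^ (2 * j)) := by
    rw [resolventTrace_eq_esdEval hs hA, esdEval, dif_pos hA, Finset.sum_sub_distrib, mul_sub,
      Finset.sum_comm]
    simp only [trace_pow_eq_sum_eigenvalues_pow hA, Finset.mul_sum, mul_left_comm]
  rw [sum_eq, abs_mul, abs_inv, Nat.abs_cast, trace_pow_eq_sum_eigenvalues_pow hA, mul_left_comm,
    Finset.mul_sum]
  gcongr
  exact (Finset.abs_sum_le_sum_abs _ _).trans
    (Finset.sum_le_sum fun i _ => abs_div_add_sq_sub_sum_le hs _ k)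

lemma abs_resolventTrace_sub_le_sqrt (hs : 0 < s) (hA : A.IsHermitian) (hB : B.IsHermitian) :
    |resolventTrace s A - resolventTrace s B| ≤
      2 * (√s)⁻¹ * √((N : ℝ)⁻¹ * ∑ i, ∑ j, (B i j - A i j) ^ 2) := by
  obtain ⟨M, hM, trace_eq⟩ := exists_trace_sqResolvent_sub_eq hs hA hB
  rw [resolventTrace, resolventTrace, ← mul_sub, trace_eq, abs_mul, abs_inv, Nat.abs_cast]
  calc (N : ℝ)⁻¹ * |(M * (B - A)).trace|
      ≤ (N : ℝ)⁻¹ * (√N * ‖M‖ * √(∑ i, ∑ j, (B i j - A i j) ^ 2)) := by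
        gcongr
        simpa only [Fintype.card_fin, Matrix.sub_apply] using abs_trace_mul_le M (B - A)
    _ = ‖M‖ * √((N : ℝ)⁻¹ * ∑ i, ∑ j, (B i j - A i j) ^ 2) := by
        rw [← mul_assoc, ← mul_assoc, ← div_eq_inv_mul, sqrt_div_self', one_div,
          sqrt_mul (by positivity), sqrt_inv]
        ring
    _ ≤ 2 * (√s)⁻¹ * √((N : ℝ)⁻¹ * ∑ i, ∑ j, (B i j - A i j) ^ 2) := by gcongr

lemma abs_resolventTrace_sub_le_of_sub_eq_sum {ι : Type*} [Fintype ι] {c : ι → ℝ}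
    {a b : ι → Fin N → ℝ} (hs : 0 < s) (hA : A.IsHermitian) (hB : B.IsHermitian)
    (ha : ∀ r i, |a r i| ≤ 1) (hb : ∀ r i, |b r i| ≤ 1)
    (hsub : B - A = ∑ r, c r • (Matrix.vecMulVec (a r) (b r) + Matrix.vecMulVec (b r) (a r))) :
    |resolventTrace s A - resolventTrace s B| ≤ 4 * (√s)⁻¹ * ∑ r, |c r| := by
  obtain ⟨M, hM, trace_eq⟩ := exists_trace_sqResolvent_sub_eq hs hA hB
  have abs_trace_le (r : ι) : |(M * c r • (Matrix.vecMulVec (a r) (b r) +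
      Matrix.vecMulVec (b r) (a r))).trace| ≤ |c r| * (N * (4 * (√s)⁻¹)) := by
    rw [Matrix.mul_smul, Matrix.trace_smul, smul_eq_mul, abs_mul, Matrix.mul_add, Matrix.trace_add]
    gcongr
    have left := abs_trace_mul_vecMulVec_le M (ha r) (hb r)
    have right := abs_trace_mul_vecMulVec_le M (hb r) (ha r)
    rw [Fintype.card_fin] at left right
    have scaled := mul_le_mul_of_nonneg_left hM N.cast_nonneg (α := ℝ)
    exact (abs_add_le _ _).trans (by linarith)
  rw [resolventTrace, resolventTrace, ← mul_sub, trace_eq, abs_mul, abs_inv, Nat.abs_cast, hsub,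
    Matrix.mul_sum, Matrix.trace_sum, ← div_eq_inv_mul]
  refine div_le_of_le_mul₀ N.cast_nonneg (by positivity) ?_
  refine (Finset.abs_sum_le_sum_abs _ _).trans
    ((Finset.sum_le_sum fun r _ => abs_trace_le r).trans_eq ?_)
  rw [← Finset.sum_mul]
  ring

end ResolventTrace

/-! ### Gaussian fields -/

section GaussianLaw

variable {Ω : Type*} [MeasurableSpace Ω] {P : Measure Ω}

lemma memLp_two_of_map_eq_gaussianReal {Z : Ω → ℝ} (hZ : AEMeasurable Z P) {v : NNReal}
    (h : P.map Z = gaussianReal 0 v) : MemLp Z 2 P := by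
  have : MemLp (id : ℝ → ℝ) 2 (P.map Z) := h ▸ memLp_id_gaussianReal' 2 (by simp)
  exact this.comp_of_map hZ

lemma integral_sq_of_map_eq_gaussianReal {Z : Ω → ℝ} (hZ : AEMeasurable Z P) {v : NNReal}
    (h : P.map Z = gaussianReal 0 v) : ∫ ω, Z ω ^ 2 ∂P = v := by
  rw [← integral_map (f := fun x => x ^ 2) hZ (by fun_prop), h]
  exact (variance_of_integral_eq_zero aemeasurable_id integral_id_gaussianReal).symm.trans
    variance_id_gaussianReal

variable {E : Type*} [NormedAddCommGroup E] [InnerProductSpace ℝ E]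
  {κ : Type*} [Fintype κ] {Z : κ → Ω → ℝ} {x : κ → E}

lemma integral_sum_mul_sq (hZ : ∀ i, MemLp (Z i) 2 P)
    (hx : ∀ i j, inner ℝ (x i) (x j) = ∫ ω, Z i ω * Z j ω ∂P) (c : κ → ℝ) :
    ∫ ω, (∑ i, c i * Z i ω) ^ 2 ∂P = ‖∑ i, c i • x i‖ ^ 2 := by
  have integrable_mul (i j : κ) : Integrable (fun ω => c i * c j * (Z i ω * Z j ω)) P :=
    ((hZ i).integrable_mul (hZ j)).const_mul _
  have expand (ω : Ω) : (∑ i, c i * Z i ω) ^ 2 = ∑ i, ∑ j, c i * c j * (Z i ω * Z j ω) := by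
    rw [sq, Finset.sum_mul_sum]
    simp only [mul_mul_mul_comm]
  rw [← real_inner_self_eq_norm_sq]
  simp only [expand, sum_inner, inner_sum, real_inner_smul_left, real_inner_smul_right, hx]
  rw [integral_finsetSum _ fun i _ => integrable_finsetSum _ fun j _ => integrable_mul i j]
  refine Finset.sum_congr rfl fun i _ => ?_
  rw [integral_finsetSum _ fun j _ => integrable_mul i j]
  refine Finset.sum_congr rfl fun j _ => ?_
  rw [integral_const_mul, ← hx i j, ← hx j i, real_inner_comm, mul_assoc]

variable [FiniteDimensional ℝ E] [MeasurableSpace E] [BorelSpace E]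

lemma integrable_inner_sq_stdGaussian (v : E) :
    Integrable (fun θ => inner ℝ v θ ^ 2) (stdGaussian E) :=
  (memLp_two_of_map_eq_gaussianReal (by fun_prop) (map_inner_stdGaussian v)).integrable_sq

lemma integral_inner_sq_stdGaussian (v : E) :
    ∫ θ, inner ℝ v θ ^ 2 ∂stdGaussian E = ‖v‖ ^ 2 := by
  rw [integral_sq_of_map_eq_gaussianReal (by fun_prop) (map_inner_stdGaussian v)]
  simp

lemma map_eq_map_inner_stdGaussian [IsProbabilityMeasure P] (hZ : ∀ i, Measurable (Z i))
    (hgauss : ∀ c : κ → ℝ, ∃ v, P.map (fun ω => ∑ i, c i * Z i ω) = gaussianReal 0 v)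
    (hx : ∀ i j, inner ℝ (x i) (x j) = ∫ ω, Z i ω * Z j ω ∂P) :
    P.map (fun ω i => Z i ω) = (stdGaussian E).map fun θ i => inner ℝ (x i) θ := by
  classical
  have measurable_Z : Measurable fun ω i => Z i ω := measurable_pi_lambda _ hZ
  have measurable_inner : Measurable fun (θ : E) i => inner ℝ (x i) θ :=
    measurable_pi_lambda _ fun i => by fun_prop
  have := Measure.isProbabilityMeasure_map (μ := P) measurable_Z.aemeasurable
  have := Measure.isProbabilityMeasure_map (μ := stdGaussian E) measurable_inner.aemeasurable
  apply Measure.ext_of_charFunDual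
  funext L
  obtain ⟨c, hc⟩ : ∃ c : κ → ℝ, ∀ z, L z = ∑ i, c i * z i :=
    ⟨_, fun z => (L.toLinearMap.pi_apply_eq_sum_univ z).trans
      (Finset.sum_congr rfl fun i _ => mul_comm _ _)⟩
  have memLp_Z (i : κ) : MemLp (Z i) 2 P := by
    obtain ⟨v, hv⟩ := hgauss (Pi.single i 1)
    simp only [Pi.single_apply, ite_mul, one_mul, zero_mul, Finset.sum_ite_eq', Finset.mem_univ,
      if_true] at hv
    exact memLp_two_of_map_eq_gaussianReal (hZ i).aemeasurable hv
  have inner_eq : (fun θ => ∑ i, c i * inner ℝ (x i) θ) = fun θ => inner ℝ (∑ i, c i • x i) θ := by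
    simp only [sum_inner, real_inner_smul_left]
  obtain ⟨v, hv⟩ := hgauss c
  have variance_eq : v = ‖∑ i, c i • x i‖₊ ^ 2 := by
    have := integral_sq_of_map_eq_gaussianReal (by fun_prop) hv
    rw [integral_sum_mul_sq memLp_Z hx] at this
    exact NNReal.coe_injective (by simp [this])
  rw [charFunDual_eq_charFun_map_one, charFunDual_eq_charFun_map_one,
    Measure.map_map (by fun_prop) measurable_Z, Measure.map_map (by fun_prop) measurable_inner]
  simp only [Function.comp_def, hc]
  rw [hv, inner_eq, map_inner_stdGaussian, variance_eq]

end GaussianLaw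

section StationaryGaussian

lemma isHermitian_scaledW {Ω : Type*} (X : ℤ → ℤ → Ω → ℝ) (N : ℕ) (ω : Ω) :
    (scaledW X N ω).IsHermitian := by
  ext i j
  simp [scaledW, add_comm]

variable {Ω : Type*} [MeasurableSpace Ω] {P : Measure Ω} {X : ℤ → ℤ → Ω → ℝ}

/-- The covariance function `R(u, v) = E[X_{0,0} X_{u,v}]` of a stationary field. -/
def autocovariance (P : Measure Ω) (X : ℤ → ℤ → Ω → ℝ) (w : ℤ × ℤ) : ℝ :=
  ∫ ω, X 0 0 ω * X w.1 w.2 ω ∂P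

lemma integral_mul_eq_autocovariance (hX : StatGauss P X) (p q : ℤ × ℤ) :
    ∫ ω, X p.1 p.2 ω * X q.1 q.2 ω ∂P = autocovariance P X (q - p) := by
  rw [autocovariance, ← hX.stat p.1 p.2]
  simp only [Prod.fst_sub, Prod.snd_sub, add_sub_cancel]

lemma exists_map_sum_mul_eq_gaussianReal (hX : StatGauss P X) {κ : Type*} [Fintype κ]
    (site : κ → ℤ × ℤ) (c : κ → ℝ) :
    ∃ v, P.map (fun ω => ∑ i, c i * X (site i).1 (site i).2 ω) = gaussianReal 0 v := by
  obtain ⟨v, hv⟩ := hX.gauss (∑ i, Finsupp.single (site i) (c i))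
  refine ⟨v, hv ▸ congrArg (P.map ·) (funext fun ω => ?_)⟩
  have := map_sum (Finsupp.linearCombination ℝ fun p : ℤ × ℤ => X p.1 p.2 ω)
    (fun i => Finsupp.single (site i) (c i)) Finset.univ
  simp only [Finsupp.linearCombination_single, smul_eq_mul] at this
  rw [← this, Finsupp.linearCombination_apply, Finsupp.sum]
  rfl

lemma measurable_scaledW (hX : StatGauss P X) {N : ℕ} (i j : Fin N) :
    Measurable fun ω => scaledW X N ω i j :=
  ((hX.meas _ _).add (hX.meas _ _)).const_mul _

variable {E : Type*} [NormedAddCommGroup E] [InnerProductSpace ℝ E] [FiniteDimensional ℝ E]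
  [MeasurableSpace E] [BorelSpace E]

lemma integral_resolventTrace_scaledW [IsProbabilityMeasure P] (hX : StatGauss P X) {N : ℕ} (s : ℝ)
    {x : Fin N → Fin N → E} (hx : ∀ a b c d, inner ℝ (x a b) (x c d) =
      autocovariance P X ((c : ℤ) - a, (d : ℤ) - b)) :
    ∫ ω, resolventTrace s (scaledW X N ω) ∂P =
      ∫ θ, resolventTrace s (symmMatrix x θ) ∂stdGaussian E := by
  let site (q : Fin N × Fin N) : ℤ × ℤ := (((q.1 : ℕ) : ℤ) + 1, ((q.2 : ℕ) : ℤ) + 1)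
  let symmetrize (z : Fin N × Fin N → ℝ) : Matrix (Fin N) (Fin N) ℝ :=
    Matrix.of fun a b => (√N)⁻¹ * (z (a, b) + z (b, a))
  have law : P.map (fun ω q => X (site q).1 (site q).2 ω) =
      (stdGaussian E).map fun θ q => inner ℝ (x q.1 q.2) θ := by
    refine map_eq_map_inner_stdGaussian (x := fun q => x q.1 q.2) (fun q => hX.meas _ _)
      (exists_map_sum_mul_eq_gaussianReal hX site) fun p q => ?_
    rw [hx, integral_mul_eq_autocovariance hX (site p) (site q)]
    simp only [site, Prod.mk_sub_mk, add_sub_add_right_eq_sub]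
  have measurable_trace : Measurable fun z => resolventTrace s (symmetrize z) :=
    measurable_resolventTrace s fun i j => by simp only [symmetrize, Matrix.of_apply]; fun_prop
  have integral_law := congrArg (fun μ => ∫ z, resolventTrace s (symmetrize z) ∂μ) law
  rwa [integral_map (measurable_pi_lambda _ fun q => hX.meas _ _).aemeasurable
      measurable_trace.aestronglyMeasurable,
    integral_map (measurable_pi_lambda _ fun q => by fun_prop).aemeasurable
      measurable_trace.aestronglyMeasurable] at integral_law

end StationaryGaussian

section GaussianPerturbation

variable {E : Type*} [NormedAddCommGroup E] [InnerProductSpace ℝ E] {N : ℕ} {s : ℝ}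

lemma isHermitian_symmMatrix (y : Fin N → Fin N → E) (θ : E) : (symmMatrix y θ).IsHermitian := by
  ext i j
  simp [symmMatrix, add_comm]

lemma symmMatrix_add (y t : Fin N → Fin N → E) (θ : E) :
    symmMatrix (y + t) θ = symmMatrix y θ + symmMatrix t θ := by
  ext i j
  simp only [symmMatrix, Matrix.of_apply, Matrix.add_apply, Pi.add_apply, inner_add_left]
  ring

lemma sum_symmMatrix_sq_le (t : Fin N → Fin N → E) (θ : E) :
    ∑ i, ∑ j, symmMatrix t θ i j ^ 2 ≤ (N : ℝ)⁻¹ * (4 * ∑ i, ∑ j, inner ℝ (t i j) θ ^ 2) := by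
  have entry_le (i j : Fin N) : symmMatrix t θ i j ^ 2 ≤
      (N : ℝ)⁻¹ * (2 * inner ℝ (t i j) θ ^ 2 + 2 * inner ℝ (t j i) θ ^ 2) := by
    rw [symmMatrix, Matrix.of_apply, mul_pow, inv_pow, Real.sq_sqrt (by positivity), ← mul_add]
    gcongr
    exact add_sq_le
  calc ∑ i, ∑ j, symmMatrix t θ i j ^ 2
      ≤ ∑ i, ∑ j, (N : ℝ)⁻¹ * (2 * inner ℝ (t i j) θ ^ 2 + 2 * inner ℝ (t j i) θ ^ 2) := by
        gcongr; exact entry_le _ _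
    _ = (N : ℝ)⁻¹ * (2 * ∑ i, ∑ j, inner ℝ (t i j) θ ^ 2 +
          2 * ∑ i, ∑ j, inner ℝ (t j i) θ ^ 2) := by
        simp only [← Finset.mul_sum, Finset.sum_add_distrib]
    _ = (N : ℝ)⁻¹ * (4 * ∑ i, ∑ j, inner ℝ (t i j) θ ^ 2) := by
        rw [Finset.sum_comm (f := fun i j => inner ℝ (t j i) θ ^ 2)]
        ring

lemma symmMatrix_sum_smul {ι : Type*} [Fintype ι] (v : ι → E) (a b : ι → Fin N → ℝ) (θ : E) :
    symmMatrix (fun i j => ∑ r, (a r i * b r j) • v r) θ = ∑ r, ((√N)⁻¹ * inner ℝ (v r) θ) •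
      (Matrix.vecMulVec (a r) (b r) + Matrix.vecMulVec (b r) (a r)) := by
  ext i j
  simp only [symmMatrix, Matrix.of_apply, sum_inner, real_inner_smul_left, Matrix.sum_apply,
    Matrix.smul_apply, Matrix.add_apply, Matrix.vecMulVec_apply, smul_eq_mul,
    ← Finset.sum_add_distrib, Finset.mul_sum]
  exact Finset.sum_congr rfl fun r _ => by ring

variable [FiniteDimensional ℝ E] [MeasurableSpace E] [BorelSpace E]

lemma integrable_resolventTrace_symmMatrix (hs : 0 < s) (y : Fin N → Fin N → E) :
    Integrable (fun θ => resolventTrace s (symmMatrix y θ)) (stdGaussian E) := by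
  have measurable_trace : Measurable fun θ => resolventTrace s (symmMatrix y θ) :=
    measurable_resolventTrace s fun i j => by simp only [symmMatrix, Matrix.of_apply]; fun_prop
  exact .of_bound measurable_trace.aestronglyMeasurable 1 <| ae_of_all _ fun θ =>
    abs_resolventTrace_le_one hs (isHermitian_symmMatrix y θ)

lemma integral_mean_inner_sq_le {t : Fin N → Fin N → E} {κ : ℝ} (hκ : 0 ≤ κ)
    (ht : ∀ i j, ‖t i j‖ ^ 2 ≤ κ) :
    ∫ θ, (N : ℝ)⁻¹ * ((N : ℝ)⁻¹ * (4 * ∑ i, ∑ j, inner ℝ (t i j) θ ^ 2)) ∂stdGaussian E ≤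
      4 * κ := by
  simp only [integral_const_mul]
  rw [integral_finsetSum _ fun i _ => integrable_finsetSum _ fun j _ =>
    integrable_inner_sq_stdGaussian _]
  simp only [integral_finsetSum _ fun _ _ => integrable_inner_sq_stdGaussian _,
    integral_inner_sq_stdGaussian]
  calc (N : ℝ)⁻¹ * ((N : ℝ)⁻¹ * (4 * ∑ i, ∑ j, ‖t i j‖ ^ 2))
      ≤ (N : ℝ)⁻¹ * ((N : ℝ)⁻¹ * (4 * ∑ _ : Fin N, ∑ _ : Fin N, κ)) := by gcongr; exact ht _ _
    _ = (N * (N : ℝ)⁻¹) * (N * (N : ℝ)⁻¹) * (4 * κ) := by simp; ring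
    _ ≤ 1 * 1 * (4 * κ) := by gcongr <;> exact mul_inv_le_one
    _ = 4 * κ := by ring

lemma integral_sqrt_le_sqrt_integral {Ω : Type*} [MeasurableSpace Ω] {P : Measure Ω}
    [IsProbabilityMeasure P] {Z : Ω → ℝ} (hZ : Integrable Z P) (hZ_nonneg : 0 ≤ Z) :
    Integrable (fun ω => √(Z ω)) P ∧ ∫ ω, √(Z ω) ∂P ≤ √(∫ ω, Z ω ∂P) := by
  have integrable_sqrt : Integrable (fun ω => √(Z ω)) P := by
    refine (hZ.add (integrable_const 1)).mono'
      (continuous_sqrt.comp_aestronglyMeasurable hZ.1) (ae_of_all _ fun ω => ?_)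
    rw [Real.norm_of_nonneg (sqrt_nonneg _)]
    exact Real.sqrt_le_iff.2 ⟨add_nonneg (hZ_nonneg ω) zero_le_one, by
      nlinarith [show 0 ≤ Z ω from hZ_nonneg ω, Pi.add_apply Z (fun _ => (1 : ℝ)) ω]⟩
  exact ⟨integrable_sqrt, strictConcaveOn_sqrt.concaveOn.le_map_integral
    continuous_sqrt.continuousOn isClosed_Ici (ae_of_all _ hZ_nonneg) hZ integrable_sqrt⟩

lemma abs_integral_resolventTrace_add_sub_le (hs : 0 < s) (y : Fin N → Fin N → E)
    {t : Fin N → Fin N → E} {κ : ℝ} (hκ : 0 ≤ κ) (ht : ∀ i j, ‖t i j‖ ^ 2 ≤ κ) :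
    |∫ θ, resolventTrace s (symmMatrix (y + t) θ) ∂stdGaussian E -
        ∫ θ, resolventTrace s (symmMatrix y θ) ∂stdGaussian E| ≤ 2 * (√s)⁻¹ * √(4 * κ) := by
  let energy (θ : E) := (N : ℝ)⁻¹ * ((N : ℝ)⁻¹ * (4 * ∑ i, ∑ j, inner ℝ (t i j) θ ^ 2))
  have energy_nonneg : 0 ≤ energy := fun θ => by positivity
  have integrable_energy : Integrable energy (stdGaussian E) :=
    (((integrable_finsetSum _ fun i _ => integrable_finsetSum _ fun j _ =>
      integrable_inner_sq_stdGaussian _).const_mul _).const_mul _).const_mul _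
  have pointwise_le (θ : E) : ‖resolventTrace s (symmMatrix (y + t) θ) -
      resolventTrace s (symmMatrix y θ)‖ ≤ 2 * (√s)⁻¹ * √(energy θ) := by
    rw [Real.norm_eq_abs, abs_sub_comm]
    refine (abs_resolventTrace_sub_le_sqrt hs (isHermitian_symmMatrix _ _)
      (isHermitian_symmMatrix _ _)).trans ?_
    simp only [symmMatrix_add, Matrix.add_apply, add_sub_cancel_left]
    exact mul_le_mul_of_nonneg_left (Real.sqrt_le_sqrt (mul_le_mul_of_nonneg_left
      (sum_symmMatrix_sq_le t θ) (by positivity))) (by positivity)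
  obtain ⟨integrable_sqrt, jensen⟩ := integral_sqrt_le_sqrt_integral integrable_energy energy_nonneg
  rw [← integral_sub (integrable_resolventTrace_symmMatrix hs _)
    (integrable_resolventTrace_symmMatrix hs _)]
  refine (norm_integral_le_of_norm_le (integrable_sqrt.const_mul _)
    (ae_of_all _ pointwise_le)).trans ?_
  rw [integral_const_mul]
  gcongr
  exact jensen.trans (Real.sqrt_le_sqrt (integral_mean_inner_sq_le hκ ht))

lemma abs_integral_resolventTrace_add_sum_sub_le (hs : 0 < s) {ι : Type*} [Fintype ι]
    (y : Fin N → Fin N → E) (v : ι → E) {a b : ι → Fin N → ℝ} (ha : ∀ r i, |a r i| ≤ 1)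
    (hb : ∀ r i, |b r i| ≤ 1) :
    |∫ θ, resolventTrace s (symmMatrix (y + fun i j => ∑ r, (a r i * b r j) • v r) θ)
          ∂stdGaussian E - ∫ θ, resolventTrace s (symmMatrix y θ) ∂stdGaussian E| ≤
      (√N)⁻¹ * (4 * (√s)⁻¹ * ∑ r, (1 + ‖v r‖ ^ 2)) := by
  have abs_le_one_add_sq (z : ℝ) : |z| ≤ 1 + z ^ 2 := by
    nlinarith [sq_abs z, sq_nonneg (|z| - 1), abs_nonneg z]
  have pointwise_le (θ : E) :
      ‖resolventTrace s (symmMatrix (y + fun i j => ∑ r, (a r i * b r j) • v r) θ) -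
        resolventTrace s (symmMatrix y θ)‖ ≤
      (√N)⁻¹ * (4 * (√s)⁻¹ * ∑ r, (1 + inner ℝ (v r) θ ^ 2)) := by
    have sub_eq := sub_eq_of_eq_add' (symmMatrix_add y (fun i j => ∑ r, (a r i * b r j) • v r) θ)
    rw [symmMatrix_sum_smul] at sub_eq
    rw [Real.norm_eq_abs, abs_sub_comm, mul_left_comm, Finset.mul_sum]
    refine (abs_resolventTrace_sub_le_of_sub_eq_sum hs (isHermitian_symmMatrix _ _)
      (isHermitian_symmMatrix _ _) ha hb sub_eq).trans ?_
    gcongr with r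
    rw [abs_mul, abs_of_nonneg (by positivity : 0 ≤ (√(N : ℝ))⁻¹)]
    gcongr
    exact abs_le_one_add_sq _
  have integrable_sq (r : ι) : Integrable (fun θ => 1 + inner ℝ (v r) θ ^ 2) (stdGaussian E) :=
    (integrable_const _).add (integrable_inner_sq_stdGaussian _)
  rw [← integral_sub (integrable_resolventTrace_symmMatrix hs _)
    (integrable_resolventTrace_symmMatrix hs _)]
  refine (norm_integral_le_of_norm_le (((integrable_finsetSum _ fun r _ =>
    integrable_sq r).const_mul _).const_mul _) (ae_of_all _ pointwise_le)).trans_eq ?_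
  simp only [integral_const_mul, integral_finsetSum _ fun r _ => integrable_sq r,
    integral_add (integrable_const _) (integrable_inner_sq_stdGaussian _),
    integral_inner_sq_stdGaussian, integral_const, probReal_univ, one_smul]

end GaussianPerturbation

section MomentComparison

/-- The expected normalized trace of `W^{2j}` in the model with covariance `R`. The order zero is
set apart because `modelMoment` counts closed walks, of which the empty one has no base point. -/
def evenMoment (j N : ℕ) (R : ℤ × ℤ → ℝ) : ℝ := if j = 0 then 1 else modelMoment j N R

variable {N : ℕ} {s : ℝ} {R : ℤ × ℤ → ℝ}

section FiniteDimensional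

variable {E : Type*} [NormedAddCommGroup E] [InnerProductSpace ℝ E] [FiniteDimensional ℝ E]
  [MeasurableSpace E] [BorelSpace E] {y : Fin N → Fin N → E}

lemma integrable_mean_trace_symmMatrix_pow (j : ℕ) :
    Integrable (fun θ => (N : ℝ)⁻¹ * (symmMatrix y θ ^ (2 * j)).trace) (stdGaussian E) := by
  rcases Nat.eq_zero_or_pos j with rfl | hj
  · simp only [mul_zero, pow_zero, integrable_const]
  · exact (integrable_trace_symmMatrix_pow hj y).const_mul _

lemma integral_mean_trace_symmMatrix_pow (hN : 1 ≤ N)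
    (hy : ∀ a b c d, inner ℝ (y a b) (y c d) = R ((c : ℤ) - a, (d : ℤ) - b)) (j : ℕ) :
    ∫ θ, (N : ℝ)⁻¹ * (symmMatrix y θ ^ (2 * j)).trace ∂stdGaussian E = evenMoment j N R := by
  rw [evenMoment]
  split_ifs with hj
  · have : (N : ℝ) ≠ 0 := by positivity
    simp [hj, this]
  · exact integral_trace_symmMatrix_pow (Nat.one_le_iff_ne_zero.2 hj) y R hy

lemma abs_integral_resolventTrace_sub_sum_evenMoment_le (hN : 1 ≤ N) (hs : 0 < s)
    (hy : ∀ a b c d, inner ℝ (y a b) (y c d) = R ((c : ℤ) - a, (d : ℤ) - b)) (k : ℕ) :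
    |∫ θ, resolventTrace s (symmMatrix y θ) ∂stdGaussian E -
        ∑ j ∈ Finset.range k, (-s⁻¹) ^ j * evenMoment j N R| ≤ s⁻¹ ^ k * evenMoment k N R := by
  have integrable_term (j : ℕ) := integrable_mean_trace_symmMatrix_pow (y := y) j
  have sum_eq : ∑ j ∈ Finset.range k, (-s⁻¹) ^ j * evenMoment j N R =
      ∫ θ, ∑ j ∈ Finset.range k, (-s⁻¹) ^ j * ((N : ℝ)⁻¹ * (symmMatrix y θ ^ (2 * j)).trace)
        ∂stdGaussian E := by
    rw [integral_finsetSum _ fun j _ => (integrable_term j).const_mul _]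
    simp only [integral_const_mul, integral_mean_trace_symmMatrix_pow hN hy]
  rw [sum_eq, ← integral_sub (integrable_resolventTrace_symmMatrix hs y)
      (integrable_finsetSum _ fun j _ => (integrable_term j).const_mul _),
    ← integral_mean_trace_symmMatrix_pow hN hy, ← integral_const_mul]
  exact norm_integral_le_of_norm_le (f := fun θ => resolventTrace s (symmMatrix y θ) -
      ∑ j ∈ Finset.range k, (-s⁻¹) ^ j * ((N : ℝ)⁻¹ * (symmMatrix y θ ^ (2 * j)).trace))
    ((integrable_term k).const_mul _) (ae_of_all _ fun θ =>
      abs_resolventTrace_sub_sum_trace_pow_le hs (isHermitian_symmMatrix y θ) k)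

end FiniteDimensional

lemma abs_integral_resolventTrace_scaledW_sub_sum_evenMoment_le {Ω : Type*} [MeasurableSpace Ω]
    {P : Measure Ω} [IsProbabilityMeasure P] {X : ℤ → ℤ → Ω → ℝ} (hX : StatGauss P X)
    {H : Type*} [NormedAddCommGroup H] [InnerProductSpace ℝ H] (hN : 1 ≤ N) (hs : 0 < s)
    {ι : Type*} [Fintype ι] {y t : Fin N → Fin N → H} {v : ι → H} {a b : ι → Fin N → ℝ} {κ : ℝ}
    (hκ : 0 ≤ κ) (ha : ∀ r i, |a r i| ≤ 1) (hb : ∀ r i, |b r i| ≤ 1) (ht : ∀ i j, ‖t i j‖ ^ 2 ≤ κ)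
    {x : Fin N → Fin N → H} (hxy : x = y + t + fun i j => ∑ r, (a r i * b r j) • v r)
    (hx : ∀ a b c d, inner ℝ (x a b) (x c d) = autocovariance P X ((c : ℤ) - a, (d : ℤ) - b))
    (hy : ∀ a b c d, inner ℝ (y a b) (y c d) = R ((c : ℤ) - a, (d : ℤ) - b)) (k : ℕ) :
    |∫ ω, resolventTrace s (scaledW X N ω) ∂P -
        ∑ j ∈ Finset.range k, (-s⁻¹) ^ j * evenMoment j N R| ≤
      s⁻¹ ^ k * evenMoment k N R + 2 * (√s)⁻¹ * √(4 * κ) +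
        (√N)⁻¹ * (4 * (√s)⁻¹ * ∑ r, (1 + ‖v r‖ ^ 2)) := by
  subst hxy
  -- Only finitely many vectors occur, so the standard Gaussian of their span is available.
  let S := Submodule.span ℝ ((Set.range fun q : Fin N × Fin N => y q.1 q.2) ∪
    (Set.range fun q : Fin N × Fin N => t q.1 q.2) ∪ Set.range v)
  have : FiniteDimensional ℝ S := FiniteDimensional.span_of_finite ℝ
    (((Set.finite_range _).union (Set.finite_range _)).union (Set.finite_range _))
  let : MeasurableSpace H := borel H
  have : BorelSpace H := ⟨rfl⟩
  let y' (i j : Fin N) : S := ⟨y i j, Submodule.subset_span (.inl (.inl ⟨(i, j), rfl⟩))⟩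
  let t' (i j : Fin N) : S := ⟨t i j, Submodule.subset_span (.inl (.inr ⟨(i, j), rfl⟩))⟩
  let v' (r : ι) : S := ⟨v r, Submodule.subset_span (.inr ⟨r, rfl⟩)⟩
  let x' : Fin N → Fin N → S := y' + t' + fun i j => ∑ r, (a r i * b r j) • v' r
  have law := integral_resolventTrace_scaledW hX s (x := x') fun a b c d => by
    rw [← hx, Submodule.coe_inner]
    simp only [x', y', t', v', Pi.add_apply, Submodule.coe_add, Submodule.coe_sum,
      Submodule.coe_smul]
  have rank_le := abs_integral_resolventTrace_add_sum_sub_le hs (y' + t') v' ha hb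
  have hs_le := abs_integral_resolventTrace_add_sub_le hs y' (t := t') hκ ht
  have bracket := abs_integral_resolventTrace_sub_sum_evenMoment_le hN hs (y := y') hy k
  rw [law]
  refine (abs_sub_le _ _ _).trans ((add_le_add rank_le <|
    (abs_sub_le _ _ _).trans (add_le_add hs_le bracket)).trans_eq ?_)
  simp only [v', Submodule.coe_norm]
  ring

end MomentComparison

/-! ### Spectral measures -/

section SpecBox

lemma measurableSet_specBox : MeasurableSet specBox :=
  measurableSet_Ioc.prod measurableSet_Ioc

instance isFiniteMeasure_restrict_specBox : IsFiniteMeasure (volume.restrict specBox) := by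
  refine ⟨?_⟩
  rw [Measure.restrict_apply_univ, specBox, Measure.volume_eq_prod, Measure.prod_prod,
    Real.volume_Ioc]
  exact ENNReal.mul_lt_top ENNReal.ofReal_lt_top ENNReal.ofReal_lt_top

lemma ae_neg_mem_specBox : ∀ᵐ q ∂volume.restrict specBox, -q ∈ specBox := by
  have interior_ae_eq : (Set.Ioo (-π) π ×ˢ Set.Ioo (-π) π : Set (ℝ × ℝ)) =ᵐ[volume] specBox :=
    Measure.set_prod_ae_eq Ioo_ae_eq_Ioc Ioo_ae_eq_Ioc
  rw [← Measure.restrict_congr_set interior_ae_eq]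
  filter_upwards [ae_restrict_mem (measurableSet_Ioo.prod measurableSet_Ioo)] with q hq
  obtain ⟨⟨h₁, h₂⟩, h₃, h₄⟩ := hq
  exact ⟨⟨neg_lt_neg h₂, (neg_lt.1 h₁).le⟩, ⟨neg_lt_neg h₄, (neg_lt.1 h₃).le⟩⟩

lemma norm_planeExp (w : ℤ × ℤ) (q : ℝ × ℝ) : ‖planeExp w q‖ = 1 := by
  rw [planeExp, mul_comm, Complex.norm_exp_ofReal_mul_I]

lemma integrable_planeExp {μ : Measure (ℝ × ℝ)} [IsFiniteMeasure μ] (w : ℤ × ℤ) :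
    Integrable (planeExp w) μ :=
  .of_bound continuous_planeExp.aestronglyMeasurable 1 (ae_of_all _ fun q => (norm_planeExp w q).le)

lemma setIntegral_specBox_planeExp (w : ℤ × ℤ) :
    ∫ q in specBox, planeExp w q = if w = 0 then (((2 * π) ^ 2 : ℝ) : ℂ) else 0 := by
  have planeExp_eq (q : ℝ × ℝ) : planeExp w q =
      Complex.exp (Complex.I * ((w.1 * q.1 : ℝ) : ℂ)) *
        Complex.exp (Complex.I * ((w.2 * q.2 : ℝ) : ℂ)) := by
    rw [planeExp, ← Complex.exp_add, ← mul_add, Complex.ofReal_add]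
  simp_rw [planeExp_eq]
  rw [specBox, Measure.volume_eq_prod,
    setIntegral_prod_mul (fun x : ℝ => Complex.exp (Complex.I * ((w.1 * x : ℝ) : ℂ)))
      fun x : ℝ => Complex.exp (Complex.I * ((w.2 * x : ℝ) : ℂ)),
    ← integral_Icc_eq_integral_Ioc, ← integral_Icc_eq_integral_Ioc, integral_Icc_exp_int_mul,
    integral_Icc_exp_int_mul]
  rcases w with ⟨a, b⟩
  by_cases ha : a = 0 <;> by_cases hb : b = 0 <;> simp [ha, hb, pow_two]

end SpecBox

section Torus

/-- The projection of the plane to the torus `(ℝ / 2πℤ)²`, rescaled to Mathlib's `(ℝ / ℤ)²`. -/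
def torusProj (q : ℝ × ℝ) : UnitAddTorus (Fin 2) :=
  ![((q.1 / (2 * π) : ℝ) : UnitAddCircle), ((q.2 / (2 * π) : ℝ) : UnitAddCircle)]

/-- The measurable section of `torusProj` with values in `specBox`. -/
def torusSection (z : UnitAddTorus (Fin 2)) : ℝ × ℝ :=
  (2 * π * AddCircle.measurableEquivIoc 1 (-(1 / 2)) (z 0),
    2 * π * AddCircle.measurableEquivIoc 1 (-(1 / 2)) (z 1))

lemma continuous_torusProj : Continuous torusProj := by
  refine continuous_pi fun i => ?_
  fin_cases i
  · exact (AddCircle.continuous_mk' 1).comp (continuous_fst.div_const (2 * π))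
  · exact (AddCircle.continuous_mk' 1).comp (continuous_snd.div_const (2 * π))

lemma measurable_torusSection : Measurable torusSection := by
  have coord (i : Fin 2) : Measurable fun z : UnitAddTorus (Fin 2) =>
      (AddCircle.measurableEquivIoc 1 (-(1 / 2)) (z i) : ℝ) :=
    (AddCircle.measurableEquivIoc 1 (-(1 / 2))).measurable.subtype_val.comp (measurable_pi_apply i)
  exact ((coord 0).const_mul _).prodMk ((coord 1).const_mul _)

lemma two_pi_mul_measurableEquivIoc_div {x : ℝ} (hx : x ∈ Set.Ioc (-π) π) :
    2 * π * AddCircle.measurableEquivIoc 1 (-(1 / 2)) ((x / (2 * π) : ℝ) : UnitAddCircle) = x := by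
  have mem_Ioc : x / (2 * π) ∈ Set.Ioc (-(1 / 2) : ℝ) (-(1 / 2) + 1) := by
    rw [Set.mem_Ioc, lt_div_iff₀ two_pi_pos, div_le_iff₀ two_pi_pos]
    constructor <;> linarith [hx.1, hx.2]
  change 2 * π * (AddCircle.equivIoc 1 (-(1 / 2)) ((x / (2 * π) : ℝ) : UnitAddCircle) : ℝ) = x
  rw [AddCircle.equivIoc_coe_eq (p := (1 : ℝ)) mem_Ioc, mul_div_cancel₀ x two_pi_pos.ne']

lemma torusSection_torusProj {q : ℝ × ℝ} (hq : q ∈ specBox) : torusSection (torusProj q) = q :=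
  Prod.ext (two_pi_mul_measurableEquivIoc_div hq.1) (two_pi_mul_measurableEquivIoc_div hq.2)

lemma torusProj_neg (q : ℝ × ℝ) : torusProj (-q) = -torusProj q := by
  funext i
  fin_cases i <;> simp [torusProj, neg_div]

lemma mFourier_torusProj (n : Fin 2 → ℤ) (q : ℝ × ℝ) :
    UnitAddTorus.mFourier n (torusProj q) = planeExp (n 0, n 1) q := by
  have pi_ne_zero : (π : ℂ) ≠ 0 := Complex.ofReal_ne_zero.2 Real.pi_ne_zero
  simp only [UnitAddTorus.mFourier, ContinuousMap.coe_mk, Fin.prod_univ_two, torusProj,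
    Matrix.cons_val_zero, Matrix.cons_val_one, fourier_coe_apply, planeExp]
  rw [← Complex.exp_add]
  congr 1
  push_cast
  field_simp

lemma integral_mFourier_map_torusProj (μ : Measure (ℝ × ℝ)) (n : Fin 2 → ℤ) :
    ∫ z, UnitAddTorus.mFourier n z ∂μ.map torusProj = ∫ q, planeExp (n 0, n 1) q ∂μ := by
  rw [integral_map continuous_torusProj.aemeasurable
    (UnitAddTorus.mFourier n).continuous.aestronglyMeasurable]
  simp_rw [mFourier_torusProj]

end Torus

section FourierUniqueness

variable {d : Type*} [Fintype d] {μ μ' : Measure (UnitAddTorus d)} [IsFiniteMeasure μ]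

lemma ext_of_integral_mFourier_eq [IsFiniteMeasure μ']
    (h : ∀ n, ∫ z, UnitAddTorus.mFourier n z ∂μ = ∫ z, UnitAddTorus.mFourier n z ∂μ') :
    μ = μ' := by
  have integral_eq {p : C(UnitAddTorus d, ℂ)} (hp : p ∈ UnitAddTorus.mFourierSubalgebra d) :
      ∫ z, p z ∂μ = ∫ z, p z ∂μ' := by
    have integrable (q : C(UnitAddTorus d, ℂ)) (ρ : Measure (UnitAddTorus d))
        [IsFiniteMeasure ρ] : Integrable q ρ :=
      q.continuous.integrable_of_hasCompactSupport (HasCompactSupport.of_compactSpace _)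
    replace hp : p ∈ Submodule.span ℂ (Set.range (UnitAddTorus.mFourier (d := d))) := by
      rwa [← UnitAddTorus.mFourierSubalgebra_coe]
    induction hp using Submodule.span_induction with
    | mem q hq => obtain ⟨n, rfl⟩ := hq; exact h n
    | zero => simp
    | add q r _ _ hq hr =>
      simp_rw [ContinuousMap.add_apply]
      rw [integral_add (integrable q μ) (integrable r μ),
        integral_add (integrable q μ') (integrable r μ'), hq, hr]
    | smul a q _ hq =>
      simp_rw [ContinuousMap.smul_apply]
      rw [integral_smul, integral_smul, hq]
  refine ext_of_forall_mem_subalgebra_integral_eq_of_polish (𝕜 := ℂ)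
    (A := (UnitAddTorus.mFourierSubalgebra d).comap
      (BoundedContinuousFunction.toContinuousMapStarₐ ℂ)) ?_ fun p hp => integral_eq hp
  intro z z' hz
  obtain ⟨_, ⟨p, hp, rfl⟩, hne⟩ := UnitAddTorus.mFourierSubalgebra_separatesPoints hz
  exact ⟨p, ⟨p, ⟨BoundedContinuousFunction.mkOfCompact p, hp, rfl⟩, rfl⟩, hne⟩

lemma map_neg_eq_self_of_im_integral_mFourier_eq_zero
    (h : ∀ n, (∫ z, UnitAddTorus.mFourier n z ∂μ).im = 0) : μ.map (fun z => -z) = μ := by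
  have mFourier_apply_neg (n : d → ℤ) (z : UnitAddTorus d) :
      UnitAddTorus.mFourier n (-z) = starRingEnd ℂ (UnitAddTorus.mFourier n z) := by
    rw [← UnitAddTorus.mFourier_neg]
    simp [UnitAddTorus.mFourier]
  refine ext_of_integral_mFourier_eq fun n => ?_
  rw [integral_map measurable_neg.aemeasurable
    (UnitAddTorus.mFourier n).continuous.aestronglyMeasurable]
  simp_rw [mFourier_apply_neg]
  rw [integral_conj, Complex.conj_eq_iff_im.2 (h n)]

end FourierUniqueness

section EvenDensity

lemma withDensity_comp_map {α β : Type*} [MeasurableSpace α] [MeasurableSpace β] {μ : Measure α}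
    {φ : α → β} {F : β → ENNReal} (hF : Measurable F) (hφ : Measurable φ) :
    (μ.withDensity (F ∘ φ)).map φ = (μ.map φ).withDensity F := by
  ext s hs
  rw [Measure.map_apply hφ hs, withDensity_apply _ (hφ hs), withDensity_apply _ hs,
    setLIntegral_map hs hF hφ]
  rfl

lemma ae_eq_comp_neg_of_map_neg_eq_self {G : Type*} [MeasurableSpace G] [InvolutiveNeg G]
    [MeasurableNeg G] {μ σ l : Measure G} [SigmaFinite l] {F : G → ENNReal} (hF : Measurable F)
    (hσ : σ ⟂ₘ l) (hμ : μ = σ + l.withDensity F) (hμ_neg : μ.map (fun z => -z) = μ)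
    (hl_neg : l.map (fun z => -z) = l) : F =ᵐ[l] fun z => F (-z) := by
  have hF_neg : Measurable fun z => F (-z) := hF.comp measurable_neg
  have density_neg : (l.withDensity F).map (fun z => -z) = l.withDensity fun z => F (-z) := by
    have := withDensity_comp_map (μ := l) hF_neg measurable_neg
    rwa [hl_neg, show (fun z => F (-z)) ∘ (fun z => -z) = F by ext; simp] at this
  have singular_neg : σ.map (fun z => -z) ⟂ₘ l := by
    obtain ⟨s, hs, hσs, hls⟩ := hσ
    refine ⟨-s, hs.neg, ?_, ?_⟩
    · rw [Measure.map_apply measurable_neg hs.neg]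
      simpa using hσs
    · rw [← hl_neg, Measure.map_apply measurable_neg hs.neg.compl]
      simpa using hls
  refine (Measure.eq_rnDeriv hF hσ hμ).trans (Measure.eq_rnDeriv hF_neg singular_neg ?_).symm
  rw [← density_neg, ← Measure.map_add _ _ measurable_neg, ← hμ, hμ_neg]

variable {Ω : Type*} [MeasurableSpace Ω] {P : Measure Ω} {X : ℤ → ℤ → Ω → ℝ}
  {ν νd : Measure (ℝ × ℝ)} {f : ℝ × ℝ → ℝ}

lemma map_torusProj_mutuallySingular {s : Set (ℝ × ℝ)} (hs : s.Countable) (hνd : νd sᶜ = 0) :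
    νd.map torusProj ⟂ₘ (volume.restrict specBox).map torusProj := by
  have measurableSet_image : MeasurableSet (torusProj '' s) := (hs.image _).measurableSet
  refine Measure.MutuallySingular.symm ⟨torusProj '' s, measurableSet_image, ?_, ?_⟩
  · rw [Measure.map_apply continuous_torusProj.measurable measurableSet_image,
      Measure.restrict_apply' measurableSet_specBox]
    refine measure_mono_null (t := torusSection '' (torusProj '' s)) ?_
      (((hs.image _).image _).measure_zero volume)
    rintro q ⟨hqs, hq⟩
    exact ⟨torusProj q, hqs, torusSection_torusProj hq⟩
  · rw [Measure.map_apply continuous_torusProj.measurable measurableSet_image.compl]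
    exact measure_mono_null (fun q hq hqs => hq ⟨q, hqs, rfl⟩) hνd

lemma map_torusProj_withDensity {F : ℝ × ℝ → ENNReal} (hF : Measurable F) :
    ((volume.restrict specBox).withDensity F).map torusProj =
      ((volume.restrict specBox).map torusProj).withDensity (F ∘ torusSection) := by
  rw [← withDensity_comp_map (hF.comp measurable_torusSection) continuous_torusProj.measurable]
  congr 1
  refine withDensity_congr_ae ?_
  filter_upwards [ae_restrict_mem measurableSet_specBox] with q hq
  simp only [Function.comp_apply, torusSection_torusProj hq]

lemma SpectralDecomp.density_neg_ae_eq (hν : SpectralDecomp P X ν νd f) :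
    ∀ᵐ q ∂volume.restrict specBox, f (-q) = f q := by
  have := hν.finite
  obtain ⟨s, hs, hνd⟩ := hν.discrete
  have hF : Measurable fun q => ENNReal.ofReal (f q) := hν.f_meas.ennreal_ofReal
  have map_ν_eq : ν.map torusProj = νd.map torusProj +
      ((volume.restrict specBox).map torusProj).withDensity
        ((fun q => ENNReal.ofReal (f q)) ∘ torusSection) := by
    conv_lhs => rw [hν.decomp]
    rw [Measure.map_add _ _ continuous_torusProj.measurable, map_torusProj_withDensity hF, add_comm]
  have ν_neg : (ν.map torusProj).map (fun z => -z) = ν.map torusProj := by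
    refine map_neg_eq_self_of_im_integral_mFourier_eq_zero fun n => ?_
    rw [integral_mFourier_map_torusProj]
    exact (congrArg Complex.im (hν.herglotz (n 0) (n 1))).trans (Complex.ofReal_im _)
  have box_neg : ((volume.restrict specBox).map torusProj).map (fun z => -z) =
      (volume.restrict specBox).map torusProj := by
    refine map_neg_eq_self_of_im_integral_mFourier_eq_zero fun n => ?_
    rw [integral_mFourier_map_torusProj, setIntegral_specBox_planeExp]
    split_ifs <;> simp only [Complex.ofReal_im, Complex.zero_im]
  have even_on_torus := ae_eq_comp_neg_of_map_neg_eq_self (hF.comp measurable_torusSection)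
    (map_torusProj_mutuallySingular hs hνd) map_ν_eq ν_neg box_neg
  filter_upwards [ae_of_ae_map continuous_torusProj.aemeasurable even_on_torus,
    ae_restrict_mem measurableSet_specBox, ae_neg_mem_specBox] with q h_even hq hq_neg
  rw [← torusProj_neg, Function.comp_apply, Function.comp_apply, torusSection_torusProj hq,
    torusSection_torusProj hq_neg,
    ENNReal.ofReal_eq_ofReal_iff (hν.f_nonneg _) (hν.f_nonneg _)] at h_even
  exact h_even.symm

end EvenDensity

/-! ### Trigonometric approximation -/

section TrigApproximation

lemma exists_seq_continuousMap_abs_le_tendsto_ae {α : Type*} [TopologicalSpace α] [NormalSpace α]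
    [MeasurableSpace α] [BorelSpace α] {μ : Measure α} [IsFiniteMeasure μ] [μ.WeaklyRegular]
    {G : α → ℝ} {B : ℝ} (hG : AEStronglyMeasurable G μ) (hB : ∀ z, |G z| ≤ B) :
    ∃ u : ℕ → C(α, ℝ), (∀ i z, |u i z| ≤ B) ∧
      ∀ᵐ z ∂μ, Tendsto (fun i => u i z) atTop (nhds (G z)) := by
  have hG_memLp : MemLp G 1 μ := .of_bound hG B (ae_of_all _ hB)
  choose v hv hv_memLp using fun i : ℕ =>
    hG_memLp.exists_boundedContinuous_eLpNorm_sub_le ENNReal.one_ne_top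
      (ε := ((i : ENNReal) + 1)⁻¹) (by simp)
  have error_tendsto : Tendsto (fun i => eLpNorm (⇑(v i) - G) 1 μ) atTop (nhds 0) := by
    refine tendsto_of_tendsto_of_tendsto_of_le_of_le tendsto_const_nhds ?_ (fun _ => zero_le)
      fun i => (eLpNorm_sub_comm _ _ _ _).trans_le (hv i)
    simpa using (tendsto_add_atTop_iff_nat 1).2 ENNReal.tendsto_inv_nat_nhds_zero
  obtain ⟨ns, -, hns⟩ := (tendstoInMeasure_of_tendsto_eLpNorm one_ne_zero
    (fun i => (hv_memLp i).1) hG error_tendsto).exists_seq_tendsto_ae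
  refine ⟨fun i => ⟨fun z => max (-B) (min B (v (ns i) z)), by fun_prop⟩, fun i z => ?_, ?_⟩
  · have hB_nonneg : 0 ≤ B := (abs_nonneg _).trans (hB z)
    exact abs_le.2 ⟨le_max_left _ _, max_le (neg_le_self hB_nonneg) (min_le_left _ _)⟩
  · filter_upwards [hns] with z hz
    have clamp_G : max (-B) (min B (G z)) = G z := by
      rw [min_eq_right (abs_le.1 (hB z)).2, max_eq_right (abs_le.1 (hB z)).1]
    rw [← clamp_G]
    exact tendsto_const_nhds.max (tendsto_const_nhds.min hz)

lemma exists_seq_mem_mFourierSubalgebra_tendsto_ae {d : Type*} [Fintype d]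
    {μ : Measure (UnitAddTorus d)} [IsFiniteMeasure μ] {G : UnitAddTorus d → ℝ} {B : ℝ}
    (hG : AEStronglyMeasurable G μ) (hB : ∀ z, |G z| ≤ B) :
    ∃ p : ℕ → C(UnitAddTorus d, ℂ), (∀ i, p i ∈ UnitAddTorus.mFourierSubalgebra d) ∧
      (∀ i z, ‖p i z‖ ≤ B + 1) ∧ ∀ᵐ z ∂μ, Tendsto (fun i => p i z) atTop (nhds (G z : ℂ)) := by
  obtain ⟨u, hu_le, hu_tendsto⟩ := exists_seq_continuousMap_abs_le_tendsto_ae hG hB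
  let uc (i : ℕ) : C(UnitAddTorus d, ℂ) := (⟨_, Complex.continuous_ofReal⟩ : C(ℝ, ℂ)).comp (u i)
  have dense (q : C(UnitAddTorus d, ℂ)) :
      q ∈ closure (UnitAddTorus.mFourierSubalgebra d : Set C(UnitAddTorus d, ℂ)) := by
    rw [← StarSubalgebra.topologicalClosure_coe, UnitAddTorus.mFourierSubalgebra_closure_eq_top]
    trivial
  choose p hp_mem hp_dist using fun i : ℕ =>
    Metric.mem_closure_iff.1 (dense (uc i)) (1 / ((i : ℝ) + 1)) (by positivity)
  have norm_sub_le (i : ℕ) (z : UnitAddTorus d) : ‖p i z - u i z‖ ≤ 1 / ((i : ℝ) + 1) := by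
    rw [← dist_eq_norm, dist_comm]
    exact ((ContinuousMap.dist_apply_le_dist (f := uc i) z).trans_lt (hp_dist i)).le
  refine ⟨p, hp_mem, fun i z => ?_, ?_⟩
  · have norm_u_le : ‖(u i z : ℂ)‖ ≤ B := (Complex.norm_real _).trans_le (hu_le i z)
    have one_div_le : 1 / ((i : ℝ) + 1) ≤ 1 :=
      div_le_one_of_le₀ (le_add_of_nonneg_left i.cast_nonneg) (by positivity)
    linarith [norm_le_insert' (p i z) (u i z : ℂ), norm_sub_le i z]
  · filter_upwards [hu_tendsto] with z hz
    have sub_tendsto := squeeze_zero_norm (norm_sub_le · z) tendsto_one_div_add_atTop_nhds_zero_nat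
    simpa using sub_tendsto.add ((Complex.continuous_ofReal.tendsto _).comp hz)

end TrigApproximation

section SpectralCov

/-- The covariance of a stationary process on `ℤ²` with spectral density `h` on `specBox`. -/
def spectralCov (h : ℝ × ℝ → ℝ) (w : ℤ × ℤ) : ℝ :=
  ∫ q in specBox, (planeExp w q).re * h q

lemma spectralCov_neg (h : ℝ × ℝ → ℝ) (w : ℤ × ℤ) : spectralCov h (-w) = spectralCov h w := by
  simp_rw [spectralCov, ← conj_planeExp, Complex.conj_re]

variable {h : ℝ × ℝ → ℝ} {n : ℕ} {a : ℤ × ℤ → ℂ}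

lemma spectralCov_eq_coeff (hh : ∀ q, (h q : ℂ) = ∑ w ∈ freqBox n, a w * planeExp w q)
    (w : ℤ × ℤ) :
    spectralCov h w = if -w ∈ freqBox n then (2 * π) ^ 2 * (a (-w)).re else 0 := by
  have integrand_eq (q : ℝ × ℝ) : (planeExp w q).re * h q =
      (∑ w' ∈ freqBox n, a w' * planeExp (w' + w) q).re := by
    simp_rw [planeExp_add, ← mul_assoc]
    rw [← Finset.sum_mul, ← hh, Complex.re_ofReal_mul, mul_comm]
  have integrable (w' : ℤ × ℤ) :
      Integrable (fun q => a w' * planeExp (w' + w) q) (volume.restrict specBox) :=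
    (integrable_planeExp _).const_mul _
  have re_integral := integral_re (𝕜 := ℂ) (integrable_finsetSum (freqBox n) fun w' _ =>
    integrable w')
  simp_rw [RCLike.re_to_complex] at re_integral
  simp_rw [spectralCov, integrand_eq]
  rw [re_integral, integral_finsetSum _ fun w' _ => integrable w']
  simp_rw [integral_const_mul, setIntegral_specBox_planeExp, ← eq_neg_iff_add_eq_zero]
  rw [← Finset.sum_ite_eq' (freqBox n) (-w) fun w' => (2 * π) ^ 2 * (a w').re, Complex.re_sum]
  refine Finset.sum_congr rfl fun w' _ => ?_
  split_ifs
  · rw [Complex.re_mul_ofReal, mul_comm]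
  · rw [mul_zero, Complex.zero_re]

lemma trigDensity_spectralCov (hh : ∀ q, (h q : ℂ) = ∑ w ∈ freqBox n, a w * planeExp w q)
    (q : ℝ × ℝ) : trigDensity n (spectralCov h) q = (h q + h (-q)) / 2 := by
  have h_add_neg : h q + h (-q) =
      2 * ∑ w ∈ freqBox n, (a w).re * Real.cos (w.1 * q.1 + w.2 * q.2) := by
    rw [← Complex.ofReal_re (h q + h (-q)), Complex.ofReal_add, hh, hh, ← Finset.sum_add_distrib,
      Complex.re_sum, Finset.mul_sum]
    refine Finset.sum_congr rfl fun w _ => ?_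
    rw [planeExp_neg_right, ← conj_planeExp, ← mul_add, Complex.add_conj, planeExp,
      mul_comm Complex.I, Complex.exp_ofReal_mul_I_re, Complex.re_mul_ofReal]
    ring
  have cov_eq : ∑ w ∈ freqBox n, spectralCov h w * Real.cos (w.1 * q.1 + w.2 * q.2) =
      ∑ w ∈ freqBox n, (2 * π) ^ 2 * ((a w).re * Real.cos (w.1 * q.1 + w.2 * q.2)) := by
    refine Finset.sum_congr rfl fun w hw => ?_
    rw [← spectralCov_neg, spectralCov_eq_coeff hh, neg_neg, if_pos hw, mul_assoc]
  rw [trigDensity, cov_eq, ← Finset.mul_sum, inv_mul_cancel_left₀ (by positivity), h_add_neg,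
    mul_div_cancel_left₀ _ two_ne_zero]

lemma exists_subset_freqBox (s : Finset (ℤ × ℤ)) : ∃ n, s ⊆ freqBox n := by
  refine ⟨s.sup fun w => max w.1.natAbs w.2.natAbs, fun w hw => ?_⟩
  have le_sup := Finset.le_sup (f := fun w : ℤ × ℤ => max w.1.natAbs w.2.natAbs) hw
  simp only [freqBox, Finset.mem_product, Finset.mem_Icc]
  omega

lemma exists_eq_sum_planeExp {p : C(UnitAddTorus (Fin 2), ℂ)}
    (hp : p ∈ UnitAddTorus.mFourierSubalgebra (Fin 2)) :
    ∃ (n : ℕ) (a : ℤ × ℤ → ℂ), ∀ q, p (torusProj q) = ∑ w ∈ freqBox n, a w * planeExp w q := by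
  replace hp : p ∈ Submodule.span ℂ (Set.range UnitAddTorus.mFourier) := by
    rwa [← UnitAddTorus.mFourierSubalgebra_coe]
  obtain ⟨c, rfl⟩ := Finsupp.mem_span_range_iff_exists_finsupp.1 hp
  let a : ℤ × ℤ →₀ ℂ := c.equivMapDomain (finTwoArrowEquiv ℤ)
  obtain ⟨n, hn⟩ := exists_subset_freqBox a.support
  refine ⟨n, a, fun q => ?_⟩
  rw [← Finsupp.sum_of_support_subset a hn (fun w b => b * planeExp w q) fun w _ => zero_mul _,
    Finsupp.sum_equivMapDomain, Finsupp.sum, Finsupp.sum, ContinuousMap.sum_apply]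
  refine Finset.sum_congr rfl fun k _ => ?_
  rw [ContinuousMap.smul_apply, mFourier_torusProj, smul_eq_mul]
  rfl

lemma exists_trigDensity_spectralCov_norm_sq {p : C(UnitAddTorus (Fin 2), ℂ)}
    (hp : p ∈ UnitAddTorus.mFourierSubalgebra (Fin 2)) :
    ∃ n, (∀ w, w ∉ freqBox n → spectralCov (fun q => ‖p (torusProj q)‖ ^ 2) w = 0) ∧
      ∀ q, trigDensity n (spectralCov fun q => ‖p (torusProj q)‖ ^ 2) q =
        (‖p (torusProj q)‖ ^ 2 + ‖p (torusProj (-q))‖ ^ 2) / 2 := by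
  obtain ⟨n, a, h_eq⟩ := exists_eq_sum_planeExp (mul_mem hp (star_mem hp))
  have norm_sq_eq (q : ℝ × ℝ) : ((‖p (torusProj q)‖ ^ 2 : ℝ) : ℂ) =
      ∑ w ∈ freqBox n, a w * planeExp w q := by
    rw [← h_eq, ContinuousMap.mul_apply, ContinuousMap.star_apply, ← starRingEnd_apply,
      Complex.mul_conj, Complex.normSq_eq_norm_sq]
  refine ⟨n, fun w hw => ?_, trigDensity_spectralCov norm_sq_eq⟩
  rw [spectralCov_eq_coeff norm_sq_eq, if_neg (mt neg_mem_freqBox.1 hw)]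

end SpectralCov

/-! ### Coupling through the spectral representation -/

section Modulation

variable {μ : Measure (ℝ × ℝ)}

lemma memLp_top_planeExp (w : ℤ × ℤ) : MemLp (planeExp w) ⊤ μ :=
  memLp_top_of_bound continuous_planeExp.aestronglyMeasurable 1
    (ae_of_all _ fun q => (norm_planeExp w q).le)

/-- Multiplication by the character `planeExp w`, as an additive map of `L²(μ)`. -/
def modulate (w : ℤ × ℤ) : Lp ℂ 2 μ →+ Lp ℂ 2 μ :=
  AddMonoidHom.mk' (fun φ => (memLp_top_planeExp w).toLp • φ) fun φ ψ => Lp.add_smul _ φ ψ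

lemma coeFn_modulate (w : ℤ × ℤ) (φ : Lp ℂ 2 μ) :
    modulate w φ =ᵐ[μ] fun q => planeExp w q * φ q := by
  filter_upwards [Lp.coeFn_lpSMul (r := 2) (memLp_top_planeExp w).toLp φ,
    (memLp_top_planeExp (μ := μ) w).coeFn_toLp] with q h_smul h_toLp
  rw [← h_toLp]
  exact h_smul

lemma inner_modulate (w w' : ℤ × ℤ) {u : ℝ × ℝ → ℂ} (hu : MemLp u 2 μ) :
    inner ℝ (modulate w hu.toLp) (modulate w' hu.toLp) =
      ∫ q, (planeExp (w' - w) q).re * ‖u q‖ ^ 2 ∂μ := by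
  rw [L2.inner_def]
  refine integral_congr_ae ?_
  filter_upwards [coeFn_modulate w hu.toLp, coeFn_modulate w' hu.toLp, hu.coeFn_toLp]
    with q hw hw' h_toLp
  rw [hw, hw', h_toLp, Complex.inner, map_mul, conj_planeExp, sub_eq_add_neg, planeExp_add,
    ← Complex.re_mul_ofReal, ← Complex.normSq_eq_norm_sq, ← Complex.mul_conj]
  congr 1
  ring

lemma norm_modulate (w : ℤ × ℤ) (φ : Lp ℂ 2 μ) : ‖modulate w φ‖ = ‖φ‖ := by
  rw [Lp.norm_def, Lp.norm_def]
  congr 1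
  refine eLpNorm_congr_norm_ae ((coeFn_modulate w φ).mono fun q hq => ?_)
  rw [hq, norm_mul, norm_planeExp, one_mul]

lemma norm_toLp_two_sq {u : ℝ × ℝ → ℂ} (hu : MemLp u 2 μ) :
    ‖hu.toLp‖ ^ 2 = ∫ q, ‖u q‖ ^ 2 ∂μ := by
  rw [← real_inner_self_eq_norm_sq, L2.inner_def]
  simp_rw [real_inner_self_eq_norm_sq]
  exact integral_congr_ae (hu.coeFn_toLp.mono fun q hq => by simp only [hq])

lemma norm_indicatorConstLp_one_sq {A : Set (ℝ × ℝ)} (hA : MeasurableSet A) (hμA : μ A ≠ ⊤) :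
    ‖indicatorConstLp 2 hA hμA (1 : ℂ)‖ ^ 2 = μ.real A := by
  rw [norm_indicatorConstLp two_ne_zero ENNReal.ofNat_ne_top, norm_one, one_mul,
    ← Real.rpow_mul_natCast measureReal_nonneg]
  simp

variable [IsFiniteMeasure μ]

variable (μ) in
/-- The indicator of the point `z`, times `c`, as an element of `L²(μ)`. -/
def atomVec (z : ℝ × ℝ) (c : ℂ) : Lp ℂ 2 μ :=
  indicatorConstLp 2 (measurableSet_singleton z) (measure_ne_top μ _) c

lemma atomVec_add (z : ℝ × ℝ) (c c' : ℂ) : atomVec μ z (c + c') = atomVec μ z c + atomVec μ z c' :=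
  indicatorConstLp_add.symm

lemma smul_atomVec (r : ℝ) (z : ℝ × ℝ) (c : ℂ) : r • atomVec μ z c = atomVec μ z (r * c) := by
  simp_rw [atomVec, indicatorConstLp, ← MemLp.toLp_const_smul, ← Complex.real_smul,
    Set.indicator_const_smul]
  rfl

lemma modulate_atomVec (w : ℤ × ℤ) (z : ℝ × ℝ) (c : ℂ) :
    modulate w (atomVec μ z c) = atomVec μ z (planeExp w z * c) := by
  refine Lp.ext ?_
  filter_upwards [coeFn_modulate w (atomVec μ z c), indicatorConstLp_coeFn (c := c),
    indicatorConstLp_coeFn (c := planeExp w z * c)] with q h_modulate hc hc'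
  rw [h_modulate, atomVec, hc, atomVec, hc']
  by_cases hq : q = z
  · simp [hq]
  · simp [hq]

lemma sum_atomVec (F : Finset (ℝ × ℝ)) (c : ℂ) :
    ∑ z ∈ F, atomVec μ z c = indicatorConstLp 2 F.measurableSet (measure_ne_top μ _) c := by
  classical
  induction F using Finset.induction_on with
  | empty => simp
  | insert z F hz ih =>
    simp_rw [Finset.sum_insert hz, ih, atomVec, Finset.coe_insert, Set.insert_eq]
    exact (indicatorConstLp_disjoint_union _ _ _ _ (Set.disjoint_singleton_left.2 hz) c).symm

lemma const_eq_indicatorConstLp_compl_add_sum_atomVec (F : Finset (ℝ × ℝ)) (c : ℂ) :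
    Lp.const 2 μ c = indicatorConstLp 2 F.measurableSet.compl (measure_ne_top μ _) c +
      ∑ z ∈ F, atomVec μ z c := by
  rw [sum_atomVec, ← indicatorConstLp_disjoint_union _ _ _ _ disjoint_compl_left,
    ← indicatorConstLp_univ]
  simp_rw [Set.compl_union_self]

end Modulation

section Atoms

/-- The coefficients in `planeExp_eq_sum_cosSin`, which expands
`(cos a + i sin a) (cos b + i sin b)`. -/
def atomCoeff : Fin 4 → ℂ := ![1, -1, Complex.I, Complex.I]

/-- The factor of `planeExp_eq_sum_cosSin` depending on the first coordinate. -/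
def cosSinFst (a : ℝ) : Fin 4 → ℝ := ![cos a, sin a, sin a, cos a]

/-- The factor of `planeExp_eq_sum_cosSin` depending on the second coordinate. -/
def cosSinSnd (b : ℝ) : Fin 4 → ℝ := ![cos b, sin b, cos b, sin b]

lemma abs_cosSinFst_le_one (a : ℝ) (l : Fin 4) : |cosSinFst a l| ≤ 1 := by
  fin_cases l <;> simp [cosSinFst, abs_cos_le_one, abs_sin_le_one]

lemma abs_cosSinSnd_le_one (b : ℝ) (l : Fin 4) : |cosSinSnd b l| ≤ 1 := by
  fin_cases l <;> simp [cosSinSnd, abs_cos_le_one, abs_sin_le_one]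

lemma planeExp_eq_sum_cosSin (w : ℤ × ℤ) (q : ℝ × ℝ) :
    planeExp w q =
      ∑ l, ((cosSinFst (w.1 * q.1) l * cosSinSnd (w.2 * q.2) l : ℝ) : ℂ) * atomCoeff l := by
  rw [planeExp, mul_comm Complex.I, Complex.exp_mul_I, ← Complex.ofReal_cos, ← Complex.ofReal_sin,
    cos_add, sin_add]
  simp only [Fin.sum_univ_four, cosSinFst, cosSinSnd, atomCoeff, Matrix.cons_val]
  push_cast
  ring

lemma modulate_atomVec_one {μ : Measure (ℝ × ℝ)} [IsFiniteMeasure μ] (w : ℤ × ℤ) (z : ℝ × ℝ) :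
    modulate w (atomVec μ z 1) = ∑ l,
      (cosSinFst (w.1 * z.1) l * cosSinSnd (w.2 * z.2) l) • atomVec μ z (atomCoeff l) := by
  simp_rw [modulate_atomVec, mul_one, smul_atomVec]
  rw [planeExp_eq_sum_cosSin]
  exact map_sum (AddMonoidHom.mk' (atomVec μ z) (atomVec_add z)) _ _

lemma exists_finset_measureReal_compl_le {α : Type*} [MeasurableSpace α]
    [MeasurableSingletonClass α] {μ : Measure α} [IsFiniteMeasure μ] {s : Set α}
    (hs : s.Countable) (hμs : μ sᶜ = 0) {κ : ℝ} (hκ : 0 < κ) :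
    ∃ F : Finset α, μ.real (F : Set α)ᶜ ≤ κ := by
  have := hs.to_subtype
  let F (t : Finset s) : Finset α := t.map (.subtype _)
  have iInter_eq : ⋂ t, ((F t : Set α))ᶜ = sᶜ := by
    rw [← Set.compl_iUnion]
    congr 1
    ext x
    simp only [F, Set.mem_iUnion, Finset.mem_coe, Finset.mem_map, Function.Embedding.coe_subtype]
    exact ⟨fun ⟨_, y, _, hy⟩ => hy ▸ y.2, fun hx => ⟨{⟨x, hx⟩}, by simp⟩⟩
  have antitone : Antitone fun t => ((F t : Set α))ᶜ := fun t t' htt' =>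
    Set.compl_subset_compl.2 (Finset.coe_subset.2 (Finset.map_subset_map.2 htt'))
  have tendsto := tendsto_measure_iInter_atTop (μ := μ)
    (fun t => (F t).measurableSet.compl.nullMeasurableSet) antitone ⟨∅, measure_ne_top _ _⟩
  rw [iInter_eq, hμs] at tendsto
  obtain ⟨t, ht⟩ := ((ENNReal.tendsto_toReal ENNReal.zero_ne_top).comp tendsto
    |>.eventually (gt_mem_nhds (hκ.trans_eq' ENNReal.toReal_zero))).exists
  exact ⟨F t, ht.le⟩

end Atoms

section SpectralCoupling

variable {μ μ' : Measure (ℝ × ℝ)}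

/-- The pair `(φ, ψ)` modulated by `planeExp w`; for fixed `(φ, ψ)` the inner products of these
vectors form a stationary covariance in `w` with spectral measure `|φ|² μ + |ψ|² μ'`. -/
def modulatePair (w : ℤ × ℤ) (φ : Lp ℂ 2 μ) (ψ : Lp ℂ 2 μ') : WithLp 2 (Lp ℂ 2 μ × Lp ℂ 2 μ') :=
  WithLp.toLp 2 (modulate w φ, modulate w ψ)

lemma inner_modulatePair (w w' : ℤ × ℤ) {u v : ℝ × ℝ → ℂ} (hu : MemLp u 2 μ)
    (hv : MemLp v 2 μ') :
    inner ℝ (modulatePair w hu.toLp hv.toLp) (modulatePair w' hu.toLp hv.toLp) =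
      ∫ q, (planeExp (w' - w) q).re * ‖u q‖ ^ 2 ∂μ +
        ∫ q, (planeExp (w' - w) q).re * ‖v q‖ ^ 2 ∂μ' := by
  rw [WithLp.prod_inner_apply, ← inner_modulate, ← inner_modulate]
  rfl

lemma inner_modulatePair_zero (w w' : ℤ × ℤ) {u : ℝ × ℝ → ℂ} (hu : MemLp u 2 μ) :
    inner ℝ (modulatePair w hu.toLp (0 : Lp ℂ 2 μ')) (modulatePair w' hu.toLp 0) =
      ∫ q, (planeExp (w' - w) q).re * ‖u q‖ ^ 2 ∂μ := by
  rw [WithLp.prod_inner_apply, ← inner_modulate, modulatePair, modulatePair, map_zero, map_zero,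
    inner_zero_left, add_zero]

lemma norm_modulatePair_sq (w : ℤ × ℤ) (φ : Lp ℂ 2 μ) (ψ : Lp ℂ 2 μ') :
    ‖modulatePair w φ ψ‖ ^ 2 = ‖φ‖ ^ 2 + ‖ψ‖ ^ 2 := by
  rw [WithLp.prod_norm_sq_eq_of_L2, ← norm_modulate w φ, ← norm_modulate w ψ]
  rfl

lemma modulatePair_const_eq [IsFiniteMeasure μ'] (w : ℤ × ℤ) (φ ψ : Lp ℂ 2 μ)
    (F : Finset (ℝ × ℝ)) :
    modulatePair w φ (Lp.const 2 μ' 1) = modulatePair w ψ (0 : Lp ℂ 2 μ') +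
      modulatePair w (φ - ψ) (indicatorConstLp 2 F.measurableSet.compl (measure_ne_top μ' _) 1) +
      ∑ r : F × Fin 4, (cosSinFst (w.1 * r.1.1.1) r.2 * cosSinSnd (w.2 * r.1.1.2) r.2) •
        (WithLp.toLp 2 (0, atomVec μ' r.1 (atomCoeff r.2)) :
          WithLp 2 (Lp ℂ 2 μ × Lp ℂ 2 μ')) := by
  have sum_eq : ∑ z ∈ F, modulate w (atomVec μ' z 1) = ∑ r : F × Fin 4,
      (cosSinFst (w.1 * r.1.1.1) r.2 * cosSinSnd (w.2 * r.1.1.2) r.2) •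
        atomVec μ' r.1 (atomCoeff r.2) := by
    simp_rw [modulate_atomVec_one]
    rw [Fintype.sum_prod_type, Finset.sum_coe_sort F fun z : ℝ × ℝ => ∑ l,
      (cosSinFst (w.1 * z.1) l * cosSinSnd (w.2 * z.2) l) • atomVec μ' z (atomCoeff l)]
  rw [modulatePair, const_eq_indicatorConstLp_compl_add_sum_atomVec F, map_add, map_sum, sum_eq]
  refine WithLp.ofLp_injective 2 (Prod.ext ?_ ?_)
  · simp [modulatePair, Prod.fst_sum]
  · simp [modulatePair, Prod.snd_sum]

variable {Ω : Type*} [MeasurableSpace Ω] {P : Measure Ω} {X : ℤ → ℤ → Ω → ℝ}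
  {ν νd : Measure (ℝ × ℝ)} {f : ℝ × ℝ → ℝ}

lemma SpectralDecomp.isFiniteMeasure_discrete (hν : SpectralDecomp P X ν νd f) :
    IsFiniteMeasure νd :=
  have := hν.finite
  isFiniteMeasure_of_le ν (hν.decomp ▸ Measure.le_add_left le_rfl)

lemma SpectralDecomp.autocovariance_eq (hν : SpectralDecomp P X ν νd f) (w : ℤ × ℤ) :
    autocovariance P X w = spectralCov f w + ∫ q, (planeExp w q).re ∂νd := by
  have := hν.finite
  have := hν.isFiniteMeasure_discrete
  have : IsFiniteMeasure ((volume.restrict specBox).withDensity fun q => ENNReal.ofReal (f q)) :=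
    isFiniteMeasure_of_le ν (hν.decomp ▸ Measure.le_add_right le_rfl)
  have re_integral := integral_re (𝕜 := ℂ) (integrable_planeExp (μ := ν) w)
  simp_rw [RCLike.re_to_complex] at re_integral
  have integrable_re (ρ : Measure (ℝ × ℝ)) [IsFiniteMeasure ρ] :
      Integrable (fun q => (planeExp w q).re) ρ := (integrable_planeExp w).re
  have autocovariance_eq_re : autocovariance P X w = (∫ q, planeExp w q ∂ν).re :=
    (Complex.ofReal_re _).symm.trans (congrArg Complex.re (hν.herglotz w.1 w.2).symm)
  rw [autocovariance_eq_re, ← re_integral, hν.decomp,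
    integral_add_measure (integrable_re _) (integrable_re _),
    integral_withDensity_eq_integral_toReal_smul hν.f_meas.ennreal_ofReal
      (ae_of_all _ fun _ => ENNReal.ofReal_lt_top)]
  simp_rw [ENNReal.toReal_ofReal (hν.f_nonneg _), smul_eq_mul, mul_comm (f _), spectralCov]

variable [IsProbabilityMeasure P] {g : ℝ × ℝ → ℝ} {p : ℝ × ℝ → ℂ}

-- The atoms of `νd` outside a large finite set carry mass at most `κ`; the finitely many others
-- only contribute a perturbation of bounded rank.
lemma exists_abs_integral_resolventTrace_scaledW_sub_le (hX : StatGauss P X)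
    (hν : SpectralDecomp P X ν νd f)
    (hg : MemLp (fun q => (g q : ℂ)) 2 (volume.restrict specBox))
    (hgf : ∀ᵐ q ∂volume.restrict specBox, g q ^ 2 = f q)
    (hp : MemLp p 2 (volume.restrict specBox)) {κ : ℝ} (hκ : 0 < κ) :
    ∃ D : ℝ, ∀ N : ℕ, 1 ≤ N → ∀ s : ℝ, 0 < s → ∀ k : ℕ,
      |∫ ω, resolventTrace s (scaledW X N ω) ∂P - ∑ j ∈ Finset.range k,
        (-s⁻¹) ^ j * evenMoment j N (spectralCov fun q => ‖p q‖ ^ 2)| ≤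
      s⁻¹ ^ k * evenMoment k N (spectralCov fun q => ‖p q‖ ^ 2) +
        2 * (√s)⁻¹ * √(4 * ((∫ q in specBox, ‖(g q : ℂ) - p q‖ ^ 2) + κ)) +
        (√N)⁻¹ * (4 * (√s)⁻¹ * D) := by
  have := hν.isFiniteMeasure_discrete
  obtain ⟨S, hS_countable, hS_null⟩ := hν.discrete
  obtain ⟨F, hF⟩ := exists_finset_measureReal_compl_le hS_countable hS_null hκ
  let lag {N : ℕ} (i j : Fin N) : ℤ × ℤ := (i, j)
  let atom (r : F × Fin 4) :
      WithLp 2 (Lp ℂ 2 ((volume : Measure (ℝ × ℝ)).restrict specBox) × Lp ℂ 2 νd) :=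
    WithLp.toLp 2 (0, atomVec νd r.1 (atomCoeff r.2))
  refine ⟨∑ r, (1 + ‖atom r‖ ^ 2), fun N hN s hs k => ?_⟩
  refine abs_integral_resolventTrace_scaledW_sub_sum_evenMoment_le hX hN hs (v := atom)
    (x := fun i j => modulatePair (lag i j) hg.toLp (Lp.const 2 νd 1))
    (y := fun i j => modulatePair (lag i j) hp.toLp 0)
    (t := fun i j => modulatePair (lag i j) (hg.toLp - hp.toLp)
      (indicatorConstLp 2 F.measurableSet.compl (measure_ne_top νd _) 1))
    (a := fun r i => cosSinFst (i * r.1.1.1) r.2) (b := fun r j => cosSinSnd (j * r.1.1.2) r.2)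
    (by positivity) (fun r i => abs_cosSinFst_le_one _ _) (fun r j => abs_cosSinSnd_le_one _ _)
    (fun i j => ?_) (funext₂ fun i j => ?_) (fun i j i' j' => ?_) (fun i j i' j' => ?_) k
  · rw [norm_modulatePair_sq, ← MemLp.toLp_sub, norm_toLp_two_sq, norm_indicatorConstLp_one_sq]
    exact (add_le_add_iff_left _).2 hF
  · exact modulatePair_const_eq (lag i j) hg.toLp hp.toLp F
  · rw [← MemLp.toLp_const, inner_modulatePair, hν.autocovariance_eq, spectralCov]
    congr 1
    · refine integral_congr_ae (hgf.mono fun q hq => ?_)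
      simp only [Complex.norm_real, Real.norm_eq_abs, sq_abs, hq]
      rfl
    · simp only [norm_one, one_pow, mul_one]
      rfl
  · rw [inner_modulatePair_zero]
    rfl

end SpectralCoupling

/-! ### The limiting moments -/

section LimitMoment

lemma ae_comp_linearMap_of_ae_specBox {ι : Type*} [Fintype ι] {Q : ℝ × ℝ → Prop}
    (hQ : ∀ᵐ q ∂volume.restrict specBox, Q q) {L : (ι → ℝ) →ₗ[ℝ] ℝ × ℝ}
    (hL : Function.Surjective L)
    (maps : Set.MapsTo L (Set.univ.pi fun _ => Set.Icc (-π) π) (Set.Icc (-π) π ×ˢ Set.Icc (-π) π)) :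
    ∀ᵐ x ∂volume.restrict (Set.univ.pi fun _ : ι => Set.Icc (-π) π), Q (L x) := by
  have specBox_ae_eq : specBox =ᵐ[volume] (Set.Icc (-π) π ×ˢ Set.Icc (-π) π : Set (ℝ × ℝ)) :=
    Measure.set_prod_ae_eq Ioc_ae_eq_Icc Ioc_ae_eq_Icc
  rw [Measure.restrict_congr_set specBox_ae_eq,
    ae_restrict_iff' (measurableSet_Icc.prod measurableSet_Icc)] at hQ
  obtain ⟨S, hS, hS_meas, hS_sub⟩ := hQ.exists_measurable_mem
  have ae_mem : ∀ᵐ x : ι → ℝ, L x ∈ S :=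
    (ae_comp_linearMap_mem_iff L volume volume hL hS_meas).2 hS
  rw [ae_restrict_iff' (.univ_pi fun _ => measurableSet_Icc)]
  exact ae_mem.mono fun x hx hx_box => hS_sub _ hx (maps hx_box)

lemma ae_eval_pair_of_ae_specBox {ι : Type*} [Fintype ι] {Q : ℝ × ℝ → Prop}
    (hQ : ∀ᵐ q ∂volume.restrict specBox, Q q) {a b : ι} (hab : a ≠ b) :
    ∀ᵐ x ∂volume.restrict (Set.univ.pi fun _ : ι => Set.Icc (-π) π),
      Q (x a, -x b) ∧ Q (-x b, x a) := by
  classical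
  have neg_mem {y : ℝ} (hy : y ∈ Set.Icc (-π) π) : -y ∈ Set.Icc (-π) π :=
    ⟨neg_le_neg hy.2, neg_le.1 hy.1⟩
  let L : (ι → ℝ) →ₗ[ℝ] ℝ × ℝ := (LinearMap.proj a).prod (-LinearMap.proj b)
  let L' : (ι → ℝ) →ₗ[ℝ] ℝ × ℝ := (-LinearMap.proj b).prod (LinearMap.proj a)
  have hL : Function.Surjective L := fun q =>
    ⟨Function.update (fun _ => q.1) b (-q.2), by simp [L, hab]⟩
  have hL' : Function.Surjective L' := fun q =>
    ⟨Function.update (fun _ => q.2) b (-q.1), by simp [L', hab]⟩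
  exact (ae_comp_linearMap_of_ae_specBox hQ hL fun x hx =>
      ⟨hx a trivial, neg_mem (hx b trivial)⟩).and
    (ae_comp_linearMap_of_ae_specBox hQ hL' fun x hx =>
      ⟨neg_mem (hx b trivial), hx a trivial⟩)

section Lsig

variable {m : ℕ} {p : Equiv.Perm (Fin (2 * m))} {T : Fin (2 * m) → Fin (m + 1)}

lemma ae_forall_arc_of_ae_specBox (hp : p ∈ NCPairings m) (hT : IsOrbitIndex (krewPerm m p) T)
    {Q : ℝ × ℝ → Prop} (hQ : ∀ᵐ q ∂volume.restrict specBox, Q q) :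
    ∀ᵐ x ∂volume.restrict (Set.univ.pi fun _ : Fin (m + 1) => Set.Icc (-π) π),
      ∀ u, u < p u → Q (x (T u), -x (T (p u))) ∧ Q (-x (T (p u)), x (T u)) := by
  simp only [ae_all_iff]
  exact fun u hu => ae_eval_pair_of_ae_specBox hQ (hT.apply_ne_of_lt hp hu)

lemma measurable_Lsig {f : ℝ × ℝ → ℝ} (hf : Measurable f) :
    Measurable (Lsig m p T fun a b => f (a, b)) := by
  unfold Lsig
  fun_prop

variable (hp : p ∈ NCPairings m) (hT : IsOrbitIndex (krewPerm m p) T) {f : ℝ × ℝ → ℝ} {B : ℝ}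
include hp hT

lemma ae_abs_Lsig_le (hf : ∀ᵐ q ∂volume.restrict specBox, |f q| ≤ B) :
    ∀ᵐ x ∂volume.restrict (Set.univ.pi fun _ : Fin (m + 1) => Set.Icc (-π) π),
      |Lsig m p T (fun a b => f (a, b)) x| ≤ (2 * B) ^ m := by
  filter_upwards [ae_forall_arc_of_ae_specBox hp hT hf] with x hx
  rw [Lsig, Finset.abs_prod]
  refine (Finset.prod_le_prod (g := fun _ => 2 * B) (fun _ _ => abs_nonneg _)
    fun u hu => ?_).trans_eq (by rw [Finset.prod_const, card_filter_lt_of_mem_pairings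
      (mem_pairings_of_mem_NCPairings hp)])
  obtain ⟨h, h'⟩ := hx u (Finset.mem_filter_univ u |>.1 hu)
  exact (abs_add_le _ _).trans (by linarith)

lemma setIntegral_Lsig_le (hf : ∀ᵐ q ∂volume.restrict specBox, |f q| ≤ B) :
    ∫ x in Set.univ.pi fun _ : Fin (m + 1) => Set.Icc (-π) π, Lsig m p T (fun a b => f (a, b)) x ≤
      (2 * B) ^ m * (2 * π) ^ (m + 1) := by
  have volume_real_eq : (volume : Measure (Fin (m + 1) → ℝ)).real
      (Set.univ.pi fun _ => Set.Icc (-π) π) = (2 * π) ^ (m + 1) := by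
    rw [Measure.real, volume_pi_pi, ENNReal.toReal_prod, Real.volume_Icc, sub_neg_eq_add, ← two_mul,
      ENNReal.toReal_ofReal two_pi_pos.le, Finset.prod_const, Finset.card_fin]
  rw [← volume_real_eq]
  exact (le_abs_self _).trans <| norm_setIntegral_le_of_norm_le_const_ae
    (f := Lsig m p T fun a b => f (a, b))
    (isCompact_univ_pi fun _ => isCompact_Icc).measure_lt_top (ae_abs_Lsig_le hp hT hf)

lemma ae_tendsto_Lsig {F : ℕ → ℝ × ℝ → ℝ}
    (hF : ∀ᵐ q ∂volume.restrict specBox, Tendsto (fun i => F i q) atTop (nhds (f q))) :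
    ∀ᵐ x ∂volume.restrict (Set.univ.pi fun _ : Fin (m + 1) => Set.Icc (-π) π),
      Tendsto (fun i => Lsig m p T (fun a b => F i (a, b)) x) atTop
        (nhds (Lsig m p T (fun a b => f (a, b)) x)) := by
  filter_upwards [ae_forall_arc_of_ae_specBox hp hT hF] with x hx
  refine tendsto_finsetProd _ fun u hu => ?_
  obtain ⟨h, h'⟩ := hx u (Finset.mem_filter_univ u |>.1 hu)
  exact h.add h'

end Lsig

/-- The moment of order `2j` of the limiting spectral distribution for the spectral density `f`,
computed with the labelling `T j p` of the Kreweras complement of each `p`. The order zero is set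
apart because the sum over noncrossing pairings carries the factor `(2π)^(j-1)`. -/
def limitMoment (T : ∀ j : ℕ, Equiv.Perm (Fin (2 * j)) → Fin (2 * j) → Fin (j + 1))
    (f : ℝ × ℝ → ℝ) (j : ℕ) : ℝ :=
  if j = 0 then 1 else (2 * π) ^ (j - 1) * ∑ p ∈ NCPairings j,
    ∫ x in Set.univ.pi fun _ : Fin (j + 1) => Set.Icc (-π) π,
      Lsig j p (T j p) (fun a b => f (a, b)) x

variable {T : ∀ j : ℕ, Equiv.Perm (Fin (2 * j)) → Fin (2 * j) → Fin (j + 1)} {j : ℕ}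
  (hT : 1 ≤ j → ∀ p ∈ NCPairings j, IsOrbitIndex (krewPerm j p) (T j p))
include hT

lemma tendsto_evenMoment {n : ℕ} {R : ℤ × ℤ → ℝ} (hR_supp : ∀ w, w ∉ freqBox n → R w = 0)
    (hR_even : ∀ w, R (-w) = R w) :
    Tendsto (fun N => evenMoment j N R) atTop (nhds (limitMoment T (trigDensity n R) j)) := by
  unfold evenMoment limitMoment
  split_ifs with h
  · exact tendsto_const_nhds
  · have hj := Nat.one_le_iff_ne_zero.2 h
    rw [Finset.mul_sum, ← Finset.sum_congr rfl fun p hp => pairingLimit_eq_integral_Lsig hj hR_even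
      (mem_pairings_of_mem_NCPairings hp) (hT hj p hp)]
    exact tendsto_modelMoment hR_supp (hT hj)

variable {f : ℝ × ℝ → ℝ} {B : ℝ}

lemma limitMoment_le (hB : 0 ≤ B) (hf : ∀ᵐ q ∂volume.restrict specBox, |f q| ≤ B) :
    limitMoment T f j ≤ (32 * π ^ 2 * B) ^ j := by
  rw [limitMoment]
  split_ifs with h
  · rw [h, pow_zero]
  have hj := Nat.one_le_iff_ne_zero.2 h
  have card_le : ((NCPairings j).card : ℝ) ≤ 4 ^ j := by exact_mod_cast card_NCPairings_le j
  calc (2 * π) ^ (j - 1) * ∑ p ∈ NCPairings j, ∫ x in Set.univ.pi fun _ : Fin (j + 1) =>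
          Set.Icc (-π) π, Lsig j p (T j p) (fun a b => f (a, b)) x
      ≤ (2 * π) ^ (j - 1) * ((NCPairings j).card * ((2 * B) ^ j * (2 * π) ^ (j + 1))) := by
        rw [← nsmul_eq_mul]
        gcongr
        exact Finset.sum_le_card_nsmul _ _ _ fun p hp => setIntegral_Lsig_le hp (hT hj p hp) hf
    _ ≤ (2 * π) ^ (j - 1) * (4 ^ j * ((2 * B) ^ j * (2 * π) ^ (j + 1))) := by gcongr
    _ = (4 * (2 * B)) ^ j * (2 * π) ^ (j - 1 + (j + 1)) := by rw [pow_add, mul_pow (4 : ℝ)]; ring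
    _ = (32 * π ^ 2 * B) ^ j := by
        rw [show j - 1 + (j + 1) = 2 * j by omega, pow_mul, ← mul_pow]
        congr 1
        ring

lemma tendsto_limitMoment {F : ℕ → ℝ × ℝ → ℝ} (hF_meas : ∀ i, Measurable (F i))
    (hF_le : ∀ i q, |F i q| ≤ B)
    (hF : ∀ᵐ q ∂volume.restrict specBox, Tendsto (fun i => F i q) atTop (nhds (f q))) :
    Tendsto (fun i => limitMoment T (F i) j) atTop (nhds (limitMoment T f j)) := by
  unfold limitMoment
  split_ifs with h
  · exact tendsto_const_nhds
  refine Tendsto.const_mul _ (tendsto_finsetSum _ fun p hp => ?_)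
  have hTp := hT (Nat.one_le_iff_ne_zero.2 h) p hp
  refine tendsto_integral_of_dominated_convergence (fun _ => (2 * B) ^ j)
    (fun i => (measurable_Lsig (hF_meas i)).aestronglyMeasurable) ?_
    (fun i => ae_abs_Lsig_le hp hTp (ae_of_all _ (hF_le i))) (ae_tendsto_Lsig hp hTp hF)
  exact integrableOn_const (isCompact_univ_pi fun _ => isCompact_Icc).measure_lt_top.ne

end LimitMoment

/-! ### Moments from the resolvent -/

section ExpectedResolvent

lemma continuous_div_add_sq {s : ℝ} (hs : 0 < s) : Continuous fun x : ℝ => s / (s + x ^ 2) :=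
  continuous_const.div (by fun_prop) fun x => by positivity

lemma tendsto_integral_of_tendstoInMeasure {α ι E : Type*} [MeasurableSpace α] {μ : Measure α}
    [NormedAddCommGroup E] [NormedSpace ℝ E] {l : Filter ι} [l.IsCountablyGenerated]
    {F : ι → α → E} {g : α → E} {bound : α → ℝ} (hF : ∀ i, AEStronglyMeasurable (F i) μ)
    (bound_integrable : Integrable bound μ) (hF_le : ∀ i, ∀ᵐ a ∂μ, ‖F i a‖ ≤ bound a)
    (hFg : TendstoInMeasure μ F l g) :
    Tendsto (fun i => ∫ a, F i a ∂μ) l (nhds (∫ a, g a ∂μ)) :=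
  tendsto_of_subseq_tendsto fun _ hns =>
    let ⟨ms, _, ae_tendsto⟩ := (hFg.comp hns).exists_seq_tendsto_ae
    ⟨ms, tendsto_integral_of_dominated_convergence bound (fun _ => hF _) bound_integrable
      (fun _ => hF_le _) ae_tendsto⟩

lemma ESDTendstoInProb.tendsto_integral_resolventTrace {Ω : Type*} [MeasurableSpace Ω]
    {P : Measure Ω} [IsProbabilityMeasure P] {A : (N : ℕ) → Ω → Matrix (Fin N) (Fin N) ℝ}
    {μ : Measure ℝ} (hAμ : ESDTendstoInProb P A μ)
    (hA_meas : ∀ N i j, Measurable fun ω => A N ω i j) (hA : ∀ N ω, (A N ω).IsHermitian)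
    {s : ℝ} (hs : 0 < s) :
    Tendsto (fun N => ∫ ω, resolventTrace s (A N ω) ∂P) atTop
      (nhds (∫ x, s / (s + x ^ 2) ∂μ)) := by
  have tendstoInMeasure : TendstoInMeasure P (fun N ω => resolventTrace s (A N ω)) atTop
      fun _ => ∫ x, s / (s + x ^ 2) ∂μ := by
    rw [tendstoInMeasure_iff_dist]
    intro ε hε
    simp only [Real.dist_eq, resolventTrace_eq_esdEval hs (hA _ _)]
    exact hAμ _ (continuous_div_add_sq hs) ⟨1, abs_div_add_sq_le_one hs⟩ ε hε
  simpa only [integral_const, probReal_univ, one_smul] using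
    tendsto_integral_of_tendstoInMeasure (bound := fun _ => 1)
      (fun N => (measurable_resolventTrace s (hA_meas N)).aestronglyMeasurable)
      (integrable_const 1) (fun N => ae_of_all _ fun ω => abs_resolventTrace_le_one hs (hA N ω))
      tendstoInMeasure

end ExpectedResolvent

section MomentProblem

lemma integrable_and_integral_eq_of_tendsto_of_le {μ : Measure ℝ} {F : ℕ → ℝ → ℝ} {f : ℝ → ℝ}
    {c : ℝ} (hF : ∀ n, Integrable (F n) μ) (hF_nonneg : ∀ n x, 0 ≤ F n x)
    (hF_le : ∀ n x, F n x ≤ f x) (hFf : ∀ x, Tendsto (fun n => F n x) atTop (nhds (f x)))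
    (hc : Tendsto (fun n => ∫ x, F n x ∂μ) atTop (nhds c)) :
    Integrable f μ ∧ ∫ x, f x ∂μ = c := by
  have lintegral_eq (n : ℕ) : ∫⁻ x, ‖F n x‖ₑ ∂μ = ENNReal.ofReal (∫ x, F n x ∂μ) := by
    rw [ofReal_integral_eq_lintegral_ofReal (hF n) (ae_of_all _ (hF_nonneg n))]
    exact lintegral_congr fun x => Real.enorm_of_nonneg (hF_nonneg n x)
  have integrable : Integrable f μ := by
    refine integrable_of_tendsto (ae_of_all _ hFf) (fun n => (hF n).aestronglyMeasurable) ?_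
    simp only [lintegral_eq, (ENNReal.tendsto_ofReal hc).liminf_eq]
    exact ENNReal.ofReal_ne_top
  refine ⟨integrable, tendsto_nhds_unique ?_ hc⟩
  refine tendsto_integral_of_dominated_convergence f (fun n => (hF n).aestronglyMeasurable)
    integrable (fun n => ae_of_all _ fun x => ?_) (ae_of_all _ hFf)
  rw [Real.norm_of_nonneg (hF_nonneg n x)]
  exact hF_le n x

lemma tendsto_div_add_atTop_nhds_one (a : ℝ) :
    Tendsto (fun s : ℝ => s / (s + a)) atTop (nhds 1) := by
  have tendsto_sub : Tendsto (fun s : ℝ => 1 - a / (s + a)) atTop (nhds (1 - 0)) :=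
    ((tendsto_atTop_add_const_right _ a tendsto_id).const_div_atTop a).const_sub 1
  rw [sub_zero] at tendsto_sub
  refine tendsto_sub.congr' ?_
  filter_upwards [eventually_gt_atTop (-a)] with s hs
  have : s + a ≠ 0 := by linarith
  field_simp
  ring

variable {μ : Measure ℝ} [IsFiniteMeasure μ] {M : ℕ → ℝ} {s : ℝ} {k : ℕ}

lemma integrable_div_add_sq (hs : 0 < s) : Integrable (fun x : ℝ => s / (s + x ^ 2)) μ :=
  .of_bound (continuous_div_add_sq hs).aestronglyMeasurable 1
    (ae_of_all _ (abs_div_add_sq_le_one hs))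

lemma integrable_pow_mul_div_add_sq (hs : 0 < s)
    (hM : ∀ j < k, Integrable (fun x : ℝ => x ^ (2 * j)) μ ∧ ∫ x, x ^ (2 * j) ∂μ = M j) :
    Integrable (fun x : ℝ => x ^ (2 * k) * (s / (s + x ^ 2))) μ ∧
      (-s⁻¹) ^ k * ∫ x, x ^ (2 * k) * (s / (s + x ^ 2)) ∂μ =
        ∫ x, s / (s + x ^ 2) ∂μ - ∑ j ∈ Finset.range k, (-s⁻¹) ^ j * M j := by
  have integrable_term (j : ℕ) (hj : j ∈ Finset.range k) :
      Integrable (fun x : ℝ => (-s⁻¹) ^ j * x ^ (2 * j)) μ :=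
    (hM j (Finset.mem_range.1 hj)).1.const_mul _
  have integrable_sum := integrable_finsetSum _ integrable_term
  have remainder_eq (x : ℝ) : (-s⁻¹) ^ k * (x ^ (2 * k) * (s / (s + x ^ 2))) =
      s / (s + x ^ 2) - ∑ j ∈ Finset.range k, (-s⁻¹) ^ j * x ^ (2 * j) :=
    (sub_eq_of_eq_add' (div_add_sq_eq_sum_add hs x k)).symm
  constructor
  · rw [← integrable_const_mul_iff (pow_ne_zero k (neg_ne_zero.2 (inv_ne_zero hs.ne'))).isUnit]
    simp only [remainder_eq]
    exact (integrable_div_add_sq hs).sub integrable_sum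
  · rw [← integral_const_mul]
    simp only [remainder_eq]
    rw [integral_sub (integrable_div_add_sq hs) integrable_sum,
      integral_finsetSum _ integrable_term]
    congr 1
    exact Finset.sum_congr rfl fun j hj => by
      rw [integral_const_mul, (hM j (Finset.mem_range.1 hj)).2]

lemma integrable_and_integral_pow_eq_of_abs_sub_sum_le (hM : ∀ s : ℝ, 0 < s → ∀ k : ℕ,
      |∫ x, s / (s + x ^ 2) ∂μ - ∑ j ∈ Finset.range k, (-s⁻¹) ^ j * M j| ≤ s⁻¹ ^ k * M k)
    (k : ℕ) : Integrable (fun x : ℝ => x ^ (2 * k)) μ ∧ ∫ x, x ^ (2 * k) ∂μ = M k := by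
  induction k using Nat.strong_induction_on with
  | _ k ih =>
  have abs_sub_le (s : ℝ) (hs : 0 < s) :
      |∫ x, x ^ (2 * k) * (s / (s + x ^ 2)) ∂μ - M k| ≤ s⁻¹ * M (k + 1) := by
    have bracket := hM s hs (k + 1)
    rw [Finset.sum_range_succ, ← sub_sub, ← (integrable_pow_mul_div_add_sq hs ih).2, ← mul_sub,
      abs_mul, abs_pow, abs_neg, abs_of_pos (inv_pos.2 hs), pow_succ, mul_assoc] at bracket
    exact le_of_mul_le_mul_left bracket (by positivity)
  have tendsto_succ : Tendsto (fun n : ℕ => (n : ℝ) + 1) atTop atTop :=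
    tendsto_atTop_add_const_right _ _ tendsto_natCast_atTop_atTop
  refine integrable_and_integral_eq_of_tendsto_of_le
    (F := fun n x => x ^ (2 * k) * ((n + 1) / (n + 1 + x ^ 2)))
    (fun n => (integrable_pow_mul_div_add_sq n.cast_add_one_pos ih).1) (fun n x => ?_)
    (fun n x => ?_) (fun x => ?_) ?_
  · rw [pow_mul]
    positivity
  · exact mul_le_of_le_one_right ((even_two_mul k).pow_nonneg x)
      (div_add_sq_mem_Icc n.cast_add_one_pos x).2
  · simpa only [mul_one, Function.comp_def] using
      ((tendsto_div_add_atTop_nhds_one (x ^ 2)).comp tendsto_succ).const_mul (x ^ (2 * k))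
  · have error_tendsto : Tendsto (fun n : ℕ => ((n : ℝ) + 1)⁻¹ * M (k + 1)) atTop (nhds 0) := by
      simpa only [zero_mul, Pi.inv_apply] using tendsto_succ.inv_tendsto_atTop.mul_const (M (k + 1))
    rw [tendsto_iff_dist_tendsto_zero]
    exact squeeze_zero (fun _ => dist_nonneg) (fun n => abs_sub_le _ n.cast_add_one_pos)
      error_tendsto

lemma measure_compl_Icc_eq_zero_of_integral_pow_le {K : ℝ} (hK : 0 ≤ K)
    (hμ : ∀ k : ℕ, Integrable (fun x : ℝ => x ^ (2 * k)) μ ∧ ∫ x, x ^ (2 * k) ∂μ ≤ K ^ k) :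
    μ (Set.Icc (-(K + 1)) (K + 1))ᶜ = 0 := by
  have markov (k : ℕ) : μ.real (Set.Icc (-(K + 1)) (K + 1))ᶜ ≤ (K / (K + 1) ^ 2) ^ k := by
    have subset : (Set.Icc (-(K + 1)) (K + 1))ᶜ ⊆ {x | (K + 1) ^ (2 * k) ≤ x ^ (2 * k)} := by
      intro x hx
      rw [Set.mem_compl_iff, Set.mem_Icc, ← abs_le, not_le] at hx
      rw [Set.mem_ofPred_eq, ← (even_two_mul k).pow_abs x]
      gcongr
    rw [div_pow, ← pow_mul, le_div_iff₀' (by positivity)]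
    calc (K + 1) ^ (2 * k) * μ.real (Set.Icc (-(K + 1)) (K + 1))ᶜ
        ≤ (K + 1) ^ (2 * k) * μ.real {x | (K + 1) ^ (2 * k) ≤ x ^ (2 * k)} :=
          mul_le_mul_of_nonneg_left (measureReal_mono subset) (by positivity)
      _ ≤ ∫ x, x ^ (2 * k) ∂μ := mul_meas_ge_le_integral_of_nonneg
          (ae_of_all μ fun x => (even_two_mul k).pow_nonneg x) (hμ k).1 _
      _ ≤ K ^ k := (hμ k).2
  have ratio_lt_one : K / (K + 1) ^ 2 < 1 := by
    rw [div_lt_one (by positivity)]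
    nlinarith
  rw [← measureReal_eq_zero_iff]
  exact (ge_of_tendsto' (tendsto_pow_atTop_nhds_zero_of_lt_one (by positivity) ratio_lt_one)
    markov).antisymm measureReal_nonneg

end MomentProblem

section BoundedDensity

lemma ae_neg_of_ae_specBox {Q : ℝ × ℝ → Prop} (hQ : ∀ᵐ q ∂volume.restrict specBox, Q q) :
    ∀ᵐ q ∂volume.restrict specBox, Q (-q) := by
  rw [ae_restrict_iff' measurableSet_specBox] at hQ
  have hQ_neg := (Measure.measurePreserving_neg volume).quasiMeasurePreserving.ae hQ
  filter_upwards [ae_restrict_of_ae hQ_neg, ae_neg_mem_specBox] with q h_imp hq_neg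
  exact h_imp hq_neg

lemma exists_seq_mem_mFourierSubalgebra_comp_torusProj_tendsto_ae {g : ℝ × ℝ → ℝ} {B : ℝ}
    (hg : Measurable g) (hB : ∀ q, |g q| ≤ B) :
    ∃ p : ℕ → C(UnitAddTorus (Fin 2), ℂ),
      (∀ i, p i ∈ UnitAddTorus.mFourierSubalgebra (Fin 2)) ∧ (∀ i z, ‖p i z‖ ≤ B + 1) ∧
      ∀ᵐ q ∂volume.restrict specBox,
        Tendsto (fun i => p i (torusProj q)) atTop (nhds (g q : ℂ)) := by
  obtain ⟨p, hp_mem, hp_le, hp⟩ := exists_seq_mem_mFourierSubalgebra_tendsto_ae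
    (μ := (volume.restrict specBox).map torusProj)
    (hg.comp measurable_torusSection).aestronglyMeasurable fun z => hB (torusSection z)
  refine ⟨p, hp_mem, hp_le, ?_⟩
  filter_upwards [ae_of_ae_map continuous_torusProj.aemeasurable hp,
    ae_restrict_mem measurableSet_specBox] with q hq hq_mem
  rwa [Function.comp_apply, torusSection_torusProj hq_mem] at hq

lemma tendsto_integral_norm_sub_sq {α E : Type*} [MeasurableSpace α] {μ : Measure α}
    [IsFiniteMeasure μ] [NormedAddCommGroup E] {G : α → E} {F : ℕ → α → E} {B B' : ℝ}
    (hG : AEStronglyMeasurable G μ) (hF : ∀ i, AEStronglyMeasurable (F i) μ)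
    (hG_le : ∀ a, ‖G a‖ ≤ B) (hF_le : ∀ i a, ‖F i a‖ ≤ B')
    (hFG : ∀ᵐ a ∂μ, Tendsto (fun i => F i a) atTop (nhds (G a))) :
    Tendsto (fun i => ∫ a, ‖G a - F i a‖ ^ 2 ∂μ) atTop (nhds 0) := by
  rw [← integral_zero α ℝ (μ := μ)]
  refine tendsto_integral_of_dominated_convergence (fun _ => (B + B') ^ 2)
    (fun i => (hG.sub (hF i)).norm.pow 2) (integrable_const _)
    (fun i => ae_of_all _ fun a => ?_) (hFG.mono fun a ha => ?_)
  · rw [norm_pow, norm_norm]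
    gcongr
    exact (norm_sub_le _ _).trans (add_le_add (hG_le a) (hF_le i a))
  · simpa only [sub_self, norm_zero, ne_eq, OfNat.ofNat_ne_zero, not_false_eq_true, zero_pow] using
      (ha.const_sub (G a)).norm.pow 2

/-- The even part of the spectral density `|p|²` defined by a function `p` on the torus. -/
def evenNormSq (p : C(UnitAddTorus (Fin 2), ℂ)) (q : ℝ × ℝ) : ℝ :=
  (‖p (torusProj q)‖ ^ 2 + ‖p (torusProj (-q))‖ ^ 2) / 2

lemma measurable_evenNormSq (p : C(UnitAddTorus (Fin 2), ℂ)) : Measurable (evenNormSq p) := by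
  have := continuous_torusProj
  unfold evenNormSq
  exact Continuous.measurable (by fun_prop)

lemma abs_evenNormSq_le {p : C(UnitAddTorus (Fin 2), ℂ)} {B : ℝ} (hp : ∀ z, ‖p z‖ ≤ B)
    (q : ℝ × ℝ) : |evenNormSq p q| ≤ B ^ 2 := by
  rw [evenNormSq, abs_of_nonneg (by positivity)]
  linarith [pow_le_pow_left₀ (norm_nonneg _) (hp (torusProj q)) 2,
    pow_le_pow_left₀ (norm_nonneg _) (hp (torusProj (-q))) 2]

variable {Ω : Type*} [MeasurableSpace Ω] {P : Measure Ω} {X : ℤ → ℤ → Ω → ℝ}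
  {ν νd : Measure (ℝ × ℝ)} {f : ℝ × ℝ → ℝ}

lemma ae_tendsto_evenNormSq (hν : SpectralDecomp P X ν νd f) {g : ℝ × ℝ → ℝ}
    (hgf : ∀ᵐ q ∂volume.restrict specBox, g q ^ 2 = f q)
    {p : ℕ → C(UnitAddTorus (Fin 2), ℂ)} (hp : ∀ᵐ q ∂volume.restrict specBox,
      Tendsto (fun i => p i (torusProj q)) atTop (nhds (g q : ℂ))) :
    ∀ᵐ q ∂volume.restrict specBox,
      Tendsto (fun i => evenNormSq (p i) q) atTop (nhds (f q)) := by
  filter_upwards [hp, ae_neg_of_ae_specBox hp, hgf, ae_neg_of_ae_specBox hgf,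
    hν.density_neg_ae_eq] with q hq hq_neg hgq hgq_neg f_even
  have limit_eq : f q = (‖(g q : ℂ)‖ ^ 2 + ‖(g (-q) : ℂ)‖ ^ 2) / 2 := by
    rw [Complex.norm_real, Complex.norm_real, Real.norm_eq_abs, Real.norm_eq_abs, sq_abs, sq_abs,
      hgq, hgq_neg, f_even, add_self_div_two]
  rw [limit_eq]
  exact ((hq.norm.pow 2).add (hq_neg.norm.pow 2)).div_const 2

variable [IsProbabilityMeasure P] {μ : Measure ℝ} {s : ℝ}
  {T : ∀ j : ℕ, Equiv.Perm (Fin (2 * j)) → Fin (2 * j) → Fin (j + 1)}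

lemma abs_integral_div_add_sq_sub_sum_limitMoment_evenNormSq_le (hX : StatGauss P X)
    (hν : SpectralDecomp P X ν νd f) (hXμ : ESDTendstoInProb P (scaledW X) μ)
    (hT : ∀ j, 1 ≤ j → ∀ p ∈ NCPairings j, IsOrbitIndex (krewPerm j p) (T j p))
    {g : ℝ × ℝ → ℝ} (hg : MemLp (fun q => (g q : ℂ)) 2 (volume.restrict specBox))
    (hgf : ∀ᵐ q ∂volume.restrict specBox, g q ^ 2 = f q) {p : C(UnitAddTorus (Fin 2), ℂ)}
    (hp : p ∈ UnitAddTorus.mFourierSubalgebra (Fin 2)) {κ : ℝ} (hκ : 0 < κ) (hs : 0 < s) (k : ℕ) :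
    |∫ x, s / (s + x ^ 2) ∂μ - ∑ j ∈ Finset.range k, (-s⁻¹) ^ j * limitMoment T (evenNormSq p) j|
      ≤ s⁻¹ ^ k * limitMoment T (evenNormSq p) k +
        2 * (√s)⁻¹ * √(4 * ((∫ q in specBox, ‖(g q : ℂ) - p (torusProj q)‖ ^ 2) + κ)) := by
  have hp_memLp : MemLp (fun q => p (torusProj q)) 2 (volume.restrict specBox) :=
    .of_bound (p.continuous.comp continuous_torusProj).aestronglyMeasurable ‖p‖
      (ae_of_all _ fun q => p.norm_coe_le_norm _)
  obtain ⟨D, hD⟩ := exists_abs_integral_resolventTrace_scaledW_sub_le hX hν hg hgf hp_memLp hκ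
  obtain ⟨n, hn_supp, hn_eq⟩ := exists_trigDensity_spectralCov_norm_sq hp
  have moment_tendsto (j : ℕ) :
      Tendsto (fun N => evenMoment j N (spectralCov fun q => ‖p (torusProj q)‖ ^ 2)) atTop
        (nhds (limitMoment T (evenNormSq p) j)) := by
    have hn_eq : trigDensity n _ = evenNormSq p := funext hn_eq
    rw [← hn_eq]
    exact tendsto_evenMoment (hT j) hn_supp (spectralCov_neg _)
  have resolvent_tendsto := hXμ.tendsto_integral_resolventTrace (fun _ => measurable_scaledW hX)
    (isHermitian_scaledW X) hs
  have error_tendsto : Tendsto (fun N : ℕ => (√(N : ℝ))⁻¹ * (4 * (√s)⁻¹ * D)) atTop (nhds 0) := by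
    simpa only [zero_mul, Function.comp_apply] using (tendsto_inv_atTop_zero.comp
      (tendsto_sqrt_atTop.comp tendsto_natCast_atTop_atTop)).mul_const (4 * (√s)⁻¹ * D)
  refine le_of_tendsto_of_tendsto (resolvent_tendsto.sub (tendsto_finsetSum _ fun j _ =>
    (moment_tendsto j).const_mul ((-s⁻¹) ^ j))).abs ?_
    (eventually_atTop.2 ⟨1, fun N hN => hD N hN s hs k⟩)
  simpa only [add_zero] using
    (((moment_tendsto k).const_mul (s⁻¹ ^ k)).add_const _).add error_tendsto

lemma abs_integral_div_add_sq_sub_sum_limitMoment_le (hX : StatGauss P X)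
    (hν : SpectralDecomp P X ν νd f) (hXμ : ESDTendstoInProb P (scaledW X) μ)
    (hT : ∀ j, 1 ≤ j → ∀ p ∈ NCPairings j, IsOrbitIndex (krewPerm j p) (T j p))
    {C : ℝ} (hf_le : ∀ᵐ q ∂volume.restrict specBox, f q ≤ C) (hs : 0 < s) (k : ℕ) :
    |∫ x, s / (s + x ^ 2) ∂μ - ∑ j ∈ Finset.range k, (-s⁻¹) ^ j * limitMoment T f j| ≤
      s⁻¹ ^ k * limitMoment T f k := by
  let g (q : ℝ × ℝ) : ℝ := √(min (f q) C)
  have hg : Measurable g := (hν.f_meas.min measurable_const).sqrt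
  have hg_le (q : ℝ × ℝ) : |g q| ≤ √C := by
    rw [abs_of_nonneg (sqrt_nonneg _)]
    exact sqrt_le_sqrt (min_le_right _ _)
  have hgf : ∀ᵐ q ∂volume.restrict specBox, g q ^ 2 = f q :=
    hf_le.mono fun q hq => by simp only [g, min_eq_left hq, sq_sqrt (hν.f_nonneg q)]
  have hgℂ : AEStronglyMeasurable (fun q => (g q : ℂ)) (volume.restrict specBox) :=
    (Complex.measurable_ofReal.comp hg).aestronglyMeasurable
  have hgℂ_le (q : ℝ × ℝ) : ‖(g q : ℂ)‖ ≤ √C := (Complex.norm_real _).trans_le (hg_le q)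
  obtain ⟨p, hp_mem, hp_le, hp⟩ :=
    exists_seq_mem_mFourierSubalgebra_comp_torusProj_tendsto_ae hg hg_le
  have moment_tendsto (j : ℕ) :
      Tendsto (fun i => limitMoment T (evenNormSq (p i)) j) atTop (nhds (limitMoment T f j)) :=
    tendsto_limitMoment (hT j) (fun i => measurable_evenNormSq (p i))
      (fun i => abs_evenNormSq_le (hp_le i)) (ae_tendsto_evenNormSq hν hgf hp)
  have distance_tendsto := tendsto_integral_norm_sub_sq hgℂ
    (fun i => ((p i).continuous.comp continuous_torusProj).aestronglyMeasurable) hgℂ_le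
    (fun i q => hp_le i (torusProj q)) hp
  have error_tendsto := (((distance_tendsto.add
    (tendsto_one_div_add_atTop_nhds_zero_nat (𝕜 := ℝ))).const_mul 4).sqrt).const_mul (2 * (√s)⁻¹)
  simp only [add_zero, mul_zero, sqrt_zero] at error_tendsto
  refine le_of_tendsto_of_tendsto' ((tendsto_finsetSum _ fun j _ =>
    (moment_tendsto j).const_mul ((-s⁻¹) ^ j)).const_sub _).abs ?_ fun i =>
      abs_integral_div_add_sq_sub_sum_limitMoment_evenNormSq_le hX hν hXμ hT
        (.of_bound hgℂ _ (ae_of_all _ hgℂ_le)) hgf (hp_mem i) i.one_div_pos_of_nat hs k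
  simpa only [add_zero, Function.comp_apply] using
    ((moment_tendsto k).const_mul (s⁻¹ ^ k)).add error_tendsto

end BoundedDensity

section LimitingSpectralDistribution

lemma exists_forall_isOrbitIndex :
    ∃ T : ∀ j : ℕ, Equiv.Perm (Fin (2 * j)) → Fin (2 * j) → Fin (j + 1),
      ∀ j, 1 ≤ j → ∀ p ∈ NCPairings j, IsOrbitIndex (krewPerm j p) (T j p) := by
  have exists_index (j : ℕ) (p : Equiv.Perm (Fin (2 * j))) : ∃ T : Fin (2 * j) → Fin (j + 1),
      1 ≤ j → p ∈ NCPairings j → IsOrbitIndex (krewPerm j p) T := by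
    by_cases h : 1 ≤ j ∧ p ∈ NCPairings j
    · obtain ⟨T, hT⟩ := exists_isOrbitIndex_krewPerm h.1 h.2
      exact ⟨T, fun _ _ => hT⟩
    · exact ⟨fun _ => 0, fun hj hp => absurd ⟨hj, hp⟩ h⟩
  choose T hT using exists_index
  exact ⟨T, fun j hj p hp => hT j p hj hp⟩

variable {Ω : Type*} [MeasurableSpace Ω] {P : Measure Ω} [IsProbabilityMeasure P]
  {X : ℤ → ℤ → Ω → ℝ} {ν νd : Measure (ℝ × ℝ)} {f : ℝ × ℝ → ℝ}
  {μ : Measure ℝ} [IsFiniteMeasure μ] {C : ℝ}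

lemma integrable_and_integral_pow_eq_limitMoment (hX : StatGauss P X)
    (hν : SpectralDecomp P X ν νd f) (hXμ : ESDTendstoInProb P (scaledW X) μ)
    {T : ∀ j : ℕ, Equiv.Perm (Fin (2 * j)) → Fin (2 * j) → Fin (j + 1)}
    (hT : ∀ j, 1 ≤ j → ∀ p ∈ NCPairings j, IsOrbitIndex (krewPerm j p) (T j p))
    (hf_le : ∀ᵐ q ∂volume.restrict specBox, f q ≤ C) (k : ℕ) :
    Integrable (fun x : ℝ => x ^ (2 * k)) μ ∧ ∫ x, x ^ (2 * k) ∂μ = limitMoment T f k :=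
  integrable_and_integral_pow_eq_of_abs_sub_sum_le (fun _ hs =>
    abs_integral_div_add_sq_sub_sum_limitMoment_le hX hν hXμ hT hf_le hs) k

lemma exists_measure_compl_Icc_eq_zero (hX : StatGauss P X) (hν : SpectralDecomp P X ν νd f)
    (hXμ : ESDTendstoInProb P (scaledW X) μ) (hf_le : ∀ᵐ q ∂volume.restrict specBox, f q ≤ C) :
    ∃ K : ℝ, μ (Set.Icc (-K) K)ᶜ = 0 := by
  obtain ⟨T, hT⟩ := exists_forall_isOrbitIndex
  have abs_le : ∀ᵐ q ∂volume.restrict specBox, |f q| ≤ max C 0 :=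
    hf_le.mono fun q hq => (abs_of_nonneg (hν.f_nonneg q)).trans_le (hq.trans (le_max_left _ _))
  refine ⟨_, measure_compl_Icc_eq_zero_of_integral_pow_le (K := 32 * π ^ 2 * max C 0)
    (by positivity) fun k => ?_⟩
  obtain ⟨integrable, moment_eq⟩ :=
    integrable_and_integral_pow_eq_limitMoment hX hν hXμ hT hf_le k
  exact ⟨integrable, moment_eq.trans_le (limitMoment_le (hT k) (le_max_right _ _) abs_le)⟩

lemma integral_pow_eq_sum_integral_Lsig (hX : StatGauss P X) (hν : SpectralDecomp P X ν νd f)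
    (hXμ : ESDTendstoInProb P (scaledW X) μ) (hf_le : ∀ᵐ q ∂volume.restrict specBox, f q ≤ C)
    {m : ℕ} (hm : 1 ≤ m) {T : Equiv.Perm (Fin (2 * m)) → Fin (2 * m) → Fin (m + 1)}
    (hT : ∀ p ∈ NCPairings m, IsOrbitIndex (krewPerm m p) (T p)) :
    ∫ x, x ^ (2 * m) ∂μ = (2 * π) ^ (m - 1) * ∑ p ∈ NCPairings m,
      ∫ x in Set.univ.pi fun _ : Fin (m + 1) => Set.Icc (-π) π,
        Lsig m p (T p) (fun a b => f (a, b)) x := by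
  obtain ⟨T₀, hT₀⟩ := exists_forall_isOrbitIndex
  have hT_update (j : ℕ) (hj : 1 ≤ j) :
      ∀ p ∈ NCPairings j, IsOrbitIndex (krewPerm j p) (Function.update T₀ m T j p) := by
    rcases eq_or_ne j m with rfl | hjm
    · rwa [Function.update_self]
    · rw [Function.update_of_ne hjm]
      exact hT₀ j hj
  rw [(integrable_and_integral_pow_eq_limitMoment hX hν hXμ hT_update hf_le m).2, limitMoment,
    if_neg (Nat.one_le_iff_ne_zero.1 hm), Function.update_self]

end LimitingSpectralDistribution

/-- **Theorem 3, part 2.** If `‖f‖_∞ < ∞`, then `μ_f` is compactly supported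
and `∫ x^{2m} μ_f(dx) = (2π)^{m-1} ∑_{σ ∈ NC₂(2m)} ∫_{[-π,π]^{m+1}} L_{σ,f}`. -/
theorem statement4 {Ω : Type} [MeasurableSpace Ω] (P : Measure Ω)
    [IsProbabilityMeasure P] (X : ℤ → ℤ → Ω → ℝ) (ν νd : Measure (ℝ × ℝ))
    (f : ℝ × ℝ → ℝ) (hX : StatGauss P X) (hν : SpectralDecomp P X ν νd f)
    (μf : Measure ℝ) (hμf : IsProbabilityMeasure μf)
    (hconv : ESDTendstoInProb P (scaledW X) μf)
    (hbdd : ∃ C : ℝ, ∀ᵐ q ∂(volume.restrict specBox), f q ≤ C) :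
    (∃ C : ℝ, μf (Set.Icc (-C) C)ᶜ = 0) ∧
    ∀ m : ℕ, 1 ≤ m →
      ∀ T : Equiv.Perm (Fin (2 * m)) → Fin (2 * m) → Fin (m + 1),
        (∀ p ∈ NCPairings m, IsKrewerasIndex m p (T p)) →
        ∫ x, x ^ (2 * m) ∂μf
          = (2 * π) ^ (m - 1) *
            ∑ p ∈ NCPairings m,
              ∫ x in Set.univ.pi (fun _ : Fin (m + 1) => Set.Icc (-π) π),
                Lsig m p (T p) (fun a b => f (a, b)) x := by
  obtain ⟨C, hf_le⟩ := hbdd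
  exact ⟨exists_measure_compl_Icc_eq_zero hX hν hconv hf_le, fun m hm T hT =>
    integral_pow_eq_sum_integral_Lsig hX hν hconv hf_le hm fun p hp => (hT p hp).isOrbitIndex⟩

end
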